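/- arXiv:math/0604047 — 2 statements merged into one kernel-verified Lean document; each statement's English description precedes it below -/
import Mathlib

section
/- Let X be an infinite compact metric space, let α_1, …, α_d be pairwise commuting homeomorphisms of X, and let μ be a strictly positive Borel probability measure on X that is invariant under the action of α_1, …, α_d. Then there exist: a unital simple AF-algebra C_0 with a unique tracial state τ; a commutative C*-subalgebra C_00 ⊆ C_0 containing the unit of C_0 which is itself an AF-algebra; a unital injective *-homomorphism h : C(X, ℂ) → C_00 with τ(h(f)) = ∫_X f dμ for all f ∈ C(X, ℂ); and, for each j = 1, …, d, a norm-continuous path (u_{j,t})_{t ∈ [1, ∞)} of unitaries in C_0 such that lim_{t→∞} ‖h(f ∘ α_j) − u_{j,t}* h(f) u_{j,t}‖ = 0 for every f ∈ C(X, ℂ). -/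
open scoped ComplexOrder

/-- A bundled unital C*-algebra. -/
structure UnitalCStarAlg where
  carrier : Type
  [normedRing : NormedRing carrier]
  [starRing : StarRing carrier]
  [cstarRing : CStarRing carrier]
  [normedAlgebra : NormedAlgebra ℂ carrier]
  [starModule : StarModule ℂ carrier]
  [completeSpace : CompleteSpace carrier]

attribute [instance] UnitalCStarAlg.normedRing UnitalCStarAlg.starRing
  UnitalCStarAlg.cstarRing UnitalCStarAlg.normedAlgebra UnitalCStarAlg.starModule
  UnitalCStarAlg.completeSpace

/-- A unital C*-algebra is AF if it has an increasing sequence of finite-dimensional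
*-subalgebras (each containing the unit) with dense union. -/
def UnitalCStarAlg.IsAF (B : UnitalCStarAlg) : Prop :=
  ∃ S : ℕ → StarSubalgebra ℂ B.carrier,
    Monotone S ∧ (∀ n, FiniteDimensional ℂ (S n)) ∧ Dense (⋃ n, (S n : Set B.carrier))

/-- A unital C*-algebra is simple if its only closed two-sided ideals are `{0}` and the
whole algebra. -/
def UnitalCStarAlg.IsSimple (B : UnitalCStarAlg) : Prop :=
  ∀ I : TwoSidedIdeal B.carrier, IsClosed (I : Set B.carrier) → I = ⊥ ∨ I = ⊤

/-- A tracial state on a unital C*-algebra. -/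
def UnitalCStarAlg.IsTracialState (B : UnitalCStarAlg) (τ : B.carrier →ₗ[ℂ] ℂ) : Prop :=
  τ 1 = 1 ∧ (∀ a : B.carrier, 0 ≤ τ (star a * a)) ∧
    ∀ a b : B.carrier, τ (a * b) = τ (b * a)

open MeasureTheory Filter

/-!
The system `(X, μ, α)` is modelled on `Ω = [0, 1)`. Finite Borel partitions of `X` of shrinking
mesh are realised by interval partitions of `Ω` in which the intervals coding a piece of `X` have
total length the measure of that piece. The intervals are cut further until their distinct lengths
are rationally independent. Then two finite unions of intervals of equal measure contain the same
number of intervals of each length, so that every measure-preserving identification of codes, in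
particular the one given by each `α i`, is realised by a permutation of `Ω` that translates
intervals.

Step functions and interval translations of one partition generate a finite-dimensional algebra on
`ℓ²(Ω)`, and `C₀` is the closure of the union of these; its trace is the integral of the diagonal.
Averaging over unitaries moves every element of `C₀` arbitrarily close to its trace, first to its
diagonal and then, by translations, to a scalar; hence the trace is unique, and as it is faithful,
`C₀` is simple.

The translations implementing `α i` at two consecutive stages differ by a permutation of finite
order that fixes the functions coded at the earlier stage. Its spectrum is finite, so functional
calculus joins it to `1` by unitaries commuting with these functions, and concatenating the paths
gives `u i`.
-/

namespace AFEmbedding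

/-! ### Positive reals over rationally independent positive reals -/

section RationalIndependence

variable {ι κ : Type*}

theorem linearIndependent_of_mem_span_range {K V : Type*} [DivisionRing K] [AddCommGroup V]
    [Module K V] [Finite ι] {v b : ι → V} (hv : LinearIndependent K v)
    (hb : ∀ i, v i ∈ Submodule.span K (Set.range b)) : LinearIndependent K b := by
  have := Fintype.ofFinite ι
  rw [linearIndependent_iff_card_le_finrank_span] at hv ⊢
  have : FiniteDimensional K (Submodule.span K (Set.range b)) :=
    FiniteDimensional.span_of_finite K (Set.finite_range b)
  exact hv.trans (Submodule.finrank_mono (Submodule.span_le.2 (Set.range_subset_iff.2 hb)))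

theorem exists_pos_nat_mul_eq_natCast [Finite κ] (t : κ → ℚ) (ht : ∀ k, 0 ≤ t k) :
    ∃ N : ℕ, 0 < N ∧ ∀ k, ∃ m : ℕ, (N : ℚ) * t k = m := by
  have := Fintype.ofFinite κ
  lift t to κ → ℚ≥0 using ht
  refine ⟨∏ k, (t k).den, Finset.prod_pos fun k _ => (t k).den_pos, fun k => ?_⟩
  obtain ⟨e, he⟩ := Finset.dvd_prod_of_mem (fun k => (t k).den) (Finset.mem_univ k)
  refine ⟨e * (t k).num, ?_⟩
  have hden : ((t k).den : ℚ≥0) * t k = (t k).num := NNRat.den_mul_eq_num _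
  rw [he]
  have hmul : (((t k).den * e : ℕ) : ℚ≥0) * t k = (e * (t k).num : ℕ) := by
    push_cast
    rw [← hden]
    ring
  beta_reduce
  exact_mod_cast congrArg ((↑) : ℚ≥0 → ℚ) hmul

theorem exists_pos_rat_perturbation [Finite κ] {p s : κ → ℝ} (hp : ∀ k, 0 < p k) :
    ∃ η : ℚ, 0 < η ∧ ∀ k, 0 < p k + η * s k := by
  have hev : ∀ᶠ η : ℝ in nhds 0, ∀ k, 0 < p k + η * s k :=
    eventually_all.2 fun k =>
      (show Continuous fun η : ℝ => p k + η * s k by fun_prop).continuousAt.eventually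
        (lt_mem_nhds (by simpa using hp k))
  obtain ⟨ε, hε, hball⟩ := Metric.eventually_nhds_iff.1 hev
  obtain ⟨η, hη, hηε⟩ := exists_rat_btwn hε
  exact ⟨η, by exact_mod_cast hη, hball (by rwa [Real.dist_0_eq_abs, abs_of_pos hη])⟩

variable [Fintype ι] {v : ι → ℝ}

theorem exists_rat_approx [Nonempty ι] [Finite κ] (hv : ∀ i, 0 < v i) {q : κ → ι → ℚ}
    {c : κ → ℝ} {η : ℝ} (hη : 0 < η) (hq : ∀ k, 0 < (∑ i, (q k i : ℝ) * v i) + c k) :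
    ∃ r : ι → ℚ, (∀ k, 0 < (∑ i, (q k i : ℝ) * r i) + c k) ∧ 0 < η + ∑ i, (r i : ℝ) ∧
      ∀ i, (∑ j, v j) / (η + ∑ j, (r j : ℝ)) * r i < v i := by
  have hsum : 0 < ∑ i, v i := Finset.sum_pos (fun i _ => hv i) Finset.univ_nonempty
  have hden : 0 < η + ∑ i, v i := by positivity
  have hratio (i : ι) : (∑ j, v j) / (η + ∑ j, v j) * v i < v i :=
    mul_lt_of_lt_one_left (hv i) ((div_lt_one hden).2 (by linarith))
  have hcont : Continuous fun r : ι → ℝ => η + ∑ i, r i := by fun_prop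
  have hev : ∀ᶠ r : ι → ℝ in nhds v, (∀ k, 0 < (∑ i, (q k i : ℝ) * r i) + c k) ∧
      0 < η + ∑ i, r i ∧ ∀ i, (∑ j, v j) / (η + ∑ j, r j) * r i < v i := by
    refine .and (eventually_all.2 fun k => ?_) (.and ?_ (eventually_all.2 fun i => ?_))
    · have hcont : Continuous fun r : ι → ℝ => (∑ i, (q k i : ℝ) * r i) + c k := by fun_prop
      exact hcont.continuousAt.eventually (lt_mem_nhds (hq k))
    · exact hcont.continuousAt.eventually (lt_mem_nhds hden)
    · exact ((continuousAt_const.div hcont.continuousAt hden.ne').mul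
        (continuous_apply i).continuousAt).eventually (gt_mem_nhds (hratio i))
  have hdense : DenseRange fun (r : ι → ℚ) i => (r i : ℝ) :=
    DenseRange.piMap fun _ => Rat.denseRange_cast
  obtain ⟨_, ⟨r, rfl⟩, hr⟩ := hdense.inter_nhds_nonempty hev
  exact ⟨r, hr⟩

/- The new basis `b` solves `v i = η * b i + (∑ j, b j) * r i` with `r` rational close to `v` and
`η` small, so that its positive cone is a narrow neighbourhood of the ray through `v`. -/
theorem exists_linearIndependent_pos_coeff [Finite κ] (hv : ∀ i, 0 < v i)
    (hli : LinearIndependent ℚ v) (q : κ → ι → ℚ) (hq : ∀ k, 0 < ∑ i, (q k i : ℝ) * v i) :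
    ∃ b : ι → ℝ, (∀ i, 0 < b i) ∧ LinearIndependent ℚ b ∧ ∃ t : κ → ι → ℚ,
      (∀ k i, 0 < t k i) ∧ ∀ k, ∑ i, (q k i : ℝ) * v i = ∑ i, (t k i : ℝ) * b i := by
  rcases isEmpty_or_nonempty ι with hι | hι
  · exact ⟨v, hv, hli, q, fun k i => isEmptyElim i, fun k => rfl⟩
  obtain ⟨η, hη, hηq⟩ := exists_pos_rat_perturbation (κ := κ × ι)
    (s := fun kj => (q kj.1 kj.2 : ℝ)) fun kj => hq kj.1
  have hη' : (0 : ℝ) < η := by exact_mod_cast hη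
  obtain ⟨r, hrq, hr, hrv⟩ := exists_rat_approx hv (q := fun kj : κ × ι => q kj.1)
    (c := fun kj => η * q kj.1 kj.2) hη' hηq
  set C : ℝ := (∑ i, v i) / (η + ∑ i, (r i : ℝ)) with hC
  set b : ι → ℝ := fun i => (v i - C * r i) / η with hb
  have hbsum : ∑ i, b i = C := by
    simp only [hb, ← Finset.sum_div, Finset.sum_sub_distrib, ← Finset.mul_sum]
    rw [hC]
    field_simp
    ring
  have hvb (i : ι) : v i = η * b i + (∑ j, b j) * r i := by
    rw [hbsum, hb]
    field_simp
    ring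
  have hbspan (j : ι) : b j ∈ Submodule.span ℚ (Set.range b) := Submodule.subset_span ⟨j, rfl⟩
  refine ⟨b, fun i => div_pos (sub_pos.2 (hrv i)) hη',
    linearIndependent_of_mem_span_range hli fun i => ?_,
    fun k j => (∑ i, q k i * r i) + η * q k j, fun k j => ?_, fun k => ?_⟩
  · rw [hvb i, mul_comm _ (r i : ℝ), ← Rat.smul_def, ← Rat.smul_def]
    exact add_mem (Submodule.smul_mem _ _ (hbspan i))
      (Submodule.smul_mem _ _ (sum_mem fun j _ => hbspan j))
  · exact_mod_cast hrq (k, j)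
  · push_cast
    simp_rw [add_mul, Finset.sum_add_distrib, ← Finset.mul_sum, Finset.sum_mul,
      ← Finset.sum_add_distrib]
    refine Finset.sum_congr rfl fun i _ => ?_
    conv_lhs => rw [hvb i]
    ring

theorem exists_linearIndependent_nat_coeff [Finite κ] (hv : ∀ i, 0 < v i)
    (hli : LinearIndependent ℚ v) (q : κ → ι → ℚ) (hq : ∀ k, 0 < ∑ i, (q k i : ℝ) * v i) :
    ∃ b : ι → ℝ, (∀ i, 0 < b i) ∧ LinearIndependent ℚ b ∧ ∃ m : κ → ι → ℕ,
      ∀ k, ∑ i, (q k i : ℝ) * v i = ∑ i, m k i • b i := by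
  obtain ⟨b, hb, hbli, t, ht, hqt⟩ := exists_linearIndependent_pos_coeff hv hli q hq
  obtain ⟨N, hN, hNt⟩ := exists_pos_nat_mul_eq_natCast (fun ki : κ × ι => t ki.1 ki.2)
    fun ki => (ht ki.1 ki.2).le
  choose m hm using hNt
  refine ⟨fun i => (N : ℚ)⁻¹ • b i, fun i => ?_,
    hbli.units_smul fun _ => Units.mk0 (N : ℚ)⁻¹ (by positivity), fun k i => m (k, i), fun k => ?_⟩
  · have := hb i
    simp only [Rat.smul_def]
    positivity
  · rw [hqt]
    refine Finset.sum_congr rfl fun i _ => ?_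
    have hmr : (N : ℝ) * t k i = m (k, i) := by exact_mod_cast hm (k, i)
    simp only [nsmul_eq_mul, ← hmr, Rat.smul_def]
    push_cast
    field_simp

end RationalIndependence

theorem exists_linearIndepOn_subset_closure (G : Finset ℝ) (hG : ∀ g ∈ G, 0 < g) :
    ∃ B : Set ℝ, (∀ b ∈ B, 0 < b) ∧ LinearIndepOn ℚ id B ∧
      ∀ g ∈ G, g ∈ AddSubmonoid.closure B := by
  obtain ⟨v, hvG, hspan, hli⟩ := exists_linearIndependent ℚ (G : Set ℝ)
  have := (G.finite_toSet.subset hvG).fintype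
  have hcoeff (g : G) : ∃ q : v → ℚ, ∑ i, (q i : ℝ) * (i : ℝ) = g := by
    simp_rw [← Rat.smul_def]
    rw [← Submodule.mem_span_range_iff_exists_fun, Subtype.range_coe, hspan]
    exact Submodule.subset_span g.2
  choose q hq using hcoeff
  obtain ⟨b, hb, hbli, m, hm⟩ := exists_linearIndependent_nat_coeff (v := ((↑) : v → ℝ))
    (fun i => hG _ (hvG i.2)) hli q fun g => by rw [hq]; exact hG _ g.2
  refine ⟨Set.range b, Set.forall_mem_range.2 hb, hbli.linearIndepOn_id, fun g hg => ?_⟩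
  rw [← show _ = g from hq ⟨g, hg⟩, hm]
  exact sum_mem fun i _ => nsmul_mem (AddSubmonoid.subset_closure (Set.mem_range_self i)) _

/-! ### Interval partitions -/

/-- The half-open unit interval, on which every C⋆-algebra below acts through `ℓ²(Ω)`. -/
abbrev Ω : Type := Set.Ico (0 : ℝ) 1

noncomputable instance : MeasureSpace Ω := Measure.Subtype.measureSpace

instance : IsProbabilityMeasure (volume : Measure Ω) :=
  ⟨by simp [Measure.Subtype.volume_univ nullMeasurableSet_Ico]⟩

/-- A partition of `Ω` into finitely many half-open intervals, its atoms, encoded by the set of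
their endpoints. -/
structure IntervalPartition where
  endpoints : Finset ℝ
  zero_mem : 0 ∈ endpoints
  one_mem : 1 ∈ endpoints
  subset_Icc : ↑endpoints ⊆ Set.Icc (0 : ℝ) 1

namespace IntervalPartition

variable {P Q : IntervalPartition} {x y z : Ω} {e : ℝ}

theorem exists_isGreatest (P : IntervalPartition) (x : Ω) :
    ∃ a : Ω, IsGreatest {e | e ∈ P.endpoints ∧ e ≤ x} a := by
  have hfin : {e | e ∈ P.endpoints ∧ e ≤ x}.Finite := P.endpoints.finite_toSet.subset fun _ h => h.1
  obtain ⟨a, ha⟩ := hfin.exists_maximal ⟨0, P.zero_mem, x.2.1⟩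
  exact ⟨⟨a, (P.subset_Icc ha.1.1).1, ha.1.2.trans_lt x.2.2⟩, ha.1, fun e he =>
    le_of_not_gt fun hlt => hlt.not_ge (ha.2 he hlt.le)⟩

/-- The left endpoint of the atom of `P` containing a given point. -/
noncomputable def left (P : IntervalPartition) (x : Ω) : Ω :=
  (P.exists_isGreatest x).choose

/-- The right endpoint of the atom of `P` containing a given point. -/
noncomputable def right (P : IntervalPartition) (x : Ω) : ℝ :=
  {e ∈ P.endpoints | (x : ℝ) < e}.min' ⟨1, by simp [P.one_mem, x.2.2]⟩

/-- The length of the atom of `P` containing a given point. -/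
noncomputable def length (P : IntervalPartition) (x : Ω) : ℝ := P.right x - P.left x

/-- The distance of a point to the left endpoint of its atom. -/
noncomputable def offset (P : IntervalPartition) (x : Ω) : ℝ := x - P.left x

theorem left_mem (P : IntervalPartition) (x : Ω) : (P.left x : ℝ) ∈ P.endpoints :=
  (P.exists_isGreatest x).choose_spec.1.1

theorem left_le (P : IntervalPartition) (x : Ω) : P.left x ≤ x :=
  (P.exists_isGreatest x).choose_spec.1.2

theorem le_left (he : e ∈ P.endpoints) (hx : e ≤ x) : e ≤ P.left x :=
  (P.exists_isGreatest x).choose_spec.2 ⟨he, hx⟩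

theorem right_mem (P : IntervalPartition) (x : Ω) : P.right x ∈ P.endpoints :=
  (Finset.mem_filter.1 (Finset.min'_mem _ _)).1

theorem lt_right (P : IntervalPartition) (x : Ω) : (x : ℝ) < P.right x :=
  (Finset.mem_filter.1 (Finset.min'_mem _ _)).2

theorem right_le (he : e ∈ P.endpoints) (hx : (x : ℝ) < e) : P.right x ≤ e :=
  Finset.min'_le _ _ (by simp [he, hx])

theorem right_le_one (P : IntervalPartition) (x : Ω) : P.right x ≤ 1 := right_le P.one_mem x.2.2

theorem left_eq_left (hy : ∀ e ∈ P.endpoints, e ≤ x ↔ e ≤ y) : P.left x = P.left y :=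
  Subtype.ext <| (le_left (P.left_mem x) ((hy _ (P.left_mem x)).1 (P.left_le x))).antisymm
    (le_left (P.left_mem y) ((hy _ (P.left_mem y)).2 (P.left_le y)))

theorem le_iff_le (hxy : P.left x = P.left y) (he : e ∈ P.endpoints) : e ≤ x ↔ e ≤ y :=
  ⟨fun h => (le_left he h).trans (hxy ▸ P.left_le y),
    fun h => (le_left he h).trans (hxy ▸ P.left_le x)⟩

theorem left_eq_left_of_mem_Ico (hy : (y : ℝ) ∈ Set.Ico (P.left x : ℝ) (P.right x)) :
    P.left y = P.left x :=
  left_eq_left fun _ he => ⟨fun h => le_of_not_gt fun hx => ((right_le he hx).trans h).not_gt hy.2,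
    fun h => (le_left he h).trans hy.1⟩

theorem right_eq_right (hxy : P.left x = P.left y) : P.right x = P.right y := by
  have hlt {e : ℝ} (he : e ∈ P.endpoints) : (x : ℝ) < e ↔ (y : ℝ) < e := by
    simpa using (le_iff_le hxy he).not
  exact (right_le (P.right_mem y) ((hlt (P.right_mem y)).2 (P.lt_right y))).antisymm
    (right_le (P.right_mem x) ((hlt (P.right_mem x)).1 (P.lt_right x)))

theorem mem_Ico_of_left_eq (hxy : P.left x = P.left y) :
    (x : ℝ) ∈ Set.Ico (P.left y : ℝ) (P.right y) :=
  ⟨hxy ▸ P.left_le x, right_eq_right hxy ▸ P.lt_right x⟩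

@[simp]
theorem left_left (P : IntervalPartition) (x : Ω) : P.left (P.left x) = P.left x :=
  left_eq_left_of_mem_Ico ⟨le_rfl, lt_of_le_of_lt (P.left_le x) (P.lt_right x)⟩

theorem left_eq_self_iff : P.left x = x ↔ (x : ℝ) ∈ P.endpoints :=
  ⟨fun h => h ▸ P.left_mem x, fun h => (P.left_le x).antisymm (le_left h le_rfl)⟩

theorem length_eq_length (hxy : P.left x = P.left y) : P.length x = P.length y := by
  rw [length, length, right_eq_right hxy, hxy]

@[simp]
theorem length_left (P : IntervalPartition) (x : Ω) : P.length (P.left x) = P.length x :=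
  length_eq_length (P.left_left x)

theorem offset_nonneg (P : IntervalPartition) (x : Ω) : 0 ≤ P.offset x :=
  sub_nonneg.2 (P.left_le x)

theorem offset_lt_length (P : IntervalPartition) (x : Ω) : P.offset x < P.length x :=
  sub_lt_sub_right (P.lt_right x) _

theorem length_pos (P : IntervalPartition) (x : Ω) : 0 < P.length x :=
  (P.offset_nonneg x).trans_lt (P.offset_lt_length x)

theorem offset_eq_zero_iff : P.offset x = 0 ↔ (x : ℝ) ∈ P.endpoints := by
  rw [offset, sub_eq_zero, ← left_eq_self_iff, eq_comm, Subtype.ext_iff]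

theorem exists_left_eq_offset_eq (a : Ω) {t : ℝ} (ht : 0 ≤ t) (hta : t < P.length a) :
    ∃ y : Ω, (y : ℝ) = P.left a + t ∧ P.left y = P.left a ∧ P.offset y = t := by
  have hlt : P.left a + t < P.right a := by
    rw [length] at hta
    linarith
  have hleft := left_eq_left_of_mem_Ico (x := a) (y := ⟨P.left a + t, add_nonneg (P.left a).2.1 ht,
    hlt.trans_le (P.right_le_one a)⟩) ⟨by simpa using ht, hlt⟩
  exact ⟨_, rfl, hleft, by rw [offset, hleft]; ring⟩

/-- Two points are congruent if they occupy the same position in atoms of the same length. -/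
def Congruent (P : IntervalPartition) (x y : Ω) : Prop :=
  P.offset x = P.offset y ∧ P.length x = P.length y

theorem Congruent.symm (h : P.Congruent x y) : P.Congruent y x := ⟨h.1.symm, h.2.symm⟩

theorem Congruent.trans (h : P.Congruent x y) (h' : P.Congruent y z) : P.Congruent x z :=
  ⟨h.1.trans h'.1, h.2.trans h'.2⟩

theorem Congruent.mem_iff (h : P.Congruent x y) :
    (x : ℝ) ∈ P.endpoints ↔ (y : ℝ) ∈ P.endpoints := by
  rw [← offset_eq_zero_iff, h.1, offset_eq_zero_iff]

theorem Congruent.eq_of_left_eq (h : P.Congruent x y) (hxy : P.left x = P.left y) : x = y := by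
  have := h.1
  rw [offset, offset, hxy] at this
  exact Subtype.ext (sub_left_injective this)

theorem Congruent.exists_translate (h : P.Congruent x y) (hz : P.left z = P.left x) :
    ∃ w : Ω, (w : ℝ) = z + (y - x) ∧ P.left w = P.left y ∧ P.Congruent z w := by
  have hlen : P.length z = P.length y := (length_eq_length hz).trans h.2
  obtain ⟨w, hw, hleft, hoff⟩ :=
    exists_left_eq_offset_eq y (P.offset_nonneg z) (hlen ▸ P.offset_lt_length z)
  refine ⟨w, ?_, hleft, hoff.symm, hlen.trans (length_eq_length hleft).symm⟩
  have := h.1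
  simp only [offset, hz] at hw this
  linarith

/-- `P ≤ Q` if `Q` refines `P` and subdivides atoms of `P` of equal length in the same way. -/
instance : LE IntervalPartition where
  le P Q := P.endpoints ⊆ Q.endpoints ∧
    ∀ x y : Ω, P.Congruent x y → ((x : ℝ) ∈ Q.endpoints ↔ (y : ℝ) ∈ Q.endpoints)

theorem left_left_of_le (h : P ≤ Q) (x : Ω) : P.left (Q.left x) = P.left x :=
  left_eq_left fun _ he => ⟨fun hle => hle.trans (Q.left_le x), fun hle => le_left (h.1 he) hle⟩

theorem Congruent.offset_le (h : P ≤ Q) (hxy : P.Congruent x y) : Q.offset y ≤ Q.offset x := by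
  obtain ⟨w, hw, -, hcong⟩ := hxy.exists_translate (left_left_of_le h x)
  have := le_left (P := Q) (x := y) ((h.2 _ _ hcong).1 (Q.left_mem x))
    (by linarith [show (Q.left x : ℝ) ≤ x from Q.left_le x])
  simp only [offset]
  linarith

theorem Congruent.right_sub_le (h : P ≤ Q) (hxy : P.Congruent x y) :
    Q.right y - y ≤ Q.right x - x := by
  suffices hmem : Q.right x + (y - x) ∈ Q.endpoints by
    linarith [right_le (x := y) hmem (by linarith [Q.lt_right x])]
  rcases (right_le (h.1 (P.right_mem x)) (P.lt_right x)).lt_or_eq with hlt | heq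
  · obtain ⟨w, hw, -, hcong⟩ := hxy.exists_translate (z := ⟨Q.right x,
        x.2.1.trans (Q.lt_right x).le, hlt.trans_le (P.right_le_one x)⟩)
      (left_eq_left_of_mem_Ico ⟨(P.left_le x).trans (Q.lt_right x).le, hlt⟩)
    exact hw ▸ (h.2 _ _ hcong).1 (Q.right_mem x)
  · have heq' : Q.right x + (y - x) = P.right y := by
      obtain ⟨hoff, hlen⟩ := hxy
      simp only [offset, length] at hoff hlen
      linarith
    exact heq' ▸ h.1 (P.right_mem y)

theorem Congruent.mono (h : P ≤ Q) (hxy : P.Congruent x y) : Q.Congruent x y := by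
  have hoff := (hxy.symm.offset_le h).antisymm (hxy.offset_le h)
  refine ⟨hoff, ?_⟩
  have := (hxy.symm.right_sub_le h).antisymm (hxy.right_sub_le h)
  simp only [offset, length] at hoff ⊢
  linarith

instance : Preorder IntervalPartition where
  le_refl _ := ⟨subset_rfl, fun _ _ h => h.mem_iff⟩
  le_trans _ _ _ h h' := ⟨h.1.trans h'.1, fun _ _ hxy => h'.2 _ _ (hxy.mono h)⟩

/-- The partition of `Ω` cut at the points of a finite set. -/
noncomputable def ofFinite {s : Set Ω} (hs : s.Finite) (h₀ : ⟨0, by simp⟩ ∈ s) :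
    IntervalPartition where
  endpoints := insert 1 (hs.toFinset.image (↑))
  zero_mem := by simpa using h₀
  one_mem := by simp
  subset_Icc := by
    intro e he
    obtain rfl | ⟨x, -, rfl⟩ : e = 1 ∨ ∃ x ∈ s, (x : ℝ) = e := by simpa using he
    · simp
    · exact ⟨x.2.1, x.2.2.le⟩

theorem coe_mem_ofFinite {s : Set Ω} (hs : s.Finite) (h₀ : ⟨0, by simp⟩ ∈ s) :
    (x : ℝ) ∈ (ofFinite hs h₀).endpoints ↔ x ∈ s := by
  have h₁ : (x : ℝ) ≠ 1 := x.2.2.ne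
  simp [ofFinite, h₁, x.2.1, x.2.2]

theorem finite_range_left (P : IntervalPartition) : (Set.range P.left).Finite :=
  .of_finite_image (P.endpoints.finite_toSet.subset
    (by rintro _ ⟨_, ⟨x, rfl⟩, rfl⟩; exact P.left_mem x)) Subtype.val_injective.injOn

theorem finite_range_length (P : IntervalPartition) : (Set.range P.length).Finite :=
  (P.finite_range_left.image P.length).subset
    (by rintro _ ⟨x, rfl⟩; exact ⟨_, ⟨x, rfl⟩, P.length_left x⟩)

theorem finite_offset_mem (P : IntervalPartition) {c : ℝ → Set ℝ}
    (hc : ∀ x, (c (P.length x)).Finite) : {x : Ω | P.offset x ∈ c (P.length x)}.Finite := by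
  refine .of_finite_image ((P.finite_range_left.biUnion fun a _ =>
    (hc a).image fun t => (a : ℝ) + t).subset ?_) Subtype.val_injective.injOn
  rintro _ ⟨x, hx, rfl⟩
  exact Set.mem_biUnion ⟨x, rfl⟩ ⟨P.offset x, by simpa using hx, by simp [offset]⟩

theorem exists_le_subdivide (P : IntervalPartition) {c : ℝ → Set ℝ}
    (hc : ∀ x, (c (P.length x)).Finite) (hc₀ : ∀ x, 0 ∈ c (P.length x)) :
    ∃ Q, P ≤ Q ∧ ∀ x : Ω, (x : ℝ) ∈ Q.endpoints ↔ P.offset x ∈ c (P.length x) := by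
  have hmem {x : Ω} (hx : (x : ℝ) ∈ P.endpoints) : P.offset x ∈ c (P.length x) :=
    offset_eq_zero_iff.2 hx ▸ hc₀ x
  have hQ (x : Ω) := coe_mem_ofFinite (x := x) (P.finite_offset_mem hc) (hmem P.zero_mem)
  refine ⟨_, ⟨fun e he => ?_, fun x y hxy => ?_⟩, hQ⟩
  · rcases (P.subset_Icc he).2.lt_or_eq with hlt | rfl
    · exact (hQ ⟨e, (P.subset_Icc he).1, hlt⟩).2 (hmem he)
    · exact one_mem _
  · rw [hQ, hQ, Set.mem_ofPred_eq, Set.mem_ofPred_eq, hxy.1, hxy.2]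

theorem exists_le_mem (P : IntervalPartition) (x : Ω) : ∃ Q, P ≤ Q ∧ (x : ℝ) ∈ Q.endpoints := by
  obtain ⟨Q, hPQ, hQ⟩ := P.exists_le_subdivide (c := fun _ => {0, P.offset x}) (by simp) (by simp)
  exact ⟨Q, hPQ, (hQ x).2 (by simp)⟩

/-- A partition is independent if the lengths of its atoms, counted without multiplicity, are
linearly independent over `ℚ`. -/
def IsIndependent (P : IntervalPartition) : Prop := LinearIndepOn ℚ id (Set.range P.length)

end IntervalPartition

/-- A finite set of positions cutting `[0, ℓ)` into intervals whose lengths lie in `B`. -/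
structure IsSubdivision (B : Set ℝ) (ℓ : ℝ) (c : Set ℝ) : Prop where
  finite : c.Finite
  isLeast : IsLeast c 0
  isGreatest : IsGreatest c ℓ
  exists_next : ∀ t ∈ c, t < ℓ → ∃ b ∈ B, t + b ∈ c ∧ ∀ s ∈ c, t < s → t + b ≤ s

theorem IsSubdivision.insert_zero {B c : Set ℝ} {b ℓ : ℝ} (hc : IsSubdivision B ℓ c) (hb : b ∈ B)
    (hb₀ : 0 < b) : IsSubdivision B (b + ℓ) (insert 0 ((b + ·) '' c)) where
  finite := (hc.finite.image _).insert 0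
  isLeast := ⟨by simp, by
    rintro _ (rfl | ⟨s, hs, rfl⟩)
    · rfl
    · exact add_nonneg hb₀.le (hc.isLeast.2 hs)⟩
  isGreatest := ⟨.inr ⟨ℓ, hc.isGreatest.1, rfl⟩, by
    rintro _ (rfl | ⟨s, hs, rfl⟩)
    · exact add_nonneg hb₀.le (hc.isGreatest.2 hc.isLeast.1)
    · exact add_le_add_right (hc.isGreatest.2 hs) b⟩
  exists_next := by
    rintro _ (rfl | ⟨t, ht, rfl⟩) hlt
    · refine ⟨b, hb, .inr ⟨0, hc.isLeast.1, by simp⟩, ?_⟩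
      rintro _ (rfl | ⟨s, hs, rfl⟩) h
      · exact absurd h (lt_irrefl _)
      · simpa using hc.isLeast.2 hs
    · obtain ⟨b', hb', hmem, hnext⟩ := hc.exists_next t ht (lt_of_add_lt_add_left hlt)
      refine ⟨b', hb', .inr ⟨t + b', hmem, by ring⟩, ?_⟩
      rintro _ (rfl | ⟨s, hs, rfl⟩) h
      · linarith [hc.isLeast.2 ht]
      · linarith [hnext s hs (lt_of_add_lt_add_left h)]

theorem exists_isSubdivision {B : Set ℝ} (hB : ∀ b ∈ B, 0 < b) {ℓ : ℝ}
    (hℓ : ℓ ∈ AddSubmonoid.closure B) : ∃ c, IsSubdivision B ℓ c := by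
  induction hℓ using AddSubmonoid.closure_induction_left with
  | zero => exact ⟨{0}, Set.finite_singleton 0, isLeast_singleton, isGreatest_singleton,
      fun t ht hlt => absurd ht hlt.ne⟩
  | add_left b hb ℓ _ ih => exact ih.imp' _ fun c hc => hc.insert_zero hb (hB b hb)

namespace IntervalPartition

theorem length_mem_of_isSubdivision {P Q : IntervalPartition} {B : Set ℝ} (hB : ∀ b ∈ B, 0 < b)
    {c : ℝ → Set ℝ} (hc : ∀ x, IsSubdivision B (P.length x) (c (P.length x))) (hPQ : P ≤ Q)
    (hQ : ∀ x : Ω, (x : ℝ) ∈ Q.endpoints ↔ P.offset x ∈ c (P.length x)) (x : Ω) :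
    Q.length x ∈ B := by
  rw [← Q.length_left]
  set u := Q.left x
  obtain ⟨b, hb, hmem, hnext⟩ := (hc u).exists_next _ ((hQ u).1 (Q.left_mem x))
    (P.offset_lt_length u)
  have hub : u + b ≤ P.right u := by
    have := (hc u).isGreatest.2 hmem
    simp only [offset, length] at this
    linarith
  have hmemQ {e : ℝ} (hue : u ≤ e) (heu : e < P.right u) :
      e ∈ Q.endpoints ↔ P.offset u + (e - u) ∈ c (P.length u) := by
    let w : Ω := ⟨e, u.2.1.trans hue, heu.trans_le (P.right_le_one u)⟩
    have hleft : P.left w = P.left u :=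
      left_eq_left_of_mem_Ico ⟨le_trans (P.left_le u) hue, heu⟩
    rw [show e = w from rfl, hQ, length_eq_length hleft, offset, offset, hleft]
    ring_nf
  have hright_le : Q.right u ≤ u + b := by
    refine right_le ?_ (by linarith [hB b hb])
    rcases hub.lt_or_eq with hlt | heq
    · exact (hmemQ (by linarith [hB b hb]) hlt).2 (by simpa using hmem)
    · exact heq ▸ hPQ.1 (P.right_mem u)
  have hle_right : u + b ≤ Q.right u := by
    rcases lt_or_ge (Q.right u) (P.right u) with hlt | hge
    · have := hnext _ ((hmemQ (Q.lt_right u).le hlt).1 (Q.right_mem u))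
        (by linarith [Q.lt_right u])
      linarith
    · exact hub.trans hge
  rwa [length, hright_le.antisymm hle_right, left_eq_self_iff.2 (Q.left_mem x),
    add_sub_cancel_left]

theorem exists_le_isIndependent (P : IntervalPartition) : ∃ Q, P ≤ Q ∧ Q.IsIndependent := by
  obtain ⟨B, hB, hli, hPB⟩ := exists_linearIndepOn_subset_closure P.finite_range_length.toFinset
    fun _ hg => by
      obtain ⟨x, rfl⟩ := P.finite_range_length.mem_toFinset.1 hg
      exact P.length_pos x
  choose! c hc using fun ℓ (hℓ : ℓ ∈ Set.range P.length) =>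
    exists_isSubdivision hB (hPB ℓ (by simpa using hℓ))
  have hc' (x : Ω) := hc _ (Set.mem_range_self x)
  obtain ⟨Q, hPQ, hQ⟩ := P.exists_le_subdivide (fun x => (hc' x).finite) fun x => (hc' x).isLeast.1
  exact ⟨Q, hPQ, hli.mono (Set.range_subset_iff.2 (length_mem_of_isSubdivision hB hc' hPQ hQ))⟩

theorem exists_monotone_isIndependent {s : Set Ω} (hs : s.Countable) :
    ∃ P : ℕ → IntervalPartition, Monotone P ∧ (∀ n, (P n).IsIndependent) ∧
      ∀ x ∈ s, ∃ n, (x : ℝ) ∈ (P n).endpoints := by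
  have hnext (P : IntervalPartition) (x : Ω) :
      ∃ Q, P ≤ Q ∧ Q.IsIndependent ∧ (x : ℝ) ∈ Q.endpoints := by
    obtain ⟨R, hPR, hR⟩ := P.exists_le_mem x
    obtain ⟨Q, hRQ, hQ⟩ := R.exists_le_isIndependent
    exact ⟨Q, hPR.trans hRQ, hQ, hRQ.1 hR⟩
  choose next le_next hindep hmem using hnext
  obtain ⟨q, hq⟩ := Set.countable_iff_exists_subset_range.1 hs
  let P : ℕ → IntervalPartition :=
    Nat.rec (ofFinite (Set.finite_singleton _) rfl) fun n R => next R (q n)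
  refine ⟨fun n => P (n + 1), monotone_nat_of_le_succ fun n => le_next _ _,
    fun n => hindep _ _, fun x hx => ?_⟩
  obtain ⟨n, rfl⟩ := hq hx
  exact ⟨n, hmem _ _⟩

end IntervalPartition

namespace IntervalPartition

variable {P Q : IntervalPartition} {x y : Ω}

/-! ### Step functions -/

/-- The atoms of a partition, represented by their left endpoints. -/
abbrev Atom (P : IntervalPartition) : Type := Set.range P.left

noncomputable instance (P : IntervalPartition) : Fintype P.Atom := P.finite_range_left.fintype

/-- The atom containing a given point. -/
noncomputable def atom (P : IntervalPartition) (x : Ω) : P.Atom := ⟨P.left x, x, rfl⟩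

theorem left_atom (a : P.Atom) : P.left a = a := by
  obtain ⟨_, x, rfl⟩ := a
  exact P.left_left x

@[simp]
theorem atom_coe (a : P.Atom) : P.atom a = a := Subtype.ext (left_atom a)

theorem atom_eq_atom_iff : P.atom x = P.atom y ↔ P.left x = P.left y := Subtype.ext_iff

theorem atom_preimage_singleton (a : P.Atom) :
    P.atom ⁻¹' {a} = Subtype.val ⁻¹' Set.Ico (a : ℝ) (P.right a) := by
  ext x
  rw [Set.mem_preimage, Set.mem_singleton_iff, ← atom_coe a, atom_eq_atom_iff, atom_coe]
  exact ⟨fun hx => by simpa only [left_atom, Set.mem_preimage] using mem_Ico_of_left_eq hx,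
    fun hx => left_eq_left_of_mem_Ico (by rwa [left_atom])⟩

theorem measurable_atom (P : IntervalPartition) : Measurable P.atom :=
  measurable_to_countable' fun a =>
    atom_preimage_singleton a ▸ measurable_subtype_coe measurableSet_Ico

theorem volume_real_atom_preimage_singleton (a : P.Atom) :
    volume.real (P.atom ⁻¹' {a}) = P.length a := by
  have hsub : Set.Ico (a : ℝ) (P.right a) ⊆ Set.Ico 0 1 :=
    Set.Ico_subset_Ico a.1.2.1 (P.right_le_one a)
  rw [atom_preimage_singleton, measureReal_def,
    volume_preimage_coe nullMeasurableSet_Ico measurableSet_Ico, Set.inter_eq_left.2 hsub,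
    Real.volume_Ico, ENNReal.toReal_ofReal (sub_nonneg.2 (P.lt_right a).le), length, left_atom]

/-- A function is a step function for `P` if it is constant on the atoms of `P`. -/
def IsStep {β : Type*} (P : IntervalPartition) (g : Ω → β) : Prop := ∀ x, g (P.left x) = g x

namespace IsStep

variable {β : Type*} {g : Ω → β}

theorem mono (h : P ≤ Q) (hg : P.IsStep g) : Q.IsStep g := fun x => by
  rw [← hg (Q.left x), left_left_of_le h, hg]

theorem measurable [MeasurableSpace β] (hg : P.IsStep g) : Measurable g := by
  rw [show g = (fun a : P.Atom => g a) ∘ P.atom from funext fun x => (hg x).symm]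
  exact (measurable_of_finite _).comp P.measurable_atom

theorem integral_eq_sum {F : Type*} [NormedAddCommGroup F] [NormedSpace ℝ F] [CompleteSpace F]
    {g : Ω → F} (hg : P.IsStep g) : ∫ x, g x = ∑ a : P.Atom, P.length a • g a := by
  have : IsProbabilityMeasure (volume.map P.atom) :=
    Measure.isProbabilityMeasure_map P.measurable_atom.aemeasurable
  calc ∫ x, g x = ∫ x, g (P.atom x) := integral_congr_ae (.of_forall fun x => (hg x).symm)
    _ = ∫ a, g a ∂volume.map P.atom :=
      (integral_map (f := fun a : P.Atom => g a) P.measurable_atom.aemeasurable .of_discrete).symm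
    _ = ∑ a : P.Atom, (volume.map P.atom).real {a} • g a := integral_fintype .of_finite
    _ = ∑ a : P.Atom, P.length a • g a := by
      simp_rw [map_measureReal_apply P.measurable_atom (measurableSet_singleton _),
        volume_real_atom_preimage_singleton]

open Classical in
theorem volume_real_preimage_singleton (hg : P.IsStep g) (k : β) :
    volume.real (g ⁻¹' {k}) = ∑ a : P.Atom, if g a = k then P.length a else 0 := by
  have hstep : P.IsStep ((g ⁻¹' {k}).indicator (1 : Ω → ℝ)) := fun x => by
    simp [Set.indicator_apply, hg x]
  let _ : MeasurableSpace β := ⊤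
  rw [← integral_indicator_one (hg.measurable trivial), hstep.integral_eq_sum]
  exact Finset.sum_congr rfl fun a _ => by simp [Set.indicator_apply]

end IsStep

/-! ### Translations of atoms -/

/-- The group of bijections of `Ω` that translate atoms of `P` onto atoms of the same length. -/
def translations (P : IntervalPartition) : Subgroup (Equiv.Perm Ω) where
  carrier := {σ | ∀ x, P.Congruent x (σ x) ∧ P.left (σ x) = σ (P.left x)}
  one_mem' _ := ⟨⟨rfl, rfl⟩, rfl⟩
  mul_mem' {σ ρ} hσ hρ x :=
    ⟨(hρ x).1.trans (hσ (ρ x)).1, by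
      rw [Equiv.Perm.mul_apply, (hσ _).2, (hρ _).2, Equiv.Perm.mul_apply]⟩
  inv_mem' {σ} hσ x :=
    ⟨by simpa using (hσ (σ⁻¹ x)).1.symm,
      σ.injective (by simp [← (hσ _).2])⟩

variable {σ : Equiv.Perm Ω}

theorem congruent_translation (hσ : σ ∈ P.translations) (x : Ω) : P.Congruent x (σ x) := (hσ x).1

theorem left_translation (hσ : σ ∈ P.translations) (x : Ω) : P.left (σ x) = σ (P.left x) := (hσ x).2

theorem coe_translation (hσ : σ ∈ P.translations) (x : Ω) :
    (σ x : ℝ) = σ (P.left x) + P.offset x := by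
  rw [(congruent_translation hσ x).1, offset, left_translation hσ]
  ring

theorem translation_eq_self (hσ : σ ∈ P.translations) (hx : P.left (σ x) = P.left x) : σ x = x :=
  ((congruent_translation hσ x).eq_of_left_eq hx.symm).symm

theorem translations_mono (h : P ≤ Q) : P.translations ≤ Q.translations := fun σ hσ x => by
  have hcong := (congruent_translation hσ x).mono h
  refine ⟨hcong, Subtype.ext ?_⟩
  have hx := coe_translation hσ x
  have hl := coe_translation hσ (Q.left x)
  rw [left_left_of_le h] at hl
  have := hcong.1
  simp only [offset, left_left_of_le h] at this hx hl
  linarith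

theorem IsStep.comp_translation {β : Type*} {g : Ω → β} (hg : P.IsStep g)
    (hσ : σ ∈ P.translations) : P.IsStep (g ∘ σ) := fun x => by
  rw [Function.comp_apply, ← left_translation hσ, hg, Function.comp_apply]

theorem mem_range_left_translation_iff (hσ : σ ∈ P.translations) (x : Ω) :
    σ x ∈ Set.range P.left ↔ x ∈ Set.range P.left :=
  ⟨fun ⟨y, hy⟩ => ⟨x, σ.injective (by rw [← left_translation hσ, ← hy, left_left])⟩,
    fun ⟨y, hy⟩ => ⟨σ y, by rw [left_translation hσ, hy]⟩⟩

theorem IsStep.integral_comp_translation {F : Type*} [NormedAddCommGroup F] [NormedSpace ℝ F]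
    [CompleteSpace F] {g : Ω → F} (hg : P.IsStep g) (hσ : σ ∈ P.translations) :
    ∫ x, g (σ x) = ∫ x, g x := by
  change ∫ x, (g ∘ σ) x = ∫ x, g x
  rw [hg.integral_eq_sum, (hg.comp_translation hσ).integral_eq_sum]
  refine Fintype.sum_equiv (σ.subtypePerm (mem_range_left_translation_iff hσ)) _ _ fun a => ?_
  rw [(congruent_translation hσ a).2]
  rfl

instance (P : IntervalPartition) : Finite P.translations := by
  refine Finite.of_injective
    (fun (σ : P.translations) (a : P.Atom) => P.atom (σ.1 a)) fun σ ρ hσρ => ?_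
  refine Subtype.ext (Equiv.ext fun x => Subtype.ext ?_)
  have hx : σ.1 (P.left x) = ρ.1 (P.left x) := by
    have := congrArg Subtype.val (congrFun hσρ (P.atom x))
    simpa [atom, left_translation σ.2, left_translation ρ.2] using this
  rw [coe_translation σ.2, coe_translation ρ.2, hx]

theorem exists_translation_of_perm (π : Equiv.Perm P.Atom)
    (hπ : ∀ a, P.length (π a) = P.length a) :
    ∃ σ ∈ P.translations, ∀ x, P.atom (σ x) = π (P.atom x) := by
  have hmove (π : Equiv.Perm P.Atom) (hπ : ∀ a, P.length (π a) = P.length a) (x : Ω) :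
      ∃ y, P.atom y = π (P.atom x) ∧ P.Congruent x y := by
    have hlen : P.length x = P.length (π (P.atom x)) := by rw [hπ, atom, length_left]
    obtain ⟨y, -, hleft, hoff⟩ := exists_left_eq_offset_eq (P := P) (π (P.atom x) : Ω)
      (P.offset_nonneg x) (hlen ▸ P.offset_lt_length x)
    exact ⟨y, Subtype.ext (hleft.trans (left_atom _)), hoff.symm,
      hlen.trans (length_eq_length hleft).symm⟩
  choose f hf hfc using hmove π hπ
  choose f' hf' hfc' using hmove π.symm fun a => by rw [← hπ, Equiv.apply_symm_apply]
  let σ : Equiv.Perm Ω :=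
    { toFun := f
      invFun := f'
      left_inv := fun x => (((hfc x).trans (hfc' _)).eq_of_left_eq
        (atom_eq_atom_iff.1 (by simp [hf, hf']))).symm
      right_inv := fun x => (((hfc' x).trans (hfc _)).eq_of_left_eq
        (atom_eq_atom_iff.1 (by simp [hf, hf']))).symm }
  refine ⟨σ, fun x => ⟨hfc x, ?_⟩, hf⟩
  have hleft : P.left (f (P.left x)) = P.left (f x) :=
    atom_eq_atom_iff.1 (by rw [hf, hf, atom_eq_atom_iff.2 (P.left_left x)])
  exact hleft.symm.trans (left_eq_self_iff.2 ((hfc _).mem_iff.1 (P.left_mem x)))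

end IntervalPartition

theorem exists_perm_comp_eq {A K : Type*} [Finite A] {f g : A → K}
    (h : ∀ k, Nat.card {a // f a = k} = Nat.card {a // g a = k}) :
    ∃ π : Equiv.Perm A, ∀ a, f (π a) = g a := by
  have e (k : K) := Classical.choice (Finite.card_eq.1 (h k).symm)
  exact ⟨(Equiv.sigmaFiberEquiv g).symm.trans
    ((Equiv.sigmaCongrRight e).trans (Equiv.sigmaFiberEquiv f)), fun a => (e (g a) ⟨a, rfl⟩).2⟩

open Classical in
theorem sum_ite_eq_sum_card_smul {A K : Type*} [Fintype A] (f : A → K) (k : K) (w : A → ℝ) :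
    (∑ a, if f a = k then w a else 0) =
      ∑ ℓ ∈ Finset.univ.image w, (Nat.card {a // (f a, w a) = (k, ℓ)} : ℚ) • ℓ := by
  rw [← Finset.sum_fiberwise_of_maps_to (g := w) fun a _ =>
    Finset.mem_image_of_mem w (Finset.mem_univ a)]
  refine Finset.sum_congr rfl fun ℓ _ => ?_
  rw [← Finset.sum_filter, Finset.filter_filter, Nat.card_eq_fintype_card, Fintype.card_subtype,
    Finset.sum_congr rfl (g := fun _ => ℓ) fun a ha => (Finset.mem_filter.1 ha).2.1,
    Finset.sum_const, Rat.smul_def, nsmul_eq_mul, Rat.cast_natCast]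
  simp only [Prod.mk.injEq, and_comm]

open Classical in
theorem exists_perm_of_linearIndepOn {A K : Type*} [Fintype A] {w : A → ℝ}
    (hw : LinearIndepOn ℚ id (Set.range w)) {f g : A → K}
    (h : ∀ k, (∑ a, if f a = k then w a else 0) = ∑ a, if g a = k then w a else 0) :
    ∃ π : Equiv.Perm A, ∀ a, f (π a) = g a ∧ w (π a) = w a := by
  suffices hcard : ∀ kℓ : K × ℝ,
      Nat.card {a // (f a, w a) = kℓ} = Nat.card {a // (g a, w a) = kℓ} by
    obtain ⟨π, hπ⟩ := exists_perm_comp_eq hcard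
    exact ⟨π, fun a => Prod.mk.inj (hπ a)⟩
  rintro ⟨k, ℓ⟩
  by_cases hℓ : ℓ ∈ Finset.univ.image w
  · have hk := h k
    rw [sum_ite_eq_sum_card_smul, sum_ite_eq_sum_card_smul, ← sub_eq_zero,
      ← Finset.sum_sub_distrib] at hk
    simp only [← sub_smul] at hk
    have hcoeff := linearIndepOn_iff'.1 hw _ _ (by simp) hk ℓ hℓ
    exact_mod_cast sub_eq_zero.1 hcoeff
  · have hne (f : A → K) : IsEmpty {a // (f a, w a) = (k, ℓ)} :=
      ⟨fun a => hℓ (Finset.mem_image.2 ⟨a, Finset.mem_univ _, (Prod.mk.inj a.2).2⟩)⟩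
    have := hne f
    have := hne g
    simp only [Nat.card_of_isEmpty]

/- Rational independence of the lengths turns equality of measures into equality of the numbers of
atoms of each length. -/
theorem IntervalPartition.IsIndependent.exists_translation_comp_eq {K : Type*}
    {P : IntervalPartition} (hP : P.IsIndependent) {c c' : Ω → K} (hc : P.IsStep c)
    (hc' : P.IsStep c') (h : ∀ k, volume.real (c ⁻¹' {k}) = volume.real (c' ⁻¹' {k})) :
    ∃ σ ∈ P.translations, ∀ x, c (σ x) = c' x := by
  simp only [hc.volume_real_preimage_singleton, hc'.volume_real_preimage_singleton] at h
  obtain ⟨π, hπ⟩ := exists_perm_of_linearIndepOn (w := fun a : P.Atom => P.length a)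
    (f := fun a => c a) (g := fun a => c' a)
    (LinearIndepOn.mono hP (by rintro _ ⟨a, rfl⟩; exact ⟨a, rfl⟩)) h
  obtain ⟨σ, hσ, hσπ⟩ := exists_translation_of_perm π fun a => (hπ a).2
  refine ⟨σ, hσ, fun x => ?_⟩
  calc c (σ x) = c (P.atom (σ x)) := (hc _).symm
    _ = c' (P.atom x) := by rw [hσπ, (hπ _).1]
    _ = c' x := hc' x

/-! ### Multiplication and permutation operators -/

section Operators

open scoped ENNReal Pointwise

/-- The Hilbert space `ℓ²(ι)`. -/
abbrev L2 (ι : Type*) : Type _ := lp (fun _ : ι => ℂ) 2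

/-- The C⋆-algebra `ℓ^∞(ι)`. -/
abbrev LInf (ι : Type*) : Type _ := lp (fun _ : ι => ℂ) ∞

variable {ι : Type*}

theorem ext_apply {a b : L2 ι →L[ℂ] L2 ι} (h : ∀ (v : L2 ι) (x : ι), a v x = b v x) : a = b :=
  ContinuousLinearMap.ext fun v => lp.ext (funext (h v))

/-- The representation of `ℓ^∞(ι)` on `ℓ²(ι)` by multiplication operators. -/
noncomputable def mulOp : LInf ι →⋆ₐ[ℂ] (L2 ι →L[ℂ] L2 ι) where
  toFun g := lp.holderL (p := ∞) (q := 2) 2 (fun _ : ι => ContinuousLinearMap.mul ℂ ℂ) (K := 1)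
    (fun _ => by simp) g
  map_one' := ext_apply fun v x => one_mul (v x)
  map_mul' f g := ext_apply fun v x => mul_assoc (f x) (g x) (v x)
  map_zero' := by simp
  map_add' f g := by simp
  commutes' c := ext_apply fun v x => by
    rw [Algebra.algebraMap_eq_smul_one, Algebra.algebraMap_eq_smul_one, map_smul]
    exact congrArg (c • ·) (one_mul (v x))
  map_star' g := by
    rw [ContinuousLinearMap.star_eq_adjoint, ContinuousLinearMap.eq_adjoint_iff]
    intro v w
    rw [lp.inner_eq_tsum, lp.inner_eq_tsum]
    refine tsum_congr fun x => ?_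
    change inner ℂ (star (g x) * v x) (w x) = inner ℂ (v x) (g x * w x)
    simp only [RCLike.inner_apply, map_mul, RCLike.star_def, RCLike.conj_conj]
    ring

theorem mulOp_apply (g : LInf ι) (v : L2 ι) (x : ι) : mulOp g v x = g x * v x := rfl

theorem norm_sq_eq_tsum (v : L2 ι) : ‖v‖ ^ 2 = ∑' x, ‖v x‖ ^ 2 := by
  simpa using lp.norm_rpow_eq_tsum (p := 2) (by simp) v

/-- The permutation representation on `ℓ²(ι)`. -/
noncomputable def permOp : Equiv.Perm ι →* (L2 ι →L[ℂ] L2 ι) where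
  toFun σ := LinearMap.mkContinuous
    { toFun v := ⟨fun x => v (σ⁻¹ x),
        memℓp_gen (σ⁻¹.summable_iff.2 ((lp.memℓp v).summable (by simp)))⟩
      map_add' _ _ := rfl
      map_smul' _ _ := rfl } 1 fun v => by
    rw [one_mul, ← sq_le_sq₀ (norm_nonneg _) (norm_nonneg _), norm_sq_eq_tsum, norm_sq_eq_tsum]
    exact (σ⁻¹.tsum_eq fun x => ‖v x‖ ^ 2).le
  map_one' := rfl
  map_mul' σ ρ := ext_apply fun v x => congrArg v (by simp)

theorem permOp_apply (σ : Equiv.Perm ι) (v : L2 ι) (x : ι) : permOp σ v x = v (σ⁻¹ x) := rfl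

theorem star_permOp (σ : Equiv.Perm ι) : star (permOp σ) = permOp σ⁻¹ := by
  rw [ContinuousLinearMap.star_eq_adjoint, eq_comm, ContinuousLinearMap.eq_adjoint_iff]
  intro v w
  rw [lp.inner_eq_tsum, lp.inner_eq_tsum, ← Equiv.tsum_eq σ⁻¹]
  exact tsum_congr fun x => by rw [permOp_apply, permOp_apply, inv_inv, show σ (σ⁻¹ x) = x by simp]

theorem permOp_mem_unitary (σ : Equiv.Perm ι) : permOp σ ∈ unitary (L2 ι →L[ℂ] L2 ι) := by
  rw [Unitary.mem_iff, star_permOp, ← map_mul, ← map_mul]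
  simp

/-- The composition `g ∘ σ` of a bounded function and a permutation. -/
noncomputable def compPerm (g : LInf ι) (σ : Equiv.Perm ι) : LInf ι :=
  ⟨fun x => g (σ x), memℓp_infty ⟨‖g‖, by
    rintro _ ⟨x, rfl⟩
    exact lp.norm_apply_le_norm (by simp) g (σ x)⟩⟩

@[simp]
theorem compPerm_apply (g : LInf ι) (σ : Equiv.Perm ι) (x : ι) : compPerm g σ x = g (σ x) := rfl

theorem permOp_mul_mulOp (σ : Equiv.Perm ι) (g : LInf ι) :
    permOp σ * mulOp g = mulOp (compPerm g σ⁻¹) * permOp σ := rfl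

theorem commute_mulOp_permOp {g : LInf ι} {σ : Equiv.Perm ι} (h : ∀ x, g (σ x) = g x) :
    Commute (mulOp g) (permOp σ) := by
  have hg : compPerm g σ⁻¹ = g := lp.ext (funext fun x => by
    simpa using (h (σ⁻¹ x)).symm)
  rw [commute_iff_eq, permOp_mul_mulOp, hg]

theorem star_permOp_mul_mulOp_mul_permOp (σ : Equiv.Perm ι) (g : LInf ι) :
    star (permOp σ) * mulOp g * permOp σ = mulOp (compPerm g σ) := by
  rw [star_permOp, permOp_mul_mulOp, mul_assoc, ← map_mul, inv_inv, inv_mul_cancel, map_one,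
    mul_one]

theorem permOp_mul_mulOp_mul_star_permOp (σ : Equiv.Perm ι) (g : LInf ι) :
    permOp σ * mulOp g * star (permOp σ) = mulOp (compPerm g σ⁻¹) := by
  rw [permOp_mul_mulOp, mul_assoc, Unitary.mul_star_self_of_mem (permOp_mem_unitary σ), mul_one]

open Classical in
/-- The standard basis of `ℓ²(ι)`. -/
noncomputable def basisVector (x : ι) : L2 ι := lp.single 2 x (1 : ℂ)

open Classical in
theorem basisVector_apply (x y : ι) : basisVector x y = if y = x then 1 else 0 := by
  simp [basisVector, Pi.single_apply]

theorem norm_basisVector (x : ι) : ‖basisVector x‖ = 1 := by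
  classical simp [basisVector]

theorem mulOp_basisVector (g : LInf ι) (x : ι) :
    mulOp g (basisVector x) = g x • basisVector x := by
  classical
  refine lp.ext (funext fun y => ?_)
  rw [mulOp_apply, lp.coeFn_smul, Pi.smul_apply, basisVector_apply, smul_eq_mul]
  split_ifs with h
  · rw [h]
  · simp only [mul_zero]

theorem permOp_basisVector (σ : Equiv.Perm ι) (x : ι) :
    permOp σ (basisVector x) = basisVector (σ x) := by
  classical
  refine lp.ext (funext fun y => ?_)
  rw [permOp_apply, basisVector_apply, basisVector_apply, Equiv.Perm.inv_eq_iff_eq]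

theorem eq_zero_of_forall_basisVector {a : L2 ι →L[ℂ] L2 ι} (h : ∀ x, a (basisVector x) = 0) :
    a = 0 := by
  classical
  ext v : 1
  have hsum := (lp.hasSum_single (p := 2) (by simp) v).mapL a
  have hzero (x : ι) : a (lp.single 2 x (v x)) = 0 := by
    rw [show lp.single 2 x (v x) = v x • basisVector x by
      rw [basisVector, ← lp.single_smul, smul_eq_mul, mul_one], map_smul, h, smul_zero]
  simp only [hzero] at hsum
  exact hsum.unique hasSum_zero

theorem norm_apply_basisVector_apply_le (a : L2 ι →L[ℂ] L2 ι) (x : ι) :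
    ‖a (basisVector x) x‖ ≤ ‖a‖ :=
  (lp.norm_apply_le_norm (by simp) (a (basisVector x)) x).trans
    (by simpa [norm_basisVector] using a.le_opNorm (basisVector x))

/-- The diagonal of the matrix of an operator on `ℓ²(ι)`. -/
noncomputable def diag : (L2 ι →L[ℂ] L2 ι) →L[ℂ] LInf ι :=
  LinearMap.mkContinuous
    { toFun a := ⟨fun x => a (basisVector x) x, memℓp_infty ⟨‖a‖, by
        rintro _ ⟨x, rfl⟩
        exact norm_apply_basisVector_apply_le a x⟩⟩
      map_add' _ _ := rfl
      map_smul' _ _ := rfl } 1 fun a => by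
    rw [one_mul]
    exact lp.norm_le_of_forall_le (norm_nonneg a) (norm_apply_basisVector_apply_le a)

theorem diag_apply (a : L2 ι →L[ℂ] L2 ι) (x : ι) : diag a x = a (basisVector x) x := rfl

theorem norm_diag_apply_le (a : L2 ι →L[ℂ] L2 ι) (x : ι) : ‖diag a x‖ ≤ ‖a‖ :=
  norm_apply_basisVector_apply_le a x

theorem diag_mulOp_mul (g : LInf ι) (a : L2 ι →L[ℂ] L2 ι) :
    diag (mulOp g * a) = g * diag a := rfl

theorem diag_mul_mulOp (a : L2 ι →L[ℂ] L2 ι) (g : LInf ι) :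
    diag (a * mulOp g) = g * diag a :=
  lp.ext (funext fun x => by
    simp only [diag_apply, mul_apply_eq_comp, mulOp_basisVector, map_smul]
    rfl)

theorem diag_one : diag (1 : L2 ι →L[ℂ] L2 ι) = 1 :=
  lp.ext (funext fun x => by classical simp [diag_apply, basisVector_apply])

theorem diag_mulOp (g : LInf ι) : diag (mulOp g) = g := by
  simpa only [mul_one, diag_one] using diag_mulOp_mul g 1

theorem norm_mulOp (g : LInf ι) : ‖mulOp g‖ = ‖g‖ := by
  refine le_antisymm (NonUnitalStarAlgHom.norm_apply_le mulOp g)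
    (lp.norm_le_of_forall_le (norm_nonneg _) fun x => ?_)
  simpa only [diag_mulOp] using norm_diag_apply_le (mulOp g) x

theorem diag_permOp_mul_mul_star (σ : Equiv.Perm ι) (a : L2 ι →L[ℂ] L2 ι) :
    diag (permOp σ * a * star (permOp σ)) = compPerm (diag a) σ⁻¹ :=
  lp.ext (funext fun x => by
    simp only [diag_apply, compPerm_apply, star_permOp, mul_apply_eq_comp,
      permOp_basisVector, permOp_apply])

open Classical in
theorem diag_permOp_apply (σ : Equiv.Perm ι) (x : ι) :
    diag (permOp σ) x = if σ x = x then 1 else 0 := by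
  rw [diag_apply, permOp_basisVector, basisVector_apply]
  simp only [eq_comm]

theorem diag_star_mul_self_apply (a : L2 ι →L[ℂ] L2 ι) (x : ι) :
    diag (star a * a) x = ((‖a (basisVector x)‖ ^ 2 : ℝ) : ℂ) := by
  classical
  calc diag (star a * a) x = inner ℂ (basisVector x) ((star a * a) (basisVector x)) := by
        rw [diag_apply]
        conv_rhs => rw [basisVector, lp.inner_single_left]
        simp [basisVector]
    _ = ((‖a (basisVector x)‖ ^ 2 : ℝ) : ℂ) := by
        rw [ContinuousLinearMap.star_eq_adjoint, mul_apply_eq_comp,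
          ContinuousLinearMap.adjoint_inner_right, inner_self_eq_norm_sq_to_K]
        simp

/-- The products `mulOp g * permOp σ` with `g ∈ A` and `σ ∈ Γ`. -/
def crossedProducts (A : StarSubalgebra ℂ (LInf ι)) (Γ : Subgroup (Equiv.Perm ι)) :
    Set (L2 ι →L[ℂ] L2 ι) :=
  (mulOp '' A) * (permOp '' Γ)

variable {A B : StarSubalgebra ℂ (LInf ι)} {Γ Δ : Subgroup (Equiv.Perm ι)} {g : LInf ι}
  {σ : Equiv.Perm ι} {a : L2 ι →L[ℂ] L2 ι}

theorem mulOp_mul_permOp_mem_crossedProducts (hg : g ∈ A) (hσ : σ ∈ Γ) :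
    mulOp g * permOp σ ∈ crossedProducts A Γ :=
  Set.mul_mem_mul ⟨g, hg, rfl⟩ ⟨σ, hσ, rfl⟩

theorem crossedProducts_mul_subset (h : ∀ g ∈ A, ∀ σ ∈ Γ, compPerm g σ ∈ A) :
    crossedProducts A Γ * crossedProducts A Γ ⊆ crossedProducts A Γ := by
  rintro _ ⟨_, ⟨_, ⟨f, hf, rfl⟩, _, ⟨σ, hσ, rfl⟩, rfl⟩, _,
    ⟨_, ⟨g, hg, rfl⟩, _, ⟨ρ, hρ, rfl⟩, rfl⟩, rfl⟩
  convert mulOp_mul_permOp_mem_crossedProducts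
    (mul_mem hf (h g hg _ (inv_mem hσ))) (mul_mem hσ hρ) using 1
  calc mulOp f * permOp σ * (mulOp g * permOp ρ)
      = mulOp f * (permOp σ * mulOp g) * permOp ρ := by simp only [mul_assoc]
    _ = mulOp (f * compPerm g σ⁻¹) * permOp (σ * ρ) := by
      rw [permOp_mul_mulOp, map_mul, map_mul]
      simp only [mul_assoc]

theorem star_mem_crossedProducts (h : ∀ g ∈ A, ∀ σ ∈ Γ, compPerm g σ ∈ A)
    (ha : a ∈ crossedProducts A Γ) : star a ∈ crossedProducts A Γ := by
  obtain ⟨_, ⟨g, hg, rfl⟩, _, ⟨σ, hσ, rfl⟩, rfl⟩ := ha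
  convert mulOp_mul_permOp_mem_crossedProducts (h _ (star_mem hg) σ hσ) (inv_mem hσ) using 1
  rw [star_mul, ← map_star mulOp, star_permOp, permOp_mul_mulOp, inv_inv]

/-- The concrete crossed product of a `Γ`-invariant algebra `A` of bounded functions by a group
`Γ` of permutations. -/
noncomputable def crossedAlgebra (A : StarSubalgebra ℂ (LInf ι)) (Γ : Subgroup (Equiv.Perm ι))
    (h : ∀ g ∈ A, ∀ σ ∈ Γ, compPerm g σ ∈ A) : StarSubalgebra ℂ (L2 ι →L[ℂ] L2 ι) where
  toSubalgebra := (Submodule.span ℂ (crossedProducts A Γ)).toSubalgebra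
    (Submodule.subset_span
      (by simpa using mulOp_mul_permOp_mem_crossedProducts (one_mem A) (one_mem Γ)))
    fun a b ha hb => Submodule.mul_le.1 ((Submodule.span_mul_span ℂ _ _).trans_le
      (Submodule.span_mono (crossedProducts_mul_subset h))) a ha b hb
  star_mem' {a} ha := by
    induction ha using Submodule.span_induction with
    | mem a ha => exact Submodule.subset_span (star_mem_crossedProducts h ha)
    | zero => simp
    | add a b _ _ ha hb => rw [star_add]; exact Submodule.add_mem _ ha hb
    | smul c a _ ha => rw [star_smul]; exact Submodule.smul_mem _ _ ha

theorem mem_submodule_of_mem_crossedAlgebra {h : ∀ g ∈ A, ∀ σ ∈ Γ, compPerm g σ ∈ A}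
    {V : Submodule ℂ (L2 ι →L[ℂ] L2 ι)} (hV : ∀ g ∈ A, ∀ σ ∈ Γ, mulOp g * permOp σ ∈ V)
    (ha : a ∈ crossedAlgebra A Γ h) : a ∈ V := by
  refine Submodule.span_le.2 ?_ ha
  rintro _ ⟨_, ⟨g, hg, rfl⟩, _, ⟨σ, hσ, rfl⟩, rfl⟩
  exact hV g hg σ hσ

theorem mulOp_mem_crossedAlgebra {h : ∀ g ∈ A, ∀ σ ∈ Γ, compPerm g σ ∈ A} (hg : g ∈ A) :
    mulOp g ∈ crossedAlgebra A Γ h :=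
  Submodule.subset_span (by simpa using mulOp_mul_permOp_mem_crossedProducts hg (one_mem Γ))

theorem permOp_mem_crossedAlgebra {h : ∀ g ∈ A, ∀ σ ∈ Γ, compPerm g σ ∈ A} (hσ : σ ∈ Γ) :
    permOp σ ∈ crossedAlgebra A Γ h :=
  Submodule.subset_span (by simpa using mulOp_mul_permOp_mem_crossedProducts (one_mem A) hσ)

theorem crossedAlgebra_mono {hA : ∀ g ∈ A, ∀ σ ∈ Γ, compPerm g σ ∈ A}
    {hB : ∀ g ∈ B, ∀ σ ∈ Δ, compPerm g σ ∈ B} (hAB : A ≤ B) (hΓΔ : Γ ≤ Δ) :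
    crossedAlgebra A Γ hA ≤ crossedAlgebra B Δ hB :=
  Submodule.span_mono (Set.mul_subset_mul (Set.image_mono hAB) (Set.image_mono hΓΔ))

theorem finiteDimensional_crossedAlgebra [FiniteDimensional ℂ A] [Finite Γ]
    {h : ∀ g ∈ A, ∀ σ ∈ Γ, compPerm g σ ∈ A} : FiniteDimensional ℂ (crossedAlgebra A Γ h) := by
  have hA : (Submodule.span ℂ (mulOp '' (A : Set (LInf ι)))).FG := by
    let V : Submodule ℂ (LInf ι) := Subalgebra.toSubmodule A.toSubalgebra
    have := (Module.Finite.iff_fg (N := V).1 ‹_›).map (mulOp (ι := ι)).toAlgHom.toLinearMap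
    rwa [← Submodule.span_eq V, Submodule.map_span] at this
  have hΓ : (Submodule.span ℂ (permOp '' (Γ : Set (Equiv.Perm ι)))).FG :=
    Submodule.fg_span ((Set.toFinite _).image _)
  have h_fg := hA.mul hΓ
  rw [Submodule.span_mul_span] at h_fg
  exact Module.Finite.iff_fg (N := Submodule.span ℂ (crossedProducts A Γ)).2 h_fg

end Operators

/-! ### Dixmier averaging -/

section Dixmier

open scoped Pointwise

variable {A : Type*} [CStarAlgebra A] {a b c u : A}

/-- The convex hull of the unitary orbit of `a`. -/
def unitaryHull (a : A) : Set A := convexHull ℝ {b | ∃ u ∈ unitary A, u * a * star u = b}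

theorem conj_mem_unitaryHull (hu : u ∈ unitary A) : u * a * star u ∈ unitaryHull a :=
  subset_convexHull ℝ _ ⟨u, hu, rfl⟩

theorem unitaryHull_subset {s : Set A} (hs : Convex ℝ s)
    (h : ∀ u ∈ unitary A, u * a * star u ∈ s) : unitaryHull a ⊆ s :=
  convexHull_min (by rintro _ ⟨u, hu, rfl⟩; exact h u hu) hs

theorem unitaryHull_subset_of_mem (hb : b ∈ unitaryHull a) : unitaryHull b ⊆ unitaryHull a := by
  refine unitaryHull_subset (convex_convexHull ℝ _) fun v hv => ?_
  let conj : A →ₗ[ℝ] A := LinearMap.mulRight ℝ (star v) ∘ₗ LinearMap.mulLeft ℝ v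
  refine unitaryHull_subset (s := conj ⁻¹' unitaryHull a)
    ((convex_convexHull ℝ _).linear_preimage conj) (fun u hu => ?_) hb
  have := conj_mem_unitaryHull (a := a) (mul_mem hv hu)
  rwa [star_mul, show v * u * a * (star u * star v) = v * (u * a * star u) * star v by
    simp only [mul_assoc]] at this

theorem exists_mem_unitaryHull_norm_sub_le (hb : b ∈ unitaryHull a) (c : A) :
    ∃ d ∈ unitaryHull c, ‖b - d‖ ≤ ‖a - c‖ := by
  have hconvex : Convex ℝ (unitaryHull c + Metric.closedBall 0 ‖a - c‖) :=
    (convex_convexHull ℝ _).add (convex_closedBall (0 : A) _)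
  have hmem : b ∈ unitaryHull c + Metric.closedBall 0 ‖a - c‖ := by
    refine unitaryHull_subset hconvex (fun u hu => ?_) hb
    refine ⟨u * c * star u, conj_mem_unitaryHull hu, u * (a - c) * star u, ?_, by noncomm_ring⟩
    rw [mem_closedBall_zero_iff, CStarRing.norm_mul_mem_unitary _ (Unitary.star_mem hu),
      CStarRing.norm_mem_unitary_mul _ hu]
  obtain ⟨d, hd, e, he, rfl⟩ := hmem
  exact ⟨d, hd, by simpa using he⟩

theorem inv_smul_sum_conj_pow_mem_unitaryHull (hu : u ∈ unitary A) {K : ℕ} (hK : K ≠ 0) (a : A) :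
    (K : ℂ)⁻¹ • ∑ k ∈ Finset.range K, u ^ k * a * star (u ^ k) ∈ unitaryHull a := by
  have hconvex : Convex ℝ (unitaryHull a) := convex_convexHull ℝ _
  have hmem := hconvex.sum_mem
    (t := Finset.range K) (w := fun _ => (K : ℝ)⁻¹) (fun _ _ => by positivity)
    (by simp [hK]) fun k _ => conj_mem_unitaryHull (pow_mem hu k)
  rw [← Finset.smul_sum] at hmem
  convert hmem using 1
  rw [← Complex.coe_smul, Complex.ofReal_inv, Complex.ofReal_natCast]

theorem trace_eq_of_mem_unitaryHull {τ : A →ₗ[ℂ] ℂ} (hτ : ∀ a b, τ (a * b) = τ (b * a))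
    (hb : b ∈ unitaryHull a) : τ b = τ a := by
  refine unitaryHull_subset (s := {b | τ b = τ a})
    ((convex_singleton (τ a)).linear_preimage (τ.restrictScalars ℝ)) (fun u hu => ?_) hb
  rw [Set.mem_ofPred_eq, hτ, ← mul_assoc, Unitary.star_mul_self_of_mem hu, one_mul]

theorem smul_mem_twoSidedIdeal {I : TwoSidedIdeal A} (z : ℂ) (ha : a ∈ I) : z • a ∈ I := by
  simpa using I.mul_mem_left (z • 1) a ha

theorem mem_twoSidedIdeal_of_mem_unitaryHull {I : TwoSidedIdeal A} (ha : a ∈ I)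
    (hb : b ∈ unitaryHull a) : b ∈ I := by
  refine unitaryHull_subset (s := I) (fun x hx y hy s t _ _ _ => ?_) (fun u _ => ?_) hb
  · rw [← Complex.coe_smul, ← Complex.coe_smul]
    exact I.add_mem (smul_mem_twoSidedIdeal _ hx) (smul_mem_twoSidedIdeal _ hy)
  · exact I.mul_mem_right _ _ (I.mul_mem_left _ _ ha)

theorem exists_norm_le_of_forall_star_mul_self_nonneg {τ : A →ₗ[ℂ] ℂ}
    (h : ∀ a, 0 ≤ τ (star a * a)) : ∃ C : ℝ, 0 ≤ C ∧ ∀ a, ‖τ a‖ ≤ C * ‖a‖ := by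
  let _ := CStarAlgebra.spectralOrder A
  have _ := CStarAlgebra.spectralOrderedRing A
  obtain ⟨C, hC⟩ := PositiveLinearMap.exists_norm_apply_le
    (PositiveLinearMap.mk₀ τ fun a ha => by
      obtain ⟨b, rfl⟩ := CStarAlgebra.nonneg_iff_eq_star_mul_self.1 ha
      exact h b)
  exact ⟨C, C.2, hC⟩

variable (A) in
/-- The (weak) Dixmier property: every unitary orbit can be averaged arbitrarily close to a
scalar. -/
def HasDixmierProperty : Prop :=
  ∀ (a : A) (ε : ℝ), 0 < ε → ∃ b ∈ unitaryHull a, ∃ z : ℂ, ‖b - z • 1‖ < ε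

theorem hasDixmierProperty_of_dense {s : Set A} (hs : Dense s)
    (h : ∀ a ∈ s, ∀ ε : ℝ, 0 < ε → ∃ b ∈ unitaryHull a, ∃ z : ℂ, ‖b - z • 1‖ < ε) :
    HasDixmierProperty A := fun a ε hε => by
  obtain ⟨c, hc, hac⟩ := hs.exists_dist_lt a (half_pos hε)
  obtain ⟨b, hb, z, hbz⟩ := h c hc (ε / 2) (half_pos hε)
  obtain ⟨d, hd, hbd⟩ := exists_mem_unitaryHull_norm_sub_le hb a
  refine ⟨d, hd, z, ?_⟩
  rw [dist_comm, dist_eq_norm] at hac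
  calc ‖d - z • 1‖ ≤ ‖d - b‖ + ‖b - z • 1‖ := norm_sub_le_norm_sub_add_norm_sub _ _ _
    _ < ε / 2 + ε / 2 := by rw [norm_sub_rev d b]; gcongr; exact hbd.trans_lt hac
    _ = ε := add_halves ε

variable {B : UnitalCStarAlg} {τ τ' : B.carrier →ₗ[ℂ] ℂ}

scoped instance : CStarAlgebra B.carrier where

theorem HasDixmierProperty.exists_norm_sub_trace_lt (hB : HasDixmierProperty B.carrier)
    (hτ : B.IsTracialState τ) (a : B.carrier) {ε : ℝ} (hε : 0 < ε) :
    ∃ b ∈ unitaryHull a, ‖b - τ a • 1‖ < ε := by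
  obtain ⟨h_one, h_nonneg, h_comm⟩ := hτ
  obtain ⟨C, hC₀, hC⟩ := exists_norm_le_of_forall_star_mul_self_nonneg h_nonneg
  set D : ℝ := 1 + C * ‖(1 : B.carrier)‖ with hD
  have hD₀ : 0 < D := by positivity
  obtain ⟨b, hb, z, hbz⟩ := hB a (ε / D) (by positivity)
  refine ⟨b, hb, ?_⟩
  have hz : ‖z - τ a‖ ≤ C * ‖b - z • 1‖ := by
    calc ‖z - τ a‖ = ‖τ (b - z • 1)‖ := by
          rw [map_sub, map_smul, h_one, trace_eq_of_mem_unitaryHull h_comm hb, norm_sub_rev,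
            smul_eq_mul, mul_one]
      _ ≤ C * ‖b - z • 1‖ := hC _
  calc ‖b - τ a • 1‖ = ‖(b - z • 1) + (z - τ a) • (1 : B.carrier)‖ := by congr 1; module
    _ ≤ ‖b - z • 1‖ + C * ‖b - z • 1‖ * ‖(1 : B.carrier)‖ := by
      refine (norm_add_le _ _).trans ?_
      rw [norm_smul]
      gcongr
    _ = D * ‖b - z • 1‖ := by rw [hD]; ring
    _ < D * (ε / D) := by gcongr
    _ = ε := by field_simp

theorem HasDixmierProperty.trace_unique (hB : HasDixmierProperty B.carrier)
    (hτ : B.IsTracialState τ) (hτ' : B.IsTracialState τ') : τ' = τ := by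
  obtain ⟨h_one, h_nonneg, h_comm⟩ := hτ'
  obtain ⟨C, hC₀, hC⟩ := exists_norm_le_of_forall_star_mul_self_nonneg h_nonneg
  ext a
  refine eq_of_forall_dist_le fun ε hε => ?_
  obtain ⟨b, hb, hba⟩ := hB.exists_norm_sub_trace_lt hτ a (show 0 < ε / (C + 1) by positivity)
  calc dist (τ' a) (τ a) = ‖τ' (b - τ a • 1)‖ := by
        rw [map_sub, map_smul, h_one, trace_eq_of_mem_unitaryHull h_comm hb, smul_eq_mul,
          mul_one, dist_eq_norm]
    _ ≤ C * ‖b - τ a • 1‖ := hC _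
    _ ≤ (C + 1) * (ε / (C + 1)) := by gcongr; linarith
    _ = ε := by field_simp

theorem twoSidedIdeal_eq_top_of_norm_sub_smul_one_lt {I : TwoSidedIdeal A} {z : ℂ} (hb : b ∈ I)
    (h : ‖b - z • 1‖ < ‖z‖) : I = ⊤ := by
  have hz : z ≠ 0 := norm_pos_iff.1 ((norm_nonneg _).trans_lt h)
  have hlt : ‖1 - z⁻¹ • b‖ < 1 := by
    calc ‖1 - z⁻¹ • b‖ = ‖z⁻¹ • (b - z • 1)‖ := by
          rw [norm_sub_rev, smul_sub, smul_smul, inv_mul_cancel₀ hz, one_smul]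
      _ = ‖z‖⁻¹ * ‖b - z • 1‖ := by rw [norm_smul, norm_inv]
      _ < 1 := by rwa [inv_mul_lt_iff₀ (norm_pos_iff.2 hz), mul_one]
  have htop := I.asIdeal.eq_top_of_norm_lt_one
    (TwoSidedIdeal.mem_asIdeal.2 (smul_mem_twoSidedIdeal z⁻¹ hb)) hlt
  rw [Ideal.eq_top_iff_one, TwoSidedIdeal.mem_asIdeal] at htop
  exact eq_top_iff.2 fun x _ => by simpa using I.mul_mem_left x 1 htop

theorem HasDixmierProperty.isSimple (hB : HasDixmierProperty B.carrier)
    (hτ : B.IsTracialState τ) (h_faithful : ∀ a, τ (star a * a) = 0 → a = 0) : B.IsSimple := by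
  intro I _
  by_cases hI : ∀ a ∈ I, a = 0
  · exact .inl (eq_bot_iff.2 fun a ha => (TwoSidedIdeal.mem_bot _).2 (hI a ha))
  · push Not at hI
    obtain ⟨a, ha, ha₀⟩ := hI
    have hpos : 0 < ‖τ (star a * a)‖ := norm_pos_iff.2 fun h => ha₀ (h_faithful a h)
    obtain ⟨b, hb, hlt⟩ := hB.exists_norm_sub_trace_lt hτ (star a * a) hpos
    exact .inr (twoSidedIdeal_eq_top_of_norm_sub_smul_one_lt
      (mem_twoSidedIdeal_of_mem_unitaryHull (I.mul_mem_left _ _ ha) hb) hlt)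

end Dixmier

/-! ### Inductive limits -/

section InductiveLimit

variable {A : Type} [CStarAlgebra A]

/-- The C⋆-algebra generated by an increasing sequence of ⋆-subalgebras. -/
noncomputable def inductiveLimit (S : ℕ →o StarSubalgebra ℂ A) : UnitalCStarAlg :=
  let _ : CStarAlgebra (⨆ n, S n).topologicalClosure :=
    StarSubalgebra.cstarAlgebra _ (h_closed := StarSubalgebra.isClosed_topologicalClosure _)
  { carrier := (⨆ n, S n).topologicalClosure }

namespace inductiveLimit

variable {S : ℕ →o StarSubalgebra ℂ A}

/-- The ambient algebra receives the inductive limit. -/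
noncomputable def subtype (S : ℕ →o StarSubalgebra ℂ A) : (inductiveLimit S).carrier →⋆ₐ[ℂ] A :=
  StarSubalgebra.subtype _

noncomputable instance (S : ℕ →o StarSubalgebra ℂ A) : CoeOut (inductiveLimit S).carrier A :=
  ⟨subtype S⟩

/-- The finite stages of an inductive limit. -/
noncomputable def stage (S : ℕ →o StarSubalgebra ℂ A) (n : ℕ) :
    StarSubalgebra ℂ (inductiveLimit S).carrier :=
  (S n).comap (subtype S)

theorem isometry_subtype : Isometry (subtype S) := isometry_subtype_coe

theorem norm_subtype (a : (inductiveLimit S).carrier) : ‖subtype S a‖ = ‖a‖ := rfl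

theorem subtype_injective : Function.Injective (subtype S) := Subtype.val_injective

theorem subtype_mul (a b : (inductiveLimit S).carrier) :
    subtype S (a * b) = subtype S a * subtype S b := rfl

theorem subtype_star (a : (inductiveLimit S).carrier) :
    subtype S (star a) = star (subtype S a) := rfl

theorem exists_subtype_eq {n : ℕ} {a : A} (ha : a ∈ S n) :
    ∃ b ∈ stage S n, subtype S b = a :=
  ⟨⟨a, StarSubalgebra.le_topologicalClosure _ (le_iSup S n ha)⟩, ha, rfl⟩

theorem exists_subtype_eq_iff {a : A} :
    (∃ b, subtype S b = a) ↔ a ∈ closure (⋃ n, (S n : Set A)) := by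
  rw [← StarSubalgebra.coe_iSup_of_directed S.monotone.directed_le,
    ← StarSubalgebra.topologicalClosure_coe]
  exact ⟨fun ⟨b, hb⟩ => hb ▸ b.2, fun ha => ⟨⟨a, ha⟩, rfl⟩⟩

theorem mem_unitary_iff {u : (inductiveLimit S).carrier} :
    u ∈ unitary (inductiveLimit S).carrier ↔ subtype S u ∈ unitary A := by
  simp only [Unitary.mem_iff, ← subtype_star, ← subtype_mul,
    ← map_one (subtype S), subtype_injective.eq_iff]

theorem monotone_stage : Monotone (stage S) := fun _ _ h _ ha => S.monotone h ha

theorem dense_iUnion_stage : Dense (⋃ n, (stage S n : Set (inductiveLimit S).carrier)) := by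
  intro a
  rw [isometry_subtype.isEmbedding.isInducing.closure_eq_preimage_closure_image, Set.mem_preimage,
    Set.image_iUnion]
  refine closure_mono (Set.iUnion_mono fun n x hx => ?_) (exists_subtype_eq_iff.1 ⟨a, rfl⟩)
  exact exists_subtype_eq hx

theorem induction_on {p : (inductiveLimit S).carrier → Prop} (h_closed : IsClosed {a | p a})
    (h_stage : ∀ n, ∀ a ∈ stage S n, p a) (a : (inductiveLimit S).carrier) : p a := by
  refine closure_minimal ?_ h_closed (dense_iUnion_stage a)
  exact Set.iUnion_subset fun n a ha => h_stage n a ha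

theorem finiteDimensional_stage (n : ℕ) (hS : FiniteDimensional ℂ (S n)) :
    FiniteDimensional ℂ (stage S n) := by
  let V := Subalgebra.toSubmodule (S n).toSubalgebra
  have : FiniteDimensional ℂ V := hS
  exact FiniteDimensional.of_injective
    ((subtype S).toAlgHom.toLinearMap.restrict
      (p := Subalgebra.toSubmodule (stage S n).toSubalgebra) (q := V) fun _ h => h)
    fun a b h => Subtype.ext (subtype_injective (congrArg (fun v : V => (v : A)) h))

theorem isAF (hS : ∀ n, FiniteDimensional ℂ (S n)) : (inductiveLimit S).IsAF :=
  ⟨stage S, monotone_stage, fun n => finiteDimensional_stage n (hS n), dense_iUnion_stage⟩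

/-- A ⋆-homomorphism with values in the closure of `⋃ n, S n`, viewed as a map to the inductive
limit. -/
noncomputable def lift {B : Type*} [Semiring B] [Algebra ℂ B] [StarRing B]
    (ψ : B →⋆ₐ[ℂ] A) (hψ : ∀ b, ψ b ∈ closure (⋃ n, (S n : Set A))) :
    B →⋆ₐ[ℂ] (inductiveLimit S).carrier :=
  ψ.codRestrict _ fun b => by
    obtain ⟨a, ha⟩ := exists_subtype_eq_iff.2 (hψ b)
    rw [← ha]
    exact a.2

end inductiveLimit

theorem exists_closure_iUnion_eq_range {C D : UnitalCStarAlg} (hD : D.IsAF)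
    {j : D.carrier →⋆ₐ[ℂ] C.carrier} (hj : Isometry j) :
    ∃ S : ℕ → StarSubalgebra ℂ C.carrier, Monotone S ∧ (∀ n, FiniteDimensional ℂ (S n)) ∧
      (∀ n, S n ≤ j.range) ∧ closure (⋃ n, (S n : Set C.carrier)) = j.range := by
  obtain ⟨S, hmono, hfin, hdense⟩ := hD
  refine ⟨fun n => (S n).map j, fun m n h => StarSubalgebra.map_mono (hmono h), fun n => ?_,
    fun n => ?_, ?_⟩
  · exact Module.Finite.map (Subalgebra.toSubmodule (S n).toSubalgebra) j.toAlgHom.toLinearMap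
  · rintro _ ⟨a, -, rfl⟩
    exact ⟨a, rfl⟩
  · simp only [StarSubalgebra.coe_map, ← Set.image_iUnion]
    rw [hj.isClosedEmbedding.closure_image_eq, hdense.closure_eq, Set.image_univ]
    rfl

end InductiveLimit

/-! ### The limit algebra of a sequence of partitions -/

namespace IntervalPartition

variable {P : IntervalPartition}

/-- The algebra of complex step functions of `P`. -/
def stepAlgebra (P : IntervalPartition) : StarSubalgebra ℂ (LInf Ω) where
  carrier := {g | P.IsStep g}
  mul_mem' {f g} hf hg x := congrArg₂ (· * ·) (hf x) (hg x)
  add_mem' {f g} hf hg x := congrArg₂ (· + ·) (hf x) (hg x)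
  algebraMap_mem' c x := by simp [Algebra.algebraMap_eq_smul_one]
  star_mem' {g} hg x := congrArg star (hg x)

theorem stepAlgebra_mono : Monotone stepAlgebra := fun _ _ h _ hg => hg.mono h

instance (P : IntervalPartition) : FiniteDimensional ℂ P.stepAlgebra := by
  let values : P.stepAlgebra →ₗ[ℂ] P.Atom → ℂ :=
    { toFun g a := g.1 a
      map_add' _ _ := rfl
      map_smul' _ _ := rfl }
  refine FiniteDimensional.of_injective values fun f g hfg =>
    Subtype.ext (lp.ext (funext fun x => ?_))
  rw [← f.2 x, ← g.2 x]
  exact congrFun hfg (P.atom x)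

theorem compPerm_mem_stepAlgebra (P : IntervalPartition) :
    ∀ g ∈ P.stepAlgebra, ∀ σ ∈ P.translations, compPerm g σ ∈ P.stepAlgebra :=
  fun _ hg _ hσ => hg.comp_translation hσ

/-- The finite-dimensional algebra on `ℓ²(Ω)` generated by the step functions and the translations
of `P`. -/
noncomputable def algebra (P : IntervalPartition) : StarSubalgebra ℂ (L2 Ω →L[ℂ] L2 Ω) :=
  crossedAlgebra P.stepAlgebra P.translations P.compPerm_mem_stepAlgebra

theorem mulOp_mem_algebra {g : LInf Ω} (hg : g ∈ P.stepAlgebra) : mulOp g ∈ P.algebra :=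
  mulOp_mem_crossedAlgebra hg

theorem permOp_mem_algebra {σ : Equiv.Perm Ω} (hσ : σ ∈ P.translations) : permOp σ ∈ P.algebra :=
  permOp_mem_crossedAlgebra hσ

theorem algebra_mono : Monotone algebra := fun _ _ h =>
  crossedAlgebra_mono (stepAlgebra_mono h) (translations_mono h)

instance (P : IntervalPartition) : FiniteDimensional ℂ P.algebra :=
  finiteDimensional_crossedAlgebra

theorem diag_mem_stepAlgebra {a : L2 Ω →L[ℂ] L2 Ω} (ha : a ∈ P.algebra) :
    diag a ∈ P.stepAlgebra := by
  refine mem_submodule_of_mem_crossedAlgebra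
    (V := (Subalgebra.toSubmodule P.stepAlgebra.toSubalgebra).comap diag.toLinearMap)
    (fun g hg σ hσ x => ?_) ha
  have hfix : σ (P.left x) = P.left x ↔ σ x = x :=
    ⟨fun h => translation_eq_self hσ (by rw [left_translation hσ, h]),
      fun h => by rw [← left_translation hσ, h]⟩
  change diag (mulOp g * permOp σ) (P.left x) = diag (mulOp g * permOp σ) x
  rw [diag_mulOp_mul, lp.infty_coeFn_mul, Pi.mul_apply, Pi.mul_apply, hg x, diag_permOp_apply,
    diag_permOp_apply]
  by_cases h : σ x = x <;> simp only [hfix, h, if_true, if_false]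

end IntervalPartition

section Limits

variable (P : ℕ →o IntervalPartition)

/-- The uniform limits of step functions of the partitions `P n`. -/
noncomputable abbrev diagonalLimit : UnitalCStarAlg :=
  inductiveLimit ⟨fun n => (P n).stepAlgebra, IntervalPartition.stepAlgebra_mono.comp P.monotone⟩

/-- The C⋆-algebra on `ℓ²(Ω)` generated by the step functions and the translations of the
partitions `P n`. -/
noncomputable abbrev crossedLimit : UnitalCStarAlg :=
  inductiveLimit ⟨fun n => (P n).algebra, IntervalPartition.algebra_mono.comp P.monotone⟩

variable {P}

theorem isAF_diagonalLimit : (diagonalLimit P).IsAF :=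
  inductiveLimit.isAF fun n => inferInstanceAs (FiniteDimensional ℂ (P n).stepAlgebra)

theorem isAF_crossedLimit : (crossedLimit P).IsAF :=
  inductiveLimit.isAF fun n => inferInstanceAs (FiniteDimensional ℂ (P n).algebra)

theorem exists_coe_eq_mulOp {n : ℕ} {g : LInf Ω} (hg : g ∈ (P n).stepAlgebra) :
    ∃ m : (crossedLimit P).carrier, (m : L2 Ω →L[ℂ] L2 Ω) = mulOp g :=
  (inductiveLimit.exists_subtype_eq (IntervalPartition.mulOp_mem_algebra hg)).imp fun _ h => h.2

theorem exists_unitary_coe_eq_permOp {n : ℕ} {σ : Equiv.Perm Ω} (hσ : σ ∈ (P n).translations) :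
    ∃ u ∈ unitary (crossedLimit P).carrier, (u : L2 Ω →L[ℂ] L2 Ω) = permOp σ := by
  obtain ⟨u, -, hu⟩ := inductiveLimit.exists_subtype_eq (S := ⟨fun n => (P n).algebra, _⟩)
    (IntervalPartition.permOp_mem_algebra hσ)
  exact ⟨u, inductiveLimit.mem_unitary_iff.2 (hu ▸ permOp_mem_unitary σ), hu⟩

theorem measurable_diag (a : (crossedLimit P).carrier) :
    Measurable (diag (a : L2 Ω →L[ℂ] L2 Ω)) := by
  refine inductiveLimit.induction_on
    (p := fun a => Measurable (diag (a : L2 Ω →L[ℂ] L2 Ω)))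
    (IsSeqClosed.isClosed fun u a hu hua => ?_) (fun n a ha => ?_) a
  · have hcont (x : Ω) : Continuous fun a : (crossedLimit P).carrier =>
        diag (a : L2 Ω →L[ℂ] L2 Ω) x :=
      (lp.evalCLM ℂ (fun _ : Ω => ℂ) ⊤ x).continuous.comp
        (diag.continuous.comp inductiveLimit.isometry_subtype.continuous)
    exact measurable_of_tendsto_metrizable hu
      (tendsto_pi_nhds.2 fun x => ((hcont x).tendsto a).comp hua)
  · exact (IntervalPartition.diag_mem_stepAlgebra ha).measurable

theorem integrable_diag (a : (crossedLimit P).carrier) :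
    Integrable fun x => diag (a : L2 Ω →L[ℂ] L2 Ω) x :=
  .of_bound (measurable_diag a).aestronglyMeasurable ‖a‖
    (.of_forall fun x => norm_diag_apply_le (a : L2 Ω →L[ℂ] L2 Ω) x)

variable (P) in
/-- The tracial state of the limit algebra: the integral of the diagonal. -/
noncomputable def trace : (crossedLimit P).carrier →L[ℂ] ℂ :=
  LinearMap.mkContinuous
    { toFun a := ∫ x, diag (a : L2 Ω →L[ℂ] L2 Ω) x
      map_add' a b := integral_add (integrable_diag a) (integrable_diag b)
      map_smul' c a := integral_const_mul c _ } 1 fun a => by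
    refine (norm_integral_le_of_norm_le_const
      (.of_forall fun x => norm_diag_apply_le (a : L2 Ω →L[ℂ] L2 Ω) x)).trans_eq ?_
    rw [probReal_univ, mul_one, one_mul, inductiveLimit.norm_subtype]

theorem trace_apply (a : (crossedLimit P).carrier) :
    trace P a = ∫ x, diag (a : L2 Ω →L[ℂ] L2 Ω) x := rfl

theorem trace_conj_permOp {n : ℕ} {σ : Equiv.Perm Ω} (hσ : σ ∈ (P n).translations)
    {u : (crossedLimit P).carrier} (hu : (u : L2 Ω →L[ℂ] L2 Ω) = permOp σ)
    (a : (crossedLimit P).carrier) : trace P (u * a * star u) = trace P a := by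
  refine inductiveLimit.induction_on (p := fun a => trace P (u * a * star u) = trace P a)
    (isClosed_eq (by fun_prop) (by fun_prop)) (fun m a ha => ?_) a
  have hσ' : σ⁻¹ ∈ (P (max m n)).translations :=
    inv_mem (IntervalPartition.translations_mono (P.monotone (le_max_right m n)) hσ)
  have hstep : (P (max m n)).IsStep (diag (a : L2 Ω →L[ℂ] L2 Ω)) :=
    (IntervalPartition.diag_mem_stepAlgebra ha).mono (P.monotone (le_max_left m n))
  rw [trace_apply, trace_apply, ← hstep.integral_comp_translation hσ',
    inductiveLimit.subtype_mul, inductiveLimit.subtype_mul, inductiveLimit.subtype_star, hu,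
    diag_permOp_mul_mul_star]
  simp only [compPerm_apply]

theorem trace_mul_comm_of_eq_mulOp {g : LInf Ω} {m : (crossedLimit P).carrier}
    (hm : (m : L2 Ω →L[ℂ] L2 Ω) = mulOp g) (a : (crossedLimit P).carrier) :
    trace P (m * a) = trace P (a * m) := by
  rw [trace_apply, trace_apply, inductiveLimit.subtype_mul, inductiveLimit.subtype_mul, hm,
    diag_mulOp_mul, diag_mul_mulOp]

theorem exists_trace_mul_comm {n : ℕ} {g : LInf Ω} (hg : g ∈ (P n).stepAlgebra)
    {σ : Equiv.Perm Ω} (hσ : σ ∈ (P n).translations) :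
    ∃ b : (crossedLimit P).carrier, (b : L2 Ω →L[ℂ] L2 Ω) = mulOp g * permOp σ ∧
      ∀ a, trace P (a * b) = trace P (b * a) := by
  obtain ⟨m, hm⟩ := exists_coe_eq_mulOp hg
  obtain ⟨u, hu, huσ⟩ := exists_unitary_coe_eq_permOp hσ
  refine ⟨m * u, by rw [inductiveLimit.subtype_mul, hm, huσ], fun a => ?_⟩
  calc trace P (a * (m * u)) = trace P (u * (a * (m * u)) * star u) :=
        (trace_conj_permOp hσ huσ _).symm
    _ = trace P (u * a * m) := by
        rw [mul_assoc, mul_assoc a, mul_assoc m, Unitary.mul_star_self_of_mem hu, mul_one,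
          mul_assoc]
    _ = trace P (m * u * a) := by rw [← trace_mul_comm_of_eq_mulOp hm, mul_assoc]

theorem trace_mul_comm (a b : (crossedLimit P).carrier) :
    trace P (a * b) = trace P (b * a) := by
  let center : Submodule ℂ (crossedLimit P).carrier :=
    { carrier := {b | ∀ a, trace P (a * b) = trace P (b * a)}
      add_mem' {b c} hb hc a := by rw [mul_add, add_mul, map_add, map_add, hb, hc]
      zero_mem' a := by rw [mul_zero, zero_mul]
      smul_mem' c b hb a := by rw [mul_smul_comm, smul_mul_assoc, map_smul, map_smul, hb] }
  refine inductiveLimit.induction_on (p := fun b => ∀ a, trace P (a * b) = trace P (b * a))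
    ?_ (fun n b hb => ?_) b a
  · simp only [Set.ofPred_forall]
    exact isClosed_iInter fun a => isClosed_eq (by fun_prop) (by fun_prop)
  · obtain ⟨b', hb', heq⟩ : (b : L2 Ω →L[ℂ] L2 Ω) ∈
        center.map (inductiveLimit.subtype _).toAlgHom.toLinearMap := by
      refine mem_submodule_of_mem_crossedAlgebra (h := (P n).compPerm_mem_stepAlgebra)
        (fun g hg σ hσ => ?_) hb
      obtain ⟨c, hc, hcomm⟩ := exists_trace_mul_comm hg hσ
      exact ⟨c, hcomm, hc⟩
    rwa [← inductiveLimit.subtype_injective heq]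

theorem trace_star_mul_self (a : (crossedLimit P).carrier) :
    trace P (star a * a) =
      ((∫ x, ‖(a : L2 Ω →L[ℂ] L2 Ω) (basisVector x)‖ ^ 2 : ℝ) : ℂ) := by
  simp only [trace_apply, inductiveLimit.subtype_mul, inductiveLimit.subtype_star,
    diag_star_mul_self_apply]
  exact integral_ofReal

theorem isTracialState_trace : (crossedLimit P).IsTracialState (trace P).toLinearMap := by
  refine ⟨?_, fun a => ?_, trace_mul_comm⟩
  · change trace P 1 = 1
    rw [trace_apply, map_one, diag_one]
    simp
  · change 0 ≤ trace P (star a * a)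
    rw [trace_star_mul_self, Complex.zero_le_real]
    exact integral_nonneg fun x => by positivity

theorem norm_diag_sub_diag_le {n : ℕ} (a : (crossedLimit P).carrier)
    {b : (crossedLimit P).carrier} (hb : (b : L2 Ω →L[ℂ] L2 Ω) ∈ (P n).algebra) {x y : Ω}
    (hxy : (P n).left x = (P n).left y) :
    ‖diag (a : L2 Ω →L[ℂ] L2 Ω) x - diag (a : L2 Ω →L[ℂ] L2 Ω) y‖ ≤ ‖a - b‖ + ‖a - b‖ := by
  have hsub (z : Ω) : diag ((a - b : (crossedLimit P).carrier) : L2 Ω →L[ℂ] L2 Ω) z =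
      diag (a : L2 Ω →L[ℂ] L2 Ω) z - diag (b : L2 Ω →L[ℂ] L2 Ω) z := by
    rw [map_sub, map_sub]
    rfl
  have hconst : diag (b : L2 Ω →L[ℂ] L2 Ω) x = diag (b : L2 Ω →L[ℂ] L2 Ω) y := by
    have hstep := IntervalPartition.diag_mem_stepAlgebra hb
    rw [← hstep x, ← hstep y, hxy]
  calc ‖diag (a : L2 Ω →L[ℂ] L2 Ω) x - diag (a : L2 Ω →L[ℂ] L2 Ω) y‖
      = ‖diag ((a - b : (crossedLimit P).carrier) : L2 Ω →L[ℂ] L2 Ω) x -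
          diag ((a - b : (crossedLimit P).carrier) : L2 Ω →L[ℂ] L2 Ω) y‖ := by
        rw [hsub, hsub, hconst, sub_sub_sub_cancel_right]
    _ ≤ ‖a - b‖ + ‖a - b‖ :=
        norm_sub_le_of_le (norm_diag_apply_le _ x) (norm_diag_apply_le _ y)

/- A null set of exceptions contains no atom, as every atom has positive measure. -/
theorem diag_eq_zero_of_ae_eq_zero {a : (crossedLimit P).carrier}
    (ha : ∀ᵐ x, diag (a : L2 Ω →L[ℂ] L2 Ω) x = 0) (x : Ω) :
    diag (a : L2 Ω →L[ℂ] L2 Ω) x = 0 := by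
  refine norm_le_zero_iff.1 (le_of_forall_pos_le_add fun ε hε => ?_)
  obtain ⟨b, hb, hab⟩ := inductiveLimit.dense_iUnion_stage.exists_dist_lt a (half_pos hε)
  obtain ⟨n, hn⟩ := Set.mem_iUnion.1 hb
  have hvol : volume ((P n).atom ⁻¹' {(P n).atom x}) ≠ 0 := fun h => by
    have := IntervalPartition.volume_real_atom_preimage_singleton ((P n).atom x)
    rw [measureReal_def, h, ENNReal.toReal_zero] at this
    exact ((P n).length_pos _).ne this
  obtain ⟨y, hy, hya⟩ := ((frequently_ae_mem_iff.2 hvol).and_eventually ha).exists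
  have := norm_diag_sub_diag_le a hn (IntervalPartition.atom_eq_atom_iff.1 hy).symm
  rw [hya, sub_zero, ← dist_eq_norm] at this
  linarith

theorem eq_zero_of_trace_star_mul_self_eq_zero {a : (crossedLimit P).carrier}
    (ha : trace P (star a * a) = 0) : a = 0 := by
  have hdiag (x : Ω) : diag ((star a * a : (crossedLimit P).carrier) : L2 Ω →L[ℂ] L2 Ω) x =
      ((‖(a : L2 Ω →L[ℂ] L2 Ω) (basisVector x)‖ ^ 2 : ℝ) : ℂ) := by
    rw [inductiveLimit.subtype_mul, inductiveLimit.subtype_star, diag_star_mul_self_apply]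
  have hint : Integrable fun x => ‖(a : L2 Ω →L[ℂ] L2 Ω) (basisVector x)‖ ^ 2 := by
    simpa only [hdiag, RCLike.re_to_complex, Complex.ofReal_re] using
      (integrable_diag (star a * a)).re
  rw [trace_star_mul_self, Complex.ofReal_eq_zero,
    integral_eq_zero_iff_of_nonneg (fun x => by positivity) hint] at ha
  have hzero := diag_eq_zero_of_ae_eq_zero (a := star a * a)
    (ha.mono fun x hx => (hdiag x).trans (congrArg _ hx))
  refine inductiveLimit.subtype_injective
    ((eq_zero_of_forall_basisVector fun x => ?_).trans (map_zero _).symm)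
  have := hdiag x
  rw [hzero x] at this
  simpa using this.symm

end Limits

/-! ### Averaging to the diagonal -/

theorem mulOp_mem_unitary {ι : Type*} {g : LInf ι} (hg : ∀ x, ‖g x‖ = 1) :
    mulOp g ∈ unitary (L2 ι →L[ℂ] L2 ι) := by
  have hgg : star g * g = 1 := lp.ext <| funext fun x => by
    change star (g x) * g x = 1
    rw [Complex.star_def, Complex.conj_mul', hg, Complex.ofReal_one, one_pow]
  rw [Unitary.mem_iff, ← map_star, ← map_mul, ← map_mul, mul_comm g, hgg, map_one]
  exact ⟨rfl, rfl⟩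

theorem inv_mul_sum_pow_eq_ite {K : ℕ} (hK : K ≠ 0) {z : ℂ} (hz : z ^ K = 1) :
    (K : ℂ)⁻¹ * ∑ k ∈ Finset.range K, z ^ k = if z = 1 then 1 else 0 := by
  split_ifs with h
  · simp [h, hK]
  · rw [geom_sum_eq h, hz, sub_self, zero_div, mul_zero]

namespace IntervalPartition

variable {P : IntervalPartition}

/-- `g` is unimodular, of finite order `K`, and separates the atoms of `P`, so that averaging over
the powers of `g` kills every off-diagonal entry. -/
structure IsSeparating (P : IntervalPartition) (g : LInf Ω) (K : ℕ) : Prop where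
  mem_stepAlgebra : g ∈ P.stepAlgebra
  ne_zero : K ≠ 0
  pow_eq_one : ∀ x, g x ^ K = 1
  left_eq_left : ∀ x y, g x = g y → P.left x = P.left y

theorem IsSeparating.norm_apply {g : LInf Ω} {K : ℕ} (hg : P.IsSeparating g K) (x : Ω) :
    ‖g x‖ = 1 :=
  Complex.norm_eq_one_of_pow_eq_one (hg.pow_eq_one x) hg.ne_zero

theorem exists_isSeparating (P : IntervalPartition) : ∃ g K, P.IsSeparating g K := by
  let K := Fintype.card P.Atom
  have : Nonempty P.Atom := ⟨P.atom ⟨0, by simp⟩⟩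
  have hK : K ≠ 0 := Fintype.card_ne_zero
  have hζ := Complex.isPrimitiveRoot_exp K hK
  set ζ := Complex.exp (2 * Real.pi * Complex.I / K)
  let e : P.Atom ≃ Fin K := Fintype.equivFin P.Atom
  have hbdd : BddAbove (Set.range fun x => ‖ζ ^ (e (P.atom x) : ℕ)‖) :=
    ⟨1, by rintro _ ⟨x, rfl⟩; simp [hζ.norm'_eq_one hK]⟩
  refine ⟨⟨fun x => ζ ^ (e (P.atom x) : ℕ), memℓp_infty hbdd⟩, K, fun x => ?_, hK, fun x => ?_,
    fun x y hxy => ?_⟩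
  · exact congrArg (fun a => ζ ^ (e a : ℕ)) (atom_coe (P.atom x))
  · change (ζ ^ _) ^ K = 1
    rw [pow_right_comm, hζ.pow_eq_one, one_pow]
  · exact atom_eq_atom_iff.1 (e.injective (Fin.ext (hζ.pow_inj (e _).2 (e _).2 hxy)))

theorem IsSeparating.average_mulOp_mul_permOp {g : LInf Ω} {K : ℕ} (hg : P.IsSeparating g K)
    (f : LInf Ω) {σ : Equiv.Perm Ω} (hσ : σ ∈ P.translations) :
    (K : ℂ)⁻¹ • ∑ k ∈ Finset.range K,
      mulOp g ^ k * (mulOp f * permOp σ) * star (mulOp g ^ k) =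
        mulOp (diag (mulOp f * permOp σ)) := by
  classical
  refine ext_apply fun v x => ?_
  have hterm (k : ℕ) : (mulOp g ^ k * (mulOp f * permOp σ) * star (mulOp g ^ k)) v x =
      (g x * star (g (σ⁻¹ x))) ^ k * (f x * v (σ⁻¹ x)) := by
    rw [← map_pow, ← map_star]
    change (g ^ k) x * (f x * (star (g ^ k) (σ⁻¹ x) * v (σ⁻¹ x))) = _
    rw [lp.star_apply, lp.infty_coeFn_pow, Pi.pow_apply, Pi.pow_apply, star_pow, mul_pow]
    ring
  have hone : g x * star (g (σ⁻¹ x)) = 1 ↔ σ x = x := by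
    have hstar : g (σ⁻¹ x) * star (g (σ⁻¹ x)) = 1 := by
      rw [Complex.star_def, Complex.mul_conj', hg.norm_apply, Complex.ofReal_one, one_pow]
    rw [← hstar, mul_left_inj' (right_ne_zero_of_mul_eq_one hstar)]
    refine ⟨fun h => ?_, fun h => by rw [Equiv.Perm.inv_eq_iff_eq.2 h.symm]⟩
    have := translation_eq_self (inv_mem hσ) (hg.left_eq_left _ _ h).symm
    exact (Equiv.Perm.inv_eq_iff_eq.1 this).symm
  have hpow : (g x * star (g (σ⁻¹ x))) ^ K = 1 := by
    rw [mul_pow, ← star_pow, hg.pow_eq_one, hg.pow_eq_one, star_one, mul_one]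
  have hsum : ((K : ℂ)⁻¹ • ∑ k ∈ Finset.range K,
      mulOp g ^ k * (mulOp f * permOp σ) * star (mulOp g ^ k)) v x =
        ((K : ℂ)⁻¹ * ∑ k ∈ Finset.range K, (g x * star (g (σ⁻¹ x))) ^ k) * (f x * v (σ⁻¹ x)) := by
    rw [mul_assoc, Finset.sum_mul, smul_apply, sum_apply,
      lp.coeFn_smul, lp.coeFn_sum, Pi.smul_apply, Finset.sum_apply, smul_eq_mul]
    simp only [hterm]
  rw [hsum, inv_mul_sum_pow_eq_ite hg.ne_zero hpow, mulOp_apply, diag_mulOp_mul,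
    lp.infty_coeFn_mul, Pi.mul_apply, diag_permOp_apply]
  by_cases h : σ x = x
  · rw [if_pos (hone.2 h), if_pos h, Equiv.Perm.inv_eq_iff_eq.2 h.symm, one_mul, mul_one]
  · rw [if_neg (mt hone.1 h), if_neg h, zero_mul, mul_zero, zero_mul]

theorem IsSeparating.average_eq_mulOp_diag {g : LInf Ω} {K : ℕ} (hg : P.IsSeparating g K)
    {a : L2 Ω →L[ℂ] L2 Ω} (ha : a ∈ P.algebra) :
    (K : ℂ)⁻¹ • ∑ k ∈ Finset.range K, mulOp g ^ k * a * star (mulOp g ^ k) = mulOp (diag a) := by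
  let average : (L2 Ω →L[ℂ] L2 Ω) →ₗ[ℂ] L2 Ω →L[ℂ] L2 Ω :=
    (K : ℂ)⁻¹ • ∑ k ∈ Finset.range K,
      LinearMap.mulLeftRight ℂ (mulOp g ^ k, star (mulOp g ^ k))
  have haverage (b : L2 Ω →L[ℂ] L2 Ω) : average b =
      (K : ℂ)⁻¹ • ∑ k ∈ Finset.range K, mulOp g ^ k * b * star (mulOp g ^ k) := by
    simp [average, LinearMap.sum_apply]
  rw [← haverage]
  refine mem_submodule_of_mem_crossedAlgebra (h := P.compPerm_mem_stepAlgebra)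
    (V := LinearMap.eqLocus average (mulOp.toAlgHom.toLinearMap ∘ₗ diag.toLinearMap))
    (fun f _ σ hσ => ?_) ha
  exact (haverage _).trans (hg.average_mulOp_mul_permOp f hσ)

end IntervalPartition

theorem exists_mem_unitaryHull_eq_mulOp_diag {P : ℕ →o IntervalPartition} {n : ℕ}
    {a : (crossedLimit P).carrier} (ha : (a : L2 Ω →L[ℂ] L2 Ω) ∈ (P n).algebra) :
    ∃ b ∈ unitaryHull a, (b : L2 Ω →L[ℂ] L2 Ω) = mulOp (diag (a : L2 Ω →L[ℂ] L2 Ω)) := by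
  obtain ⟨g, K, hg⟩ := (P n).exists_isSeparating
  obtain ⟨u, hu⟩ := exists_coe_eq_mulOp hg.mem_stepAlgebra
  have hu' : u ∈ unitary (crossedLimit P).carrier :=
    inductiveLimit.mem_unitary_iff.2 (hu ▸ mulOp_mem_unitary hg.norm_apply)
  refine ⟨_, inv_smul_sum_conj_pow_mem_unitaryHull hu' hg.ne_zero a, ?_⟩
  rw [← hg.average_eq_mulOp_diag ha, map_smul, map_sum]
  simp only [inductiveLimit.subtype_mul, inductiveLimit.subtype_star, map_pow, hu]

/-! ### Averaging diagonals to scalars -/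

/-- The index of the interval `[j / N, (j + 1) / N)` containing `x`, read modulo `N`. -/
noncomputable def blockIndex (N : ℕ) (x : Ω) : ZMod N := (⌊N * (x : ℝ)⌋₊ : ℕ)

section Blocks

variable {N : ℕ} [NeZero N] {P : IntervalPartition} {σ : Equiv.Perm Ω}

theorem floor_mul_lt (x : Ω) : ⌊N * (x : ℝ)⌋₊ < N := by
  have hN : (0 : ℝ) < N := by exact_mod_cast NeZero.pos N
  rw [Nat.floor_lt (mul_nonneg hN.le x.2.1)]
  exact mul_lt_of_lt_one_right hN x.2.2

theorem val_blockIndex (x : Ω) : (blockIndex N x).val = ⌊N * (x : ℝ)⌋₊ :=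
  ZMod.val_natCast_of_lt (floor_mul_lt x)

theorem blockIndex_eq_iff {x : Ω} {j : ZMod N} :
    blockIndex N x = j ↔ (x : ℝ) ∈ Set.Ico ((j.val : ℝ) / N) ((j.val + 1) / N) := by
  have hN : (0 : ℝ) < N := by exact_mod_cast NeZero.pos N
  rw [← (ZMod.val_injective N).eq_iff, val_blockIndex, Nat.floor_eq_iff (mul_nonneg hN.le x.2.1),
    Set.mem_Ico, div_le_iff₀' hN, lt_div_iff₀' hN]

theorem volume_real_blockIndex_preimage_singleton (j : ZMod N) :
    volume.real (blockIndex N ⁻¹' {j}) = 1 / N := by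
  have hN : (0 : ℝ) < N := by exact_mod_cast NeZero.pos N
  have hset : blockIndex N ⁻¹' {j} =
      Subtype.val ⁻¹' Set.Ico ((j.val : ℝ) / N) ((j.val + 1) / N) :=
    Set.ext fun x => blockIndex_eq_iff
  have hsub : Set.Ico ((j.val : ℝ) / N) ((j.val + 1) / N) ⊆ Set.Ico 0 1 := by
    refine Set.Ico_subset_Ico (by positivity) ((div_le_one hN).2 ?_)
    exact_mod_cast ZMod.val_lt j
  rw [hset, measureReal_def, volume_preimage_coe nullMeasurableSet_Ico measurableSet_Ico,
    Set.inter_eq_left.2 hsub, Real.volume_Ico, ← sub_div, add_sub_cancel_left,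
    ENNReal.toReal_ofReal (by positivity)]

theorem isStep_blockIndex (hP : ∀ j < N, (j / N : ℝ) ∈ P.endpoints) :
    P.IsStep (blockIndex N) := fun x => by
  have hx := blockIndex_eq_iff.1 (Eq.refl (blockIndex N x))
  exact blockIndex_eq_iff.2
    ⟨IntervalPartition.le_left (hP _ (ZMod.val_lt _)) hx.1,
      (Subtype.coe_le_coe.2 (P.left_le x)).trans_lt hx.2⟩

theorem exists_translation_blockIndex (hP : P.IsIndependent)
    (hN : ∀ j < N, (j / N : ℝ) ∈ P.endpoints) :
    ∃ σ ∈ P.translations, ∀ x, blockIndex N (σ x) = blockIndex N x + 1 := by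
  have hstep := isStep_blockIndex hN
  refine hP.exists_translation_comp_eq hstep (fun x => congrArg (· + 1) (hstep x)) fun j => ?_
  have hpre : (fun x => blockIndex N x + 1) ⁻¹' {j} = blockIndex N ⁻¹' {j - 1} :=
    Set.ext fun x => eq_sub_iff_add_eq.symm
  rw [hpre, volume_real_blockIndex_preimage_singleton, volume_real_blockIndex_preimage_singleton]

theorem left_eq_left_or_mem_image_blockIndex {x y : Ω} (hxy : blockIndex N x = blockIndex N y) :
    P.left x = P.left y ∨ blockIndex N x ∈ Set.range fun a : P.Atom => blockIndex N a := by
  wlog hle : x ≤ y generalizing x y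
  · rw [hxy, eq_comm (a := P.left x)]
    exact this hxy.symm (le_of_not_ge hle)
  by_cases hlt : P.left y ≤ x
  · exact .inl (IntervalPartition.left_eq_left_of_mem_Ico
      ⟨hlt, (Subtype.coe_le_coe.2 hle).trans_lt (P.lt_right y)⟩)
  · have hx := blockIndex_eq_iff.1 (Eq.refl (blockIndex N x))
    have hy := blockIndex_eq_iff.1 hxy.symm
    exact .inr ⟨P.atom y, blockIndex_eq_iff.2
      ⟨hx.1.trans (le_of_not_ge hlt), (Subtype.coe_le_coe.2 (P.left_le y)).trans_lt hy.2⟩⟩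

/-- The point of block `j` on the orbit of `x` under a permutation that shifts the blocks. -/
noncomputable def orbitPoint (σ : Equiv.Perm Ω) (x : Ω) (j : ZMod N) : Ω :=
  (σ ^ (blockIndex N x - j).val)⁻¹ x

theorem blockIndex_orbitPoint (hσ : ∀ x, blockIndex N (σ x) = blockIndex N x + 1) (x : Ω)
    (j : ZMod N) : blockIndex N (orbitPoint σ x j) = j := by
  have hpow (k : ℕ) (y : Ω) : blockIndex N ((σ ^ k) y) = blockIndex N y + k := by
    induction k with
    | zero => simp
    | succ k ih => rw [pow_succ', Equiv.Perm.mul_apply, hσ, ih, Nat.cast_succ, add_assoc]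
  have := hpow (blockIndex N x - j).val (orbitPoint σ x j)
  rw [orbitPoint, ← Equiv.Perm.mul_apply, mul_inv_cancel, Equiv.Perm.one_apply,
    ZMod.natCast_zmod_val] at this
  rw [orbitPoint]
  linear_combination -this

theorem sum_orbit_eq_sum_orbitPoint {F : Type*} [AddCommMonoid F] (f : Ω → F) (x : Ω) :
    ∑ k ∈ Finset.range N, f ((σ ^ k)⁻¹ x) = ∑ j : ZMod N, f (orbitPoint σ x j) := by
  calc ∑ k ∈ Finset.range N, f ((σ ^ k)⁻¹ x)
      = ∑ j : ZMod N, f ((σ ^ j.val)⁻¹ x) :=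
        Finset.sum_bij' (fun k _ => (k : ZMod N)) (fun j _ => j.val) (by simp)
          (by simp [ZMod.val_lt]) (fun k hk => ZMod.val_natCast_of_lt (Finset.mem_range.1 hk))
          (by simp) (fun k hk => by rw [ZMod.val_natCast_of_lt (Finset.mem_range.1 hk)])
    _ = ∑ j : ZMod N, f (orbitPoint σ x j) :=
        ((Equiv.subLeft (blockIndex N x)).sum_comp fun j => f ((σ ^ j.val)⁻¹ x)).symm

/- Two orbits visit the same blocks, and a step function of `P` is constant on all but at most
`card P.Atom` of them. -/
theorem norm_sum_orbit_sub_le (hσ : ∀ x, blockIndex N (σ x) = blockIndex N x + 1) {g : LInf Ω}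
    (hg : g ∈ P.stepAlgebra) (x y : Ω) :
    ‖∑ k ∈ Finset.range N, g ((σ ^ k)⁻¹ x) - ∑ k ∈ Finset.range N, g ((σ ^ k)⁻¹ y)‖ ≤
      Fintype.card P.Atom * (‖g‖ + ‖g‖) := by
  classical
  let split : Finset (ZMod N) := Finset.univ.image fun a : P.Atom => blockIndex N a
  rw [sum_orbit_eq_sum_orbitPoint g, sum_orbit_eq_sum_orbitPoint g, ← Finset.sum_sub_distrib,
    ← Finset.sum_subset (Finset.subset_univ split)]
  · refine (norm_sum_le_of_le split fun j _ => norm_sub_le_of_le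
      (lp.norm_apply_le_norm (by simp) g _) (lp.norm_apply_le_norm (by simp) g _)).trans ?_
    rw [Finset.sum_const, nsmul_eq_mul]
    gcongr
    exact Finset.card_image_le
  · intro j _ hj
    have hblock := blockIndex_orbitPoint hσ (j := j)
    have := left_eq_left_or_mem_image_blockIndex (P := P) ((hblock x).trans (hblock y).symm)
    rw [hblock] at this
    rcases this with hleft | ⟨a, ha⟩
    · rw [← hg (orbitPoint σ x j), hleft, hg, sub_self]
    · exact absurd (Finset.mem_image.2 ⟨a, Finset.mem_univ a, ha⟩) hj

theorem exists_norm_average_sub_smul_one_le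
    (hσ : ∀ x, blockIndex N (σ x) = blockIndex N x + 1) {g : LInf Ω} (hg : g ∈ P.stepAlgebra) :
    ∃ z : ℂ, ‖(N : ℂ)⁻¹ • ∑ k ∈ Finset.range N,
      permOp σ ^ k * mulOp g * star (permOp σ ^ k) - z • 1‖ ≤
        Fintype.card P.Atom * (‖g‖ + ‖g‖) / N := by
  let z : ℂ := (N : ℂ)⁻¹ * ∑ k ∈ Finset.range N, g ((σ ^ k)⁻¹ ⟨0, by simp⟩)
  let average : LInf Ω := (N : ℂ)⁻¹ • ∑ k ∈ Finset.range N, compPerm g (σ ^ k)⁻¹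
  have haverage (x : Ω) : average x = (N : ℂ)⁻¹ * ∑ k ∈ Finset.range N, g ((σ ^ k)⁻¹ x) := by
    rw [lp.coeFn_smul, Pi.smul_apply, lp.coeFn_sum, Finset.sum_apply, smul_eq_mul]
    rfl
  refine ⟨z, ?_⟩
  calc ‖(N : ℂ)⁻¹ • ∑ k ∈ Finset.range N,
        permOp σ ^ k * mulOp g * star (permOp σ ^ k) - z • 1‖
      = ‖mulOp (average - z • 1)‖ := by
        simp only [average, map_sub, map_smul, map_sum, map_one, ← map_pow,
          permOp_mul_mulOp_mul_star_permOp]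
    _ ≤ ‖average - z • 1‖ := NonUnitalStarAlgHom.norm_apply_le mulOp _
    _ ≤ Fintype.card P.Atom * (‖g‖ + ‖g‖) / N := by
        refine lp.norm_le_of_forall_le (by positivity) fun x => ?_
        have hx : (average - z • 1) x = (N : ℂ)⁻¹ * (∑ k ∈ Finset.range N, g ((σ ^ k)⁻¹ x) -
            ∑ k ∈ Finset.range N, g ((σ ^ k)⁻¹ ⟨0, by simp⟩)) := by
          change average x - z * 1 = _
          rw [haverage, mul_one, mul_sub]
        rw [hx, norm_mul, norm_inv, Complex.norm_natCast, inv_mul_eq_div]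
        gcongr
        exact norm_sum_orbit_sub_le hσ hg x _

end Blocks

theorem exists_forall_div_mem_endpoints {P : ℕ →o IntervalPartition}
    (hrat : ∀ q : ℚ, (q : ℝ) ∈ Set.Ico 0 1 → ∃ n, (q : ℝ) ∈ (P n).endpoints) (N : ℕ) :
    ∃ n, ∀ j < N, (j / N : ℝ) ∈ (P n).endpoints := by
  have hj : ∀ j < N, ∃ n, (j / N : ℝ) ∈ (P n).endpoints := fun j hj => by
    have := hrat (j / N)
    push_cast at this
    exact this ⟨by positivity, (div_lt_one (by exact_mod_cast j.zero_le.trans_lt hj)).2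
      (by exact_mod_cast hj)⟩
  choose! n hn using hj
  refine ⟨(Finset.range N).sup n, fun j hj => ?_⟩
  exact (P.monotone (Finset.le_sup (Finset.mem_range.2 hj))).1 (hn j hj)

theorem hasDixmierProperty_crossedLimit {P : ℕ →o IntervalPartition}
    (hP : ∀ n, (P n).IsIndependent)
    (hrat : ∀ q : ℚ, (q : ℝ) ∈ Set.Ico 0 1 → ∃ n, (q : ℝ) ∈ (P n).endpoints) :
    HasDixmierProperty (crossedLimit P).carrier := by
  refine hasDixmierProperty_of_dense inductiveLimit.dense_iUnion_stage fun a ha ε hε => ?_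
  obtain ⟨n, hn⟩ := Set.mem_iUnion.1 ha
  obtain ⟨b, hba, hb⟩ := exists_mem_unitaryHull_eq_mulOp_diag hn
  set g := diag (a : L2 Ω →L[ℂ] L2 Ω)
  have hg : g ∈ (P n).stepAlgebra := IntervalPartition.diag_mem_stepAlgebra hn
  obtain ⟨N, hN⟩ := exists_nat_gt (Fintype.card (P n).Atom * (‖g‖ + ‖g‖) / ε)
  have hN₀ : (0 : ℝ) < N := (by positivity : (0 : ℝ) ≤ _).trans_lt hN
  have : NeZero N := ⟨by exact_mod_cast hN₀.ne'⟩
  obtain ⟨m, hm⟩ := exists_forall_div_mem_endpoints hrat N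
  obtain ⟨σ, hσ, hshift⟩ := exists_translation_blockIndex (hP m) hm
  obtain ⟨u, hu, huσ⟩ := exists_unitary_coe_eq_permOp (P := P) hσ
  obtain ⟨z, hz⟩ := exists_norm_average_sub_smul_one_le hshift hg
  refine ⟨_, unitaryHull_subset_of_mem hba
    (inv_smul_sum_conj_pow_mem_unitaryHull hu (NeZero.ne N) b), z, ?_⟩
  rw [← inductiveLimit.norm_subtype, map_sub, map_smul, map_smul, map_sum, map_one]
  simp only [inductiveLimit.subtype_mul, inductiveLimit.subtype_star, map_pow, huσ, hb]
  exact hz.trans_lt ((div_lt_comm₀ hε hN₀).1 hN)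

/-! ### Coding towers -/

section Quantile

/-- The quantile function of a probability measure `ν` on `ℕ`: it lays out the values of `ν` in
increasing order as consecutive intervals of `Ω`, and thereby pushes Lebesgue measure to `ν`. -/
noncomputable def quantile (ν : Measure ℕ) (x : Ω) : ℕ := sInf {k | (x : ℝ) < ν.real (Set.Iic k)}

variable {ν : Measure ℕ} [IsProbabilityMeasure ν] {x : Ω}

theorem lt_measureReal_Iic_quantile (ν : Measure ℕ) [IsProbabilityMeasure ν] (x : Ω) :
    (x : ℝ) < ν.real (Set.Iic (quantile ν x)) := by
  have h_tendsto : Tendsto (fun k => ν.real (Set.Iic k)) atTop (nhds 1) := by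
    have h := (ENNReal.tendsto_toReal (measure_ne_top ν _)).comp (tendsto_measure_Iic_atTop ν)
    rwa [measure_univ, ENNReal.toReal_one] at h
  exact Nat.sInf_mem (s := {k | (x : ℝ) < ν.real (Set.Iic k)})
    (h_tendsto.eventually_const_lt x.2.2).exists

theorem quantile_le_iff {k : ℕ} : quantile ν x ≤ k ↔ (x : ℝ) < ν.real (Set.Iic k) :=
  ⟨fun h => (lt_measureReal_Iic_quantile ν x).trans_le
    (measureReal_mono (Set.Iic_subset_Iic.2 h)), fun h => Nat.sInf_le h⟩

theorem measureReal_Iio_quantile_le (ν : Measure ℕ) [IsProbabilityMeasure ν] (x : Ω) :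
    ν.real (Set.Iio (quantile ν x)) ≤ x := by
  cases hk : quantile ν x with
  | zero => simpa using x.2.1
  | succ k =>
    rw [← Order.succ_eq_add_one, Order.Iio_succ, ← not_lt, ← quantile_le_iff, hk, not_le]
    exact k.lt_succ_self

theorem measurable_quantile (ν : Measure ℕ) [IsProbabilityMeasure ν] : Measurable (quantile ν) := by
  refine measurable_of_Iic fun k => ?_
  have : quantile ν ⁻¹' Set.Iic k = (↑) ⁻¹' Set.Iio (ν.real (Set.Iic k)) :=
    Set.ext fun _ => quantile_le_iff
  rw [this]
  exact measurable_subtype_coe measurableSet_Iio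

theorem measurePreserving_quantile (ν : Measure ℕ) [IsProbabilityMeasure ν] :
    MeasurePreserving (quantile ν) volume ν := by
  refine ⟨measurable_quantile ν, ?_⟩
  have := Measure.isProbabilityMeasure_map (μ := volume) (measurable_quantile ν).aemeasurable
  refine Measure.ext_of_Iic _ _ fun k => ?_
  rw [Measure.map_apply (measurable_quantile ν) measurableSet_Iic]
  have : quantile ν ⁻¹' Set.Iic k = (↑) ⁻¹' Set.Iio (ν.real (Set.Iic k)) :=
    Set.ext fun _ => quantile_le_iff
  have h_inter : Set.Ico (0 : ℝ) 1 ∩ Set.Iio (ν.real (Set.Iic k)) =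
      Set.Ico 0 (ν.real (Set.Iic k)) := by
    rw [Set.Ico_inter_Iio, min_eq_right measureReal_le_one]
  rw [this, Measure.Subtype.volume_def, comap_subtype_coe_apply measurableSet_Ico,
    Subtype.image_preimage_coe, h_inter, Real.volume_Ico, sub_zero, ofReal_measureReal]

theorem isStep_quantile {P : IntervalPartition}
    (hP : ∀ k, ν.real (Set.Iic k) ∈ P.endpoints) : P.IsStep (quantile ν) := fun x => by
  have h (k : ℕ) : quantile ν (P.left x) ≤ k ↔ quantile ν x ≤ k := by
    rw [quantile_le_iff, quantile_le_iff, ← not_le, ← not_le,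
      IntervalPartition.le_iff_le (P.left_left x) (hP k)]
  exact le_antisymm ((h _).2 le_rfl) ((h _).1 le_rfl)

end Quantile

section Codes

variable {X : Type*}

/-- The function `e` refines `c` compatibly with the order: `c` is a monotone function of `e`. -/
def OrderRefines (e c : X → ℕ) : Prop := ∀ ⦃p p'⦄, e p ≤ e p' → c p ≤ c p'

theorem OrderRefines.factorsThrough {c e : X → ℕ} (h : OrderRefines e c) : c.FactorsThrough e :=
  fun _ _ hp => le_antisymm (h hp.le) (h hp.ge)

theorem OrderRefines.trans {c d e : X → ℕ} (h : OrderRefines e d) (h' : OrderRefines d c) :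
    OrderRefines e c := fun _ _ hp => h' (h hp)

theorem orderRefines_of_le {C : ℕ → X → ℕ} (h : ∀ n, OrderRefines (C (n + 1)) (C n))
    {m n : ℕ} (hmn : m ≤ n) : OrderRefines (C n) (C m) :=
  Nat.le_induction (fun _ _ => id) (fun k _ ih => (h k).trans ih) n hmn

variable [MeasurableSpace X] {μ : Measure X} {c e : SimpleFunc X ℕ} {x : Ω} {p : X}

theorem measureReal_map_code (s : Set ℕ) : (μ.map c).real s = μ.real (c ⁻¹' s) :=
  map_measureReal_apply c.measurable .of_discrete

variable [IsProbabilityMeasure μ]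

instance : IsProbabilityMeasure (μ.map c) :=
  Measure.isProbabilityMeasure_map c.measurable.aemeasurable

theorem volume_real_quantile_map_preimage (μ : Measure X) [IsProbabilityMeasure μ]
    (c : SimpleFunc X ℕ) (s : Set ℕ) :
    volume.real (quantile (μ.map c) ⁻¹' s) = μ.real (c ⁻¹' s) := by
  rw [(measurePreserving_quantile _).measureReal_preimage
    MeasurableSet.of_discrete.nullMeasurableSet, measureReal_map_code]

theorem exists_eq_quantile_map (μ : Measure X) [IsProbabilityMeasure μ] (c : SimpleFunc X ℕ)
    (x : Ω) : ∃ p, c p = quantile (μ.map c) x := by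
  by_contra! h
  refine ((measureReal_Iio_quantile_le (μ.map c) x).trans_lt
    (lt_measureReal_Iic_quantile (μ.map c) x)).ne ?_
  rw [measureReal_map_code, measureReal_map_code]
  exact congrArg μ.real (Set.ext fun p => (lt_iff_le_and_ne.trans (and_iff_left (h p))))

theorem OrderRefines.eq_quantile_map (h : OrderRefines e c) (hp : e p = quantile (μ.map e) x) :
    c p = quantile (μ.map c) x := by
  refine le_antisymm (le_of_not_gt fun hlt => ?_) ?_
  · refine (lt_measureReal_Iic_quantile (μ.map c) x).not_ge
      (le_trans ?_ (measureReal_Iio_quantile_le (μ.map e) x))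
    rw [measureReal_map_code, measureReal_map_code, ← hp]
    exact measureReal_mono fun p' hp' => lt_of_not_ge fun hle => (hlt.trans_le (h hle)).not_ge hp'
  · rw [quantile_le_iff]
    refine (lt_measureReal_Iic_quantile (μ.map e) x).trans_le ?_
    rw [measureReal_map_code, measureReal_map_code, ← hp]
    exact measureReal_mono fun p' hp' => h hp'

theorem exists_common_refinement (c d : SimpleFunc X ℕ) :
    ∃ e : SimpleFunc X ℕ, OrderRefines e c ∧ Function.FactorsThrough d e := by
  obtain ⟨K, hK⟩ := d.finite_range.bddAbove
  replace hK (p : X) : d p < K + 1 := Nat.lt_succ_of_le (hK ⟨p, rfl⟩)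
  have hdiv (p : X) : (d p + (K + 1) * c p) / (K + 1) = c p := by
    rw [Nat.add_mul_div_left _ _ K.succ_pos, Nat.div_eq_of_lt (hK p), zero_add]
  have hmod (p : X) : (d p + (K + 1) * c p) % (K + 1) = d p := by
    rw [Nat.add_mul_mod_self_left, Nat.mod_eq_of_lt (hK p)]
  refine ⟨d + c.map ((K + 1) * ·), fun p p' h => ?_, fun p p' h => ?_⟩
  · rw [← hdiv p, ← hdiv p']
    exact Nat.div_le_div_right h
  · rw [← hmod p, ← hmod p']
    exact congrArg (· % (K + 1)) h

end Codes

section Tower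

variable {X : Type*} [MetricSpace X] [CompactSpace X] [MeasurableSpace X] [BorelSpace X]

theorem exists_simpleFunc_dist_lt {ε : ℝ} (hε : 0 < ε) :
    ∃ c : SimpleFunc X ℕ, ∀ p p', c p = c p' → dist p p' < ε := by
  rcases isEmpty_or_nonempty X with hX | hX
  · exact ⟨SimpleFunc.const X 0, fun p => isEmptyElim p⟩
  have h_cover : (Set.univ : Set X) ⊆ ⋃ k, Metric.ball (TopologicalSpace.denseSeq X k) (ε / 2) :=
    fun p _ => Set.mem_iUnion.2
      ((TopologicalSpace.denseRange_denseSeq X).exists_dist_lt p (half_pos hε))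
  obtain ⟨t, ht⟩ := isCompact_univ.elim_finite_subcover _ (fun _ => Metric.isOpen_ball) h_cover
  obtain ⟨N, hN⟩ := t.bddAbove
  have h_near (p : X) :
      dist (SimpleFunc.nearestPt (TopologicalSpace.denseSeq X) N p) p < ε / 2 := by
    obtain ⟨k, hk, hp⟩ := Set.mem_iUnion₂.1 (ht (Set.mem_univ p))
    have hle := SimpleFunc.edist_nearestPt_le (TopologicalSpace.denseSeq X) p (hN hk)
    rw [edist_dist, edist_dist, ENNReal.ofReal_le_ofReal_iff dist_nonneg] at hle
    exact hle.trans_lt (Metric.mem_ball'.1 hp)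
  refine ⟨SimpleFunc.nearestPtInd (TopologicalSpace.denseSeq X) N, fun p p' h => ?_⟩
  have hpp' : SimpleFunc.nearestPt (TopologicalSpace.denseSeq X) N p =
      SimpleFunc.nearestPt (TopologicalSpace.denseSeq X) N p' :=
    congrArg (TopologicalSpace.denseSeq X) h
  calc dist p p' ≤ _ := dist_triangle_left p p' (SimpleFunc.nearestPt _ N p)
    _ < ε / 2 + ε / 2 := add_lt_add (h_near p) (hpp' ▸ h_near p')
    _ = ε := add_halves ε

theorem exists_orderRefines_dist_lt {β : X → X} (hβ : Measurable β) (c : SimpleFunc X ℕ) {ε : ℝ}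
    (hε : 0 < ε) : ∃ e : SimpleFunc X ℕ, OrderRefines e c ∧ (c ∘ β).FactorsThrough e ∧
      ∀ p p', e p = e p' → dist p p' < ε := by
  obtain ⟨d, hd⟩ := exists_simpleFunc_dist_lt (X := X) hε
  obtain ⟨c', hc', hc'β⟩ := exists_common_refinement c (c.comp β hβ)
  obtain ⟨e, hec', hed⟩ := exists_common_refinement c' d
  exact ⟨e, hec'.trans hc', fun p p' h => hc'β (hec'.factorsThrough h),
    fun p p' h => hd p p' (hed h)⟩

theorem exists_seq_orderRefines {β : ℕ → X → X} (hβ : ∀ n, Measurable (β n)) :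
    ∃ C : ℕ → SimpleFunc X ℕ, (∀ n, OrderRefines (C (n + 1)) (C n)) ∧
      (∀ n, (C n ∘ β n).FactorsThrough (C (n + 1))) ∧
      ∀ n p p', C n p = C n p' → dist p p' < 1 / (n + 1) := by
  obtain ⟨c₀, hc₀⟩ := exists_simpleFunc_dist_lt (X := X) one_pos
  choose next h_refines h_factors h_dist using fun (n : ℕ) (c : SimpleFunc X ℕ) =>
    exists_orderRefines_dist_lt (hβ n) c (Nat.one_div_pos_of_nat (α := ℝ) (n := n + 1))
  refine ⟨Nat.rec c₀ next, fun n => h_refines n _, fun n => h_factors n _, ?_⟩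
  rintro (_ | n)
  · simpa using hc₀
  · exact h_dist n _

/-- A sequence of finite measurable codings of a metric space, each refining the preceding ones
compatibly with the order of the codes, with fibres shrinking to points, and such that the code of
`α i p` at any level is determined by the code of `p` at some other level. -/
structure CodingTower {ι X : Type*} [MetricSpace X] [MeasurableSpace X] (α : ι → X → X) where
  code : ℕ → SimpleFunc X ℕ
  orderRefines : ∀ ⦃m n⦄, m ≤ n → OrderRefines (code n) (code m)
  exists_factorsThrough : ∀ i n, ∃ m, (code n ∘ α i).FactorsThrough (code m)
  dist_lt : ∀ n p p', code n p = code n p' → dist p p' < 1 / (n + 1)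

theorem nonempty_codingTower {ι : Type*} [Countable ι] {α : ι → X → X}
    (hα : ∀ i, Measurable (α i)) : Nonempty (CodingTower α) := by
  obtain ⟨enum, h_enum⟩ := exists_surjective_nat (Option ι)
  -- unpairing makes every `α i` occur as `β n` for arbitrarily large `n`
  let β (n : ℕ) : X → X := (enum n.unpair.1).elim id α
  have hβ (n : ℕ) : Measurable (β n) := by
    cases h : enum n.unpair.1 <;> simp [β, h, hα, measurable_id]
  obtain ⟨C, h_refines, h_factors, h_dist⟩ := exists_seq_orderRefines hβ
  refine ⟨⟨C, fun _ _ => orderRefines_of_le (C := fun n => C n) h_refines, fun i n => ?_, h_dist⟩⟩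
  obtain ⟨a, ha⟩ := h_enum (some i)
  have hβi : β (Nat.pair a n) = α i := by simp [β, ha]
  refine ⟨Nat.pair a n + 1, fun p p' h => ?_⟩
  exact (orderRefines_of_le (C := fun n => C n) h_refines (Nat.right_le_pair a n)).factorsThrough
    (hβi ▸ h_factors (Nat.pair a n) h)

end Tower

/-! ### Models on the unit interval -/

theorem map_eq_map_of_tendsto {Y Y' E : Type*} [MeasurableSpace Y] [MeasurableSpace Y']
    [TopologicalSpace E] [HasOuterApproxClosed E] [MeasurableSpace E] [BorelSpace E]
    {ν : Measure Y} {ν' : Measure Y'} [IsProbabilityMeasure ν] [IsProbabilityMeasure ν']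
    {F : ℕ → Y → E} {F' : ℕ → Y' → E} {f : Y → E} {f' : Y' → E} (hF : ∀ n, Measurable (F n))
    (hF' : ∀ n, Measurable (F' n)) (hf : Measurable f) (hf' : Measurable f')
    (h : ∀ y, Tendsto (F · y) atTop (nhds (f y))) (h' : ∀ y, Tendsto (F' · y) atTop (nhds (f' y)))
    (h_map : ∀ n, ν.map (F n) = ν'.map (F' n)) : ν.map f = ν'.map f' := by
  have h_lim := (tendstoInDistribution_of_ae_tendsto (fun n => (hF n).aemeasurable)
    hf.aemeasurable (ae_of_all ν h)).tendsto
  have h_lim' := (tendstoInDistribution_of_ae_tendsto (fun n => (hF' n).aemeasurable)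
    hf'.aemeasurable (ae_of_all ν' h')).tendsto
  simp only [h_map] at h_lim
  exact congrArg Subtype.val (tendsto_nhds_unique (X := ProbabilityMeasure E) h_lim h_lim')

namespace CodingTower

variable {ι X : Type*} [MetricSpace X] [MeasurableSpace X] {α : ι → X → X} {T : CodingTower α}
  {μ : Measure X} {m n : ℕ} {x y : Ω} {p p' : X}

/-- The code at level `n` of a point of `Ω`, chosen so that codes have the same distribution under
Lebesgue measure on `Ω` as under `μ` on `X`. -/
noncomputable def intervalCode (T : CodingTower α) (μ : Measure X) (n : ℕ) : Ω → ℕ :=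
  quantile (μ.map (T.code n))

variable [IsProbabilityMeasure μ]

theorem code_eq_intervalCode_of_le (h : m ≤ n) (hp : T.code n p = T.intervalCode μ n x) :
    T.code m p = T.intervalCode μ m x :=
  (T.orderRefines h).eq_quantile_map hp

theorem exists_code_eq_intervalCode (T : CodingTower α) (μ : Measure X) [IsProbabilityMeasure μ]
    (n : ℕ) (x : Ω) : ∃ p, T.code n p = T.intervalCode μ n x :=
  exists_eq_quantile_map μ (T.code n) x

theorem measurable_intervalCode : Measurable (T.intervalCode μ n) :=
  measurable_quantile _

theorem map_intervalCode : volume.map (T.intervalCode μ n) = μ.map (T.code n) :=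
  (measurePreserving_quantile _).map_eq

theorem exists_isStep_intervalCode (T : CodingTower α) (μ : Measure X) [IsProbabilityMeasure μ]
    {P : ℕ →o IntervalPartition} {n : ℕ}
    (hP : ∀ k, ∃ m, (μ.map (T.code n)).real (Set.Iic k) ∈ (P m).endpoints) :
    ∃ m, (P m).IsStep (T.intervalCode μ n) := by
  choose m hm using hP
  obtain ⟨K, hK⟩ := (T.code n).finite_range.bddAbove
  refine ⟨(Finset.range K).sup m, isStep_quantile fun k => ?_⟩
  rcases lt_or_ge k K with hk | hk
  · exact (P.monotone (Finset.le_sup (Finset.mem_range.2 hk))).1 (hm k)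
  · have : T.code n ⁻¹' Set.Iic k = Set.univ :=
      Set.eq_univ_of_forall fun p => (hK ⟨p, rfl⟩).trans hk
    rw [measureReal_map_code, this, probReal_univ]
    exact (P _).one_mem

/-- The code of `σ x` at level `n` is the one obtained by applying `α i` to any point of `X` with
the same code as `x` at a sufficiently high level. -/
def LiftsAt (T : CodingTower α) (μ : Measure X) (i : ι) (n : ℕ) (σ : Ω → Ω) : Prop :=
  ∃ m, ∀ x p, T.code m p = T.intervalCode μ m x → T.code n (α i p) = T.intervalCode μ n (σ x)

theorem LiftsAt.intervalCode_eq {i : ι} {σ σ' : Ω → Ω} (hσ : T.LiftsAt μ i n σ)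
    (hσ' : T.LiftsAt μ i m σ') (hmn : m ≤ n) (x : Ω) :
    T.intervalCode μ m (σ x) = T.intervalCode μ m (σ' x) := by
  obtain ⟨k, hk⟩ := hσ
  obtain ⟨l, hl⟩ := hσ'
  obtain ⟨p, hp⟩ := T.exists_code_eq_intervalCode μ (max k l) x
  rw [← hl x p (code_eq_intervalCode_of_le (le_max_right k l) hp)]
  exact (code_eq_intervalCode_of_le hmn
    (hk x p (code_eq_intervalCode_of_le (le_max_left k l) hp))).symm

theorem exists_translation_liftsAt {T : CodingTower α} {μ : Measure X} [IsProbabilityMeasure μ]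
    {P : ℕ →o IntervalPartition} (hP : ∀ n, (P n).IsIndependent)
    (h_step : ∀ n, ∃ m, (P m).IsStep (T.intervalCode μ n)) {i : ι}
    (hα : MeasurePreserving (α i) μ μ) (n : ℕ) :
    ∃ σ : Equiv.Perm Ω, (∃ m, σ ∈ (P m).translations) ∧ T.LiftsAt μ i n σ := by
  obtain ⟨m, hm⟩ := T.exists_factorsThrough i n
  obtain ⟨r, hr⟩ := (Function.factorsThrough_iff _).1 hm
  obtain ⟨k, hk⟩ := h_step n
  obtain ⟨l, hl⟩ := h_step m
  have h_volume (j : ℕ) : volume.real (T.intervalCode μ n ⁻¹' {j}) =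
      volume.real ((r ∘ T.intervalCode μ m) ⁻¹' {j}) :=
    calc volume.real (T.intervalCode μ n ⁻¹' {j})
        = μ.real (T.code n ⁻¹' {j}) := volume_real_quantile_map_preimage μ _ _
      _ = μ.real ((T.code n ∘ α i) ⁻¹' {j}) :=
        (hα.measureReal_preimage ((T.code n).measurableSet_fiber j).nullMeasurableSet).symm
      _ = μ.real (T.code m ⁻¹' (r ⁻¹' {j})) := by rw [hr, Set.preimage_comp]
      _ = _ := (volume_real_quantile_map_preimage μ _ _).symm
  obtain ⟨σ, hσ, h⟩ := (hP (max k l)).exists_translation_comp_eq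
    (hk.mono (P.monotone (le_max_left k l)))
    (fun x => congrArg r (hl.mono (P.monotone (le_max_right k l)) x)) h_volume
  refine ⟨σ, ⟨_, hσ⟩, m, fun x p hp => ?_⟩
  rw [h, Function.comp_apply, ← hp]
  exact congrFun hr p

theorem exists_forall_dist_le_of_code_eq [CompleteSpace X] (T : CodingTower α) (μ : Measure X)
    [IsProbabilityMeasure μ] (x : Ω) :
    ∃ q, ∀ n p, T.code n p = T.intervalCode μ n x → dist p q ≤ 1 / (n + 1) := by
  choose p hp using fun n => T.exists_code_eq_intervalCode μ n x
  have h_dist {n m : ℕ} (h : n ≤ m) {p' : X} (hp' : T.code n p' = T.intervalCode μ n x) :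
      dist p' (p m) ≤ 1 / (n + 1) :=
    (T.dist_lt n _ _ (hp'.trans (code_eq_intervalCode_of_le h (hp m)).symm)).le
  have h_cauchy : CauchySeq p := by
    refine cauchySeq_of_le_tendsto_0 (fun n : ℕ => 2 * (1 / ((n : ℝ) + 1))) (fun n m k hn hm => ?_)
      (by simpa using tendsto_one_div_add_atTop_nhds_zero_nat.const_mul (2 : ℝ))
    calc dist (p n) (p m) ≤ dist (p k) (p n) + dist (p k) (p m) := dist_triangle_left _ _ _
      _ ≤ 1 / (k + 1) + 1 / (k + 1) := add_le_add (h_dist hn (hp k)) (h_dist hm (hp k))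
      _ = 2 * (1 / (k + 1)) := (two_mul _).symm
  obtain ⟨q, hq⟩ := cauchySeq_tendsto_of_complete h_cauchy
  exact ⟨q, fun n p' hp' => le_of_tendsto (tendsto_const_nhds.dist hq)
    ((eventually_ge_atTop n).mono fun m hm => h_dist hm hp')⟩

variable [CompleteSpace X]

/-- The point of `X` whose codes in the tower `T` are approximated by the codes of `x ∈ Ω`. -/
noncomputable def point (T : CodingTower α) (μ : Measure X) [IsProbabilityMeasure μ] (x : Ω) : X :=
  (T.exists_forall_dist_le_of_code_eq μ x).choose

theorem dist_point_le (hp : T.code n p = T.intervalCode μ n x) :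
    dist p (T.point μ x) ≤ 1 / (n + 1) :=
  (T.exists_forall_dist_le_of_code_eq μ x).choose_spec n p hp

theorem dist_point_point_le (h : T.intervalCode μ n x = T.intervalCode μ n y) :
    dist (T.point μ x) (T.point μ y) ≤ 2 / (n + 1) := by
  obtain ⟨p, hp⟩ := T.exists_code_eq_intervalCode μ n x
  calc dist (T.point μ x) (T.point μ y)
      ≤ dist p (T.point μ x) + dist p (T.point μ y) := dist_triangle_left _ _ _
    _ ≤ 1 / (n + 1) + 1 / (n + 1) := add_le_add (dist_point_le hp) (dist_point_le (hp.trans h))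
    _ = 2 / (n + 1) := by ring

theorem tendsto_of_code_eq {p : ℕ → X} (hp : ∀ n, T.code n (p n) = T.intervalCode μ n x) :
    Tendsto p atTop (nhds (T.point μ x)) :=
  tendsto_iff_dist_tendsto_zero.2 <| squeeze_zero (fun _ => dist_nonneg)
    (fun n => dist_point_le (hp n)) tendsto_one_div_add_atTop_nhds_zero_nat

theorem measurePreserving_point [BorelSpace X] (T : CodingTower α) (μ : Measure X)
    [IsProbabilityMeasure μ] :
    MeasurePreserving (T.point μ) volume μ := by
  have := nonempty_of_isProbabilityMeasure μ
  let sample (n : ℕ) : ℕ → X := Function.invFun (T.code n)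
  have h_sample (x : Ω) :
      Tendsto (fun n => sample n (T.intervalCode μ n x)) atTop (nhds (T.point μ x)) :=
    tendsto_of_code_eq fun n => Function.invFun_eq (T.exists_code_eq_intervalCode μ n x)
  have h_sample_code (p : X) : Tendsto (fun n => sample n (T.code n p)) atTop (nhds p) :=
    tendsto_iff_dist_tendsto_zero.2 <| squeeze_zero (fun _ => dist_nonneg)
      (fun n => (T.dist_lt n _ _ (Function.invFun_eq ⟨p, rfl⟩)).le)
      tendsto_one_div_add_atTop_nhds_zero_nat
  have h_measurable (n : ℕ) : Measurable (sample n ∘ T.intervalCode μ n) :=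
    measurable_from_nat.comp measurable_intervalCode
  have h_measurable_code (n : ℕ) : Measurable (sample n ∘ T.code n) :=
    measurable_from_nat.comp (T.code n).measurable
  have h_map (n : ℕ) :
      volume.map (sample n ∘ T.intervalCode μ n) = μ.map (sample n ∘ T.code n) := by
    rw [← Measure.map_map measurable_from_nat measurable_intervalCode, map_intervalCode,
      Measure.map_map measurable_from_nat (T.code n).measurable]
  have h_point : Measurable (T.point μ) :=
    measurable_of_tendsto_metrizable h_measurable (tendsto_pi_nhds.2 h_sample)
  exact ⟨h_point, (map_eq_map_of_tendsto h_measurable h_measurable_code h_point measurable_id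
    h_sample h_sample_code h_map).trans Measure.map_id⟩

theorem LiftsAt.dist_point_le {i : ι} {σ : Ω → Ω} (hσ : T.LiftsAt μ i n σ)
    (hα : Continuous (α i)) (x : Ω) :
    dist (T.point μ (σ x)) (α i (T.point μ x)) ≤ 1 / (n + 1) := by
  obtain ⟨m, hm⟩ := hσ
  choose p hp using fun k => T.exists_code_eq_intervalCode μ k x
  refine le_of_tendsto (tendsto_const_nhds.dist ((hα.tendsto _).comp (tendsto_of_code_eq hp)))
    ((eventually_ge_atTop m).mono fun k hk => ?_)
  rw [dist_comm]
  exact CodingTower.dist_point_le (hm x _ (code_eq_intervalCode_of_le hk (hp k)))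

end CodingTower

/-- A model, on the unit interval, of an action `α` on a metric space `X` with measure `μ`: the
map `point : Ω → X` carries Lebesgue measure to `μ`, and it approximately intertwines each `α i`
with translations `perm i n` of interval partitions. The approximation is governed by step
functions `code n` whose fibres are mapped by `point` to small sets. -/
structure IntervalModel {ι X : Type*} [MetricSpace X] [MeasurableSpace X] (μ : Measure X)
    (α : ι → X → X) where
  partition : ℕ →o IntervalPartition
  isIndependent : ∀ n, (partition n).IsIndependent
  exists_ratCast_mem : ∀ q : ℚ, (q : ℝ) ∈ Set.Ico 0 1 → ∃ n, (q : ℝ) ∈ (partition n).endpoints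
  point : Ω → X
  measurePreserving_point : MeasurePreserving point volume μ
  code : ℕ → Ω → ℕ
  exists_isStep_code : ∀ n, ∃ m, (partition m).IsStep (code n)
  dist_point_point_le : ∀ n x y, code n x = code n y → dist (point x) (point y) ≤ 2 / (n + 1)
  perm : ι → ℕ → Equiv.Perm Ω
  exists_perm_mem_translations : ∀ i n, ∃ m, perm i n ∈ (partition m).translations
  code_perm_succ : ∀ i n x, code n (perm i (n + 1) x) = code n (perm i n x)
  dist_point_perm_le : ∀ i n x, dist (point (perm i n x)) (α i (point x)) ≤ 1 / (n + 1)

theorem exists_monotone_isIndependent_mem {E : Set ℝ} (hE : E.Countable) :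
    ∃ P : ℕ →o IntervalPartition, (∀ n, (P n).IsIndependent) ∧
      ∀ e ∈ E, e ∈ Set.Icc 0 1 → ∃ n, e ∈ (P n).endpoints := by
  obtain ⟨P, h_mono, h_indep, h_mem⟩ :=
    IntervalPartition.exists_monotone_isIndependent (hE.preimage Subtype.val_injective)
  refine ⟨⟨P, h_mono⟩, h_indep, fun e he he' => ?_⟩
  rcases he'.2.lt_or_eq with h_lt | rfl
  · exact h_mem ⟨e, he'.1, h_lt⟩ he
  · exact ⟨0, (P 0).one_mem⟩

theorem nonempty_intervalModel {ι X : Type*} [Countable ι] [MetricSpace X] [CompactSpace X]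
    [MeasurableSpace X] [BorelSpace X] (μ : Measure X) [IsProbabilityMeasure μ] {α : ι → X → X}
    (hα : ∀ i, MeasurePreserving (α i) μ μ) (hα_cont : ∀ i, Continuous (α i)) :
    Nonempty (IntervalModel μ α) := by
  obtain ⟨T⟩ := nonempty_codingTower fun i => (hα i).measurable
  obtain ⟨P, h_indep, h_mem⟩ := exists_monotone_isIndependent_mem
    ((Set.countable_range ((↑) : ℚ → ℝ)).union
      (Set.countable_range fun nk : ℕ × ℕ => (μ.map (T.code nk.1)).real (Set.Iic nk.2)))
  have h_step (n : ℕ) : ∃ m, (P m).IsStep (T.intervalCode μ n) :=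
    T.exists_isStep_intervalCode μ fun k =>
      h_mem _ (.inr ⟨(n, k), rfl⟩) ⟨measureReal_nonneg, measureReal_le_one⟩
  choose σ h_trans h_lifts using fun i =>
    CodingTower.exists_translation_liftsAt h_indep h_step (hα i)
  exact ⟨{
    partition := P
    isIndependent := h_indep
    exists_ratCast_mem := fun q hq => h_mem q (.inl ⟨q, rfl⟩) (Set.Ico_subset_Icc_self hq)
    point := T.point μ
    measurePreserving_point := T.measurePreserving_point μ
    code := T.intervalCode μ
    exists_isStep_code := h_step
    dist_point_point_le := fun _ _ _ => CodingTower.dist_point_point_le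
    perm := σ
    exists_perm_mem_translations := h_trans
    code_perm_succ := fun i n => (h_lifts i (n + 1)).intervalCode_eq (h_lifts i n) n.le_succ
    dist_point_perm_le := fun i n => (h_lifts i n).dist_point_le (hα_cont i) }⟩

/-! ### Paths of unitaries -/

section Paths

theorem continuousOn_floor_apply {E : Type*} [TopologicalSpace E] {g : ℕ → ℝ → E}
    (hg : ∀ n, Continuous (g n)) (hglue : ∀ n : ℕ, g n (n + 1) = g (n + 1) (n + 1)) :
    ContinuousOn (fun t : ℝ => g ⌊t⌋₊ t) (Set.Ici 0) := by
  have hfinite : LocallyFinite fun n : ℕ => Set.Icc (n : ℝ) (n + 1) := by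
    have : LocallyFinite fun n : ℤ => Set.Icc (n : ℝ) (n + 1) :=
      locallyFinite_Icc_of_tendsto tendsto_intCast_atTop_atTop
        (tendsto_atBot_add_const_right _ _ (tendsto_intCast_atBot_iff.2 tendsto_id))
    exact this.comp_injective Nat.cast_injective
  have hcover : Set.Ici (0 : ℝ) ⊆ ⋃ n : ℕ, Set.Icc (n : ℝ) (n + 1) := fun t ht =>
    Set.mem_iUnion.2 ⟨⌊t⌋₊, Nat.floor_le ht, (Nat.lt_floor_add_one t).le⟩
  refine (hfinite.continuousOn_iUnion (fun _ => isClosed_Icc) fun n => ?_).mono hcover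
  refine (hg n).continuousOn.congr fun t ht => ?_
  rcases ht.2.lt_or_eq with hlt | rfl
  · rw [(Nat.floor_eq_iff (n.cast_nonneg.trans ht.1)).2 ⟨ht.1, hlt⟩]
  · rw [hglue, ← Nat.cast_add_one, Nat.floor_natCast]

variable {A : Type*} [CStarAlgebra A]

theorem finite_spectrum_of_isOfFinOrder {w : A} (hw : IsOfFinOrder w) : (spectrum ℂ w).Finite := by
  classical
  nontriviality A
  obtain ⟨k, hk, hwk⟩ := isOfFinOrder_iff_pow_eq_one.1 hw
  refine (Polynomial.nthRoots k (1 : ℂ)).toFinset.finite_toSet.subset fun z hz => ?_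
  have : z ^ k ∈ spectrum ℂ (w ^ k) := spectrum.pow_image_subset w k ⟨z, hz, rfl⟩
  rw [hwk, spectrum.one_eq] at this
  simpa [Polynomial.mem_nthRoots hk] using this

theorem expUnitary_argSelfAdjoint_of_finite {w : unitary A} (hw : (spectrum ℂ (w : A)).Finite) :
    selfAdjoint.expUnitary (Unitary.argSelfAdjoint w) = w := by
  ext
  have hcont : ContinuousOn Complex.arg (spectrum ℂ (w : A)) := hw.continuousOn _
  rw [selfAdjoint.expUnitary_coe, Unitary.argSelfAdjoint_coe,
    ← CFC.exp_eq_normedSpace_exp (𝕜 := ℂ), ← cfc_comp_smul .., ← cfc_comp' ..]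
  conv_rhs => rw [← cfc_id' ℂ (w : A)]
  refine cfc_congr fun z hz => ?_
  have hz_norm : ‖z‖ = 1 := spectrum.norm_eq_one_of_unitary w.2 hz
  simpa [← Complex.exp_eq_exp_ℂ, hz_norm, mul_comm] using Complex.norm_mul_exp_arg_mul_I z

theorem commute_argSelfAdjoint {w : unitary A} {a : A} (h : Commute a w) :
    Commute a (Unitary.argSelfAdjoint w : A) :=
  (h.symm.cfc ((isStarNormal_of_mem_unitary w.2).commute_star_left h.symm) _).symm

/- Any choice of logarithm works on a finite spectrum, so functional calculus contracts `w`. -/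
theorem exists_path_of_isOfFinOrder {w : unitary A} (hw : IsOfFinOrder w) :
    ∃ γ : ℝ → unitary A, Continuous γ ∧ γ 0 = 1 ∧ γ 1 = w ∧
      ∀ (s : ℝ) (a : A), Commute a w → Commute a (γ s) := by
  have hfinite : (spectrum ℂ (w : A)).Finite :=
    finite_spectrum_of_isOfFinOrder ((unitary A).subtype.isOfFinOrder hw)
  refine ⟨fun s => selfAdjoint.expUnitary (s • Unitary.argSelfAdjoint w),
    selfAdjoint.continuous_expUnitary.comp (by fun_prop), by simp, ?_, fun s a ha => ?_⟩
  · simpa using expUnitary_argSelfAdjoint_of_finite hfinite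
  · rw [selfAdjoint.expUnitary_coe]
    exact (((commute_argSelfAdjoint ha).smul_right s).smul_right Complex.I).exp_right

theorem exists_continuousOn_eq_mul_of_isOfFinOrder {U : ℕ → unitary A}
    (hU : ∀ n, IsOfFinOrder (U (n + 1) * (U n)⁻¹)) :
    ∃ u : ℝ → unitary A, ContinuousOn u (Set.Ici 0) ∧ ∀ t, ∃ v : unitary A, u t = v * U ⌊t⌋₊ ∧
      ∀ a : A, Commute a (U (⌊t⌋₊ + 1) * (U ⌊t⌋₊)⁻¹ : unitary A) → Commute a v := by
  choose γ hγ hγ_zero hγ_one hγ_comm using fun n => exists_path_of_isOfFinOrder (hU n)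
  refine ⟨fun t => γ ⌊t⌋₊ (t - ⌊t⌋₊) * U ⌊t⌋₊,
    continuousOn_floor_apply (g := fun n t => γ n (t - n) * U n)
      (fun n => ((hγ n).comp (by fun_prop)).mul continuous_const) fun n => ?_,
    fun t => ⟨_, rfl, hγ_comm _ _⟩⟩
  simp [hγ_zero, hγ_one]

theorem norm_star_mul_mul_sub_star_mul_mul {a b : A} {v : unitary A} (h : Commute b v)
    (u : unitary A) :
    ‖star ((v * u : unitary A) : A) * a * (v * u : unitary A) - star (u : A) * b * u‖ =
      ‖a - b‖ := by
  have hb : star (v : A) * b * v = b := by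
    rw [mul_assoc, h.eq, ← mul_assoc, Unitary.coe_star_mul_self, one_mul]
  calc _ = ‖star ((v * u : unitary A) : A) * (a - b) * (v * u : unitary A)‖ := by
        conv_lhs => rw [← hb]
        simp only [Submonoid.coe_mul, star_mul]
        noncomm_ring
    _ = ‖a - b‖ := by
        rw [CStarRing.norm_mul_coe_unitary, ← Unitary.coe_star, CStarRing.norm_coe_unitary_mul]

end Paths

/-! ### The diagonal subalgebra -/

section Limits

variable {P : ℕ →o IntervalPartition}

theorem mulOp_mem_closure (g : (diagonalLimit P).carrier) :
    mulOp (g : LInf Ω) ∈ closure (⋃ n, ((P n).algebra : Set (L2 Ω →L[ℂ] L2 Ω))) := by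
  have hcont : Continuous (mulOp : LInf Ω → L2 Ω →L[ℂ] L2 Ω) :=
    (AddMonoidHomClass.isometry_of_norm mulOp norm_mulOp).continuous
  refine map_mem_closure hcont (inductiveLimit.exists_subtype_eq_iff.1 ⟨g, rfl⟩) fun f hf => ?_
  obtain ⟨n, hn⟩ := Set.mem_iUnion.1 hf
  exact Set.mem_iUnion.2 ⟨n, IntervalPartition.mulOp_mem_algebra hn⟩

variable (P) in
/-- The embedding of the limits of step functions as multiplication operators. -/
noncomputable def diagonalEmbedding : (diagonalLimit P).carrier →⋆ₐ[ℂ] (crossedLimit P).carrier :=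
  inductiveLimit.lift (mulOp.comp (inductiveLimit.subtype _)) mulOp_mem_closure

theorem isometry_diagonalEmbedding : Isometry (diagonalEmbedding P) :=
  AddMonoidHomClass.isometry_of_norm _ fun g => norm_mulOp (g : LInf Ω)

theorem mul_comm_of_mem_range_diagonalEmbedding {a b : (crossedLimit P).carrier}
    (ha : a ∈ (diagonalEmbedding P).range) (hb : b ∈ (diagonalEmbedding P).range) :
    a * b = b * a := by
  obtain ⟨f, rfl⟩ := ha
  obtain ⟨g, rfl⟩ := hb
  refine inductiveLimit.subtype_injective ?_
  change mulOp (f : LInf Ω) * mulOp (g : LInf Ω) = mulOp (g : LInf Ω) * mulOp (f : LInf Ω)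
  rw [← map_mul, mul_comm, map_mul]

theorem isOfFinOrder_of_coe_eq_permOp {n : ℕ} {σ : Equiv.Perm Ω} (hσ : σ ∈ (P n).translations)
    {w : unitary (crossedLimit P).carrier}
    (hw : ((w : (crossedLimit P).carrier) : L2 Ω →L[ℂ] L2 Ω) = permOp σ) : IsOfFinOrder w := by
  obtain ⟨k, hk, hσk⟩ := isOfFinOrder_iff_pow_eq_one.1
    (isOfFinOrder_of_finite (⟨σ, hσ⟩ : (P n).translations))
  refine isOfFinOrder_iff_pow_eq_one.2
    ⟨k, hk, Subtype.ext (inductiveLimit.subtype_injective ?_)⟩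
  rw [SubmonoidClass.coe_pow, map_pow, hw, ← map_pow,
    show σ ^ k = 1 from congrArg Subtype.val hσk, map_one, Submonoid.coe_one, map_one]

theorem exists_unitaryPath {σ : ℕ → Equiv.Perm Ω} (hσ : ∀ n, ∃ m, σ n ∈ (P m).translations) :
    ∃ u : ℝ → unitary (crossedLimit P).carrier, ContinuousOn u (Set.Ici 0) ∧
      ∀ (t : ℝ) (a b : (crossedLimit P).carrier) (g : LInf Ω),
        (b : L2 Ω →L[ℂ] L2 Ω) = mulOp g → (∀ x, g (σ (⌊t⌋₊ + 1) x) = g (σ ⌊t⌋₊ x)) →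
        ‖((star (u t : (crossedLimit P).carrier) * a * u t : (crossedLimit P).carrier) :
          L2 Ω →L[ℂ] L2 Ω) - mulOp (compPerm g (σ ⌊t⌋₊))‖ = ‖a - b‖ := by
  choose m hm using hσ
  choose U hU_mem hU using fun n => exists_unitary_coe_eq_permOp (hm n)
  let V (n : ℕ) : unitary (crossedLimit P).carrier := ⟨U n, hU_mem n⟩
  have hV (n : ℕ) : (((V (n + 1) * (V n)⁻¹ : unitary _) : (crossedLimit P).carrier) :
      L2 Ω →L[ℂ] L2 Ω) = permOp (σ (n + 1) * (σ n)⁻¹) := by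
    change inductiveLimit.subtype _ (U (n + 1) * star (U n)) = _
    rw [inductiveLimit.subtype_mul, inductiveLimit.subtype_star, hU, hU, star_permOp, map_mul]
  have hfinite (n : ℕ) : IsOfFinOrder (V (n + 1) * (V n)⁻¹) := by
    refine isOfFinOrder_of_coe_eq_permOp (n := max (m (n + 1)) (m n))
      (mul_mem ?_ (inv_mem ?_)) (hV n)
    · exact IntervalPartition.translations_mono (P.monotone (le_max_left _ _)) (hm (n + 1))
    · exact IntervalPartition.translations_mono (P.monotone (le_max_right _ _)) (hm n)
  obtain ⟨u, hu_cont, hu⟩ := exists_continuousOn_eq_mul_of_isOfFinOrder hfinite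
  refine ⟨u, hu_cont, fun t a b g hb hg => ?_⟩
  obtain ⟨v, hv, hv_comm⟩ := hu t
  have hcomm : Commute b (V (⌊t⌋₊ + 1) * (V ⌊t⌋₊)⁻¹ : unitary _) := by
    refine .of_map (f := inductiveLimit.subtype _) inductiveLimit.subtype_injective ?_
    rw [hb, hV]
    refine commute_mulOp_permOp fun x => ?_
    simpa using hg ((σ ⌊t⌋₊)⁻¹ x)
  have hconj : mulOp (compPerm g (σ ⌊t⌋₊)) =
      ((star (U ⌊t⌋₊) * b * U ⌊t⌋₊ : (crossedLimit P).carrier) : L2 Ω →L[ℂ] L2 Ω) := by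
    rw [inductiveLimit.subtype_mul, inductiveLimit.subtype_mul, inductiveLimit.subtype_star, hU,
      hb, star_permOp_mul_mulOp_mul_permOp]
  rw [hconj, ← map_sub, inductiveLimit.norm_subtype, hv]
  exact norm_star_mul_mul_sub_star_mul_mul (hv_comm b hcomm) (V ⌊t⌋₊)

end Limits

/-! ### Embedding `C(X)` -/

section Pullback

variable {ι X : Type*} [TopologicalSpace X] [CompactSpace X]

/-- Composition with an arbitrary map `p : ι → X`, as a ⋆-homomorphism `C(X) → ℓ^∞(ι)`. -/
noncomputable def pullback (p : ι → X) : C(X, ℂ) →⋆ₐ[ℂ] LInf ι where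
  toFun f := ⟨f ∘ p, memℓp_infty ⟨‖f‖, Set.forall_mem_range.2 fun x => f.norm_coe_le_norm (p x)⟩⟩
  map_one' := rfl
  map_mul' _ _ := rfl
  map_zero' := rfl
  map_add' _ _ := rfl
  commutes' c := lp.ext (funext fun x => by
    rw [Algebra.algebraMap_eq_smul_one, Algebra.algebraMap_eq_smul_one]
    rfl)
  map_star' _ := rfl

@[simp]
theorem pullback_injective {p : ι → X} (hp : DenseRange p) : Function.Injective (pullback p) :=
  fun f g h => DFunLike.coe_injective <| hp.equalizer f.continuous g.continuous <|
    funext fun x => congrArg (fun b : LInf ι => b x) h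

theorem tendsto_pullback {X : Type*} [UniformSpace X] [CompactSpace X] {p : ℕ → ι → X} {q : ι → X}
    {l : Filter ℕ} (h : TendstoUniformly p q l) (f : C(X, ℂ)) :
    Tendsto (fun n => pullback (p n) f) l (nhds (pullback q f)) := by
  have hf : UniformContinuous f := CompactSpace.uniformContinuous_of_continuous f.continuous
  rw [Metric.tendsto_nhds]
  intro ε hε
  refine (Metric.tendstoUniformly_iff.1 (hf.comp_tendstoUniformly h) _ (half_pos hε)).mono
    fun n hn => (dist_eq_norm (pullback (p n) f) _).trans_lt ?_
  refine (lp.norm_le_of_forall_le (half_pos hε).le fun x => ?_).trans_lt (half_lt_self hε)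
  exact (dist_eq_norm (f (p n x)) (f (q x))).symm.trans_le ((dist_comm _ _).trans_le (hn x).le)

end Pullback

theorem denseRange_of_measurePreserving {X Y : Type*} [TopologicalSpace X] [MeasurableSpace X]
    [OpensMeasurableSpace X] [MeasurableSpace Y] {ν : Measure Y} {μ : Measure X}
    [μ.IsOpenPosMeasure] {p : Y → X} (hp : MeasurePreserving p ν μ) : DenseRange p := by
  refine dense_iff_inter_open.2 fun U hU hU_ne => ?_
  have hpos : ν (p ⁻¹' U) ≠ 0 := by
    rw [hp.measure_preimage hU.measurableSet.nullMeasurableSet]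
    exact hU.measure_ne_zero μ hU_ne
  obtain ⟨y, hy⟩ := nonempty_of_measure_ne_zero hpos
  exact ⟨p y, hy, y, rfl⟩

theorem measurePreserving_of_measure_image_eq {X : Type*} [MeasurableSpace X] {μ : Measure X}
    (e : X ≃ᵐ X) (h : ∀ E, MeasurableSet E → μ (e '' E) = μ E) : MeasurePreserving e μ μ := by
  refine ⟨e.measurable, Measure.ext fun E hE => ?_⟩
  rw [e.map_apply, ← h _ (e.measurable hE), e.image_preimage]

namespace IntervalModel

variable {ι X : Type*} [MetricSpace X] [MeasurableSpace X] {μ : Measure X}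

section CodePoint

variable {α : ι → X → X} (M : IntervalModel μ α)

/-- The approximation of `M.point` that depends on `M.code n` only: each code is sent to the image
of one point of its fibre. -/
noncomputable def codePoint (n : ℕ) : Ω → X :=
  M.point ∘ Function.invFun (M.code n) ∘ M.code n

theorem dist_point_codePoint_le (n : ℕ) (x : Ω) :
    dist (M.point x) (M.codePoint n x) ≤ 2 / (n + 1) :=
  M.dist_point_point_le n _ _ (Function.invFun_eq ⟨x, rfl⟩).symm

theorem codePoint_perm_succ (i : ι) (n : ℕ) (x : Ω) :
    M.codePoint n (M.perm i (n + 1) x) = M.codePoint n (M.perm i n x) :=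
  congrArg (fun k => M.point (Function.invFun (M.code n) k)) (M.code_perm_succ i n x)

theorem tendstoUniformly_codePoint : TendstoUniformly M.codePoint M.point atTop := by
  have hlim : Tendsto (fun n : ℕ => 2 / ((n : ℝ) + 1)) atTop (nhds 0) := by
    simpa [div_eq_mul_inv] using (tendsto_one_div_add_atTop_nhds_zero_nat (𝕜 := ℝ)).const_mul 2
  refine Metric.tendstoUniformly_iff.2 fun ε hε => ?_
  filter_upwards [hlim.eventually_lt_const hε] with n hn x
  exact (M.dist_point_codePoint_le n x).trans_lt hn

theorem tendstoUniformly_codePoint_comp_perm (i : ι) :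
    TendstoUniformly (fun n => M.codePoint n ∘ M.perm i n) (α i ∘ M.point) atTop := by
  have hperm : TendstoUniformly (fun n => M.point ∘ M.perm i n) (α i ∘ M.point) atTop :=
    Metric.tendstoUniformly_iff.2 fun ε hε => by
      filter_upwards [tendsto_one_div_add_atTop_nhds_zero_nat.eventually_lt_const hε] with n hn x
      exact (dist_comm _ _).trans_lt ((M.dist_point_perm_le i n x).trans_lt hn)
  rw [Metric.tendstoUniformly_iff] at hperm ⊢
  intro ε hε
  filter_upwards [hperm _ (half_pos hε),
    Metric.tendstoUniformly_iff.1 M.tendstoUniformly_codePoint _ (half_pos hε)] with n h₁ h₂ x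
  exact (dist_triangle _ _ _).trans_lt ((add_lt_add (h₁ x) (h₂ _)).trans_eq (add_halves ε))

variable [CompactSpace X]

theorem exists_pullback_codePoint_mem_stepAlgebra (n : ℕ) (f : C(X, ℂ)) :
    ∃ m, pullback (M.codePoint n) f ∈ (M.partition m).stepAlgebra :=
  (M.exists_isStep_code n).imp fun _ hm x =>
    congrArg (fun k => f (M.point (Function.invFun (M.code n) k))) (hm x)

theorem pullback_point_mem_closure (f : C(X, ℂ)) :
    pullback M.point f ∈ closure (⋃ m, ((M.partition m).stepAlgebra : Set (LInf Ω))) :=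
  mem_closure_of_tendsto (tendsto_pullback M.tendstoUniformly_codePoint f) <|
    .of_forall fun n => Set.mem_iUnion.2 (M.exists_pullback_codePoint_mem_stepAlgebra n f)

/-- The embedding of `C(X)` as multiplication operators by functions of `M.point`. -/
noncomputable def embedding : C(X, ℂ) →⋆ₐ[ℂ] (crossedLimit M.partition).carrier :=
  (diagonalEmbedding M.partition).comp
    (inductiveLimit.lift (pullback M.point) M.pullback_point_mem_closure)

theorem coe_embedding (f : C(X, ℂ)) :
    (M.embedding f : L2 Ω →L[ℂ] L2 Ω) = mulOp (pullback M.point f) := rfl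

theorem embedding_mem_range (f : C(X, ℂ)) : M.embedding f ∈ (diagonalEmbedding M.partition).range :=
  ⟨_, rfl⟩

variable [BorelSpace X]

theorem embedding_injective [μ.IsOpenPosMeasure] : Function.Injective M.embedding := by
  refine isometry_diagonalEmbedding.injective.comp fun f g h => ?_
  exact pullback_injective (denseRange_of_measurePreserving M.measurePreserving_point)
    (congrArg (inductiveLimit.subtype _) h)

theorem trace_embedding (f : C(X, ℂ)) : trace M.partition (M.embedding f) = ∫ x, f x ∂μ := by
  have hmap := integral_map (f := f) M.measurePreserving_point.aemeasurable
    f.continuous.aestronglyMeasurable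
  rw [M.measurePreserving_point.map_eq] at hmap
  rw [hmap, trace_apply, coe_embedding, diag_mulOp]
  rfl

end CodePoint

theorem exists_unitaryPath_tendsto [CompactSpace X] {α : ι → C(X, X)}
    (M : IntervalModel μ fun i => α i) (i : ι) :
    ∃ u : ℝ → unitary (crossedLimit M.partition).carrier, ContinuousOn u (Set.Ici 0) ∧
      ∀ f : C(X, ℂ), Tendsto (fun t => ‖M.embedding (f.comp (α i)) -
        star (u t : (crossedLimit M.partition).carrier) * M.embedding f * u t‖) atTop (nhds 0) := by
  obtain ⟨u, hu_cont, hu⟩ := exists_unitaryPath (M.exists_perm_mem_translations i)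
  refine ⟨u, hu_cont, fun f => ?_⟩
  let approx (n : ℕ) : LInf Ω := pullback (M.codePoint n) f
  have h_approx : Tendsto (fun n => ‖approx n - pullback M.point f‖) atTop (nhds 0) :=
    tendsto_iff_norm_sub_tendsto_zero.1 (tendsto_pullback M.tendstoUniformly_codePoint f)
  have h_approx_perm : Tendsto (fun n => ‖compPerm (approx n) (M.perm i n) -
      pullback M.point (f.comp (α i))‖) atTop (nhds 0) :=
    tendsto_iff_norm_sub_tendsto_zero.1
      (tendsto_pullback (M.tendstoUniformly_codePoint_comp_perm i) f)
  have h_bound (t : ℝ) : ‖M.embedding (f.comp (α i)) -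
      star (u t : (crossedLimit M.partition).carrier) * M.embedding f * u t‖ ≤
        ‖compPerm (approx ⌊t⌋₊) (M.perm i ⌊t⌋₊) - pullback M.point (f.comp (α i))‖ +
          ‖approx ⌊t⌋₊ - pullback M.point f‖ := by
    obtain ⟨m, hm⟩ := M.exists_pullback_codePoint_mem_stepAlgebra ⌊t⌋₊ f
    obtain ⟨b, hb⟩ := exists_coe_eq_mulOp hm
    have h_conj := hu t (M.embedding f) b (approx ⌊t⌋₊) hb fun x =>
      congrArg f (M.codePoint_perm_succ i ⌊t⌋₊ x)
    rw [← inductiveLimit.norm_subtype (_ - b), map_sub, hb, coe_embedding, ← map_sub,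
      norm_mulOp, norm_sub_rev (pullback _ _)] at h_conj
    rw [← h_conj, ← inductiveLimit.norm_subtype, map_sub, coe_embedding,
      norm_sub_rev (compPerm _ _), ← norm_mulOp (_ - compPerm _ _), map_sub mulOp,
      norm_sub_rev (inductiveLimit.subtype _ _)]
    exact norm_sub_le_norm_sub_add_norm_sub _ _ _
  have h_sum := (h_approx_perm.add h_approx).comp (tendsto_nat_floor_atTop (α := ℝ))
  rw [add_zero] at h_sum
  exact squeeze_zero (fun t => norm_nonneg _) h_bound h_sum

end IntervalModel

end AFEmbedding

open AFEmbedding in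
theorem stmt_3_general {ι X : Type*} [Countable ι] [MetricSpace X] [CompactSpace X]
    [MeasurableSpace X] [BorelSpace X] (α : ι → C(X, X)) (μ : Measure X) [IsProbabilityMeasure μ]
    [μ.IsOpenPosMeasure] (hα : ∀ i, MeasurePreserving (α i) μ μ) :
    ∃ (C₀ : UnitalCStarAlg), C₀.IsAF ∧ C₀.IsSimple ∧
      ∃ τ : C₀.carrier →ₗ[ℂ] ℂ, C₀.IsTracialState τ ∧
        (∀ τ' : C₀.carrier →ₗ[ℂ] ℂ, C₀.IsTracialState τ' → τ' = τ) ∧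
        ∃ C₀₀ : StarSubalgebra ℂ C₀.carrier,
          (∀ a ∈ C₀₀, ∀ b ∈ C₀₀, a * b = b * a) ∧
          (∃ S : ℕ → StarSubalgebra ℂ C₀.carrier,
            Monotone S ∧ (∀ n, FiniteDimensional ℂ (S n)) ∧ (∀ n, S n ≤ C₀₀) ∧
            closure (⋃ n, (S n : Set C₀.carrier)) = (C₀₀ : Set C₀.carrier)) ∧
          ∃ h : C(X, ℂ) →⋆ₐ[ℂ] C₀.carrier,
            Function.Injective h ∧ (∀ f : C(X, ℂ), h f ∈ C₀₀) ∧
            (∀ f : C(X, ℂ), τ (h f) = ∫ x, f x ∂μ) ∧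
            ∃ u : ι → ℝ → C₀.carrier,
              ∀ i : ι,
                ContinuousOn (u i) (Set.Ici (1 : ℝ)) ∧
                (∀ t : ℝ, 1 ≤ t → u i t ∈ unitary C₀.carrier) ∧
                ∀ f : C(X, ℂ),
                  Tendsto (fun t : ℝ => ‖h (f.comp (α i)) - star (u i t) * h f * u i t‖)
                    atTop (nhds 0) := by
  obtain ⟨M⟩ := nonempty_intervalModel μ hα fun i => (α i).continuous
  have hDixmier := hasDixmierProperty_crossedLimit M.isIndependent M.exists_ratCast_mem
  choose u hu_cont hu using M.exists_unitaryPath_tendsto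
  refine ⟨crossedLimit M.partition, isAF_crossedLimit,
    hDixmier.isSimple isTracialState_trace fun a => eq_zero_of_trace_star_mul_self_eq_zero,
    (trace M.partition).toLinearMap, isTracialState_trace,
    fun τ' hτ' => hDixmier.trace_unique isTracialState_trace hτ',
    (diagonalEmbedding M.partition).range,
    fun a ha b hb => mul_comm_of_mem_range_diagonalEmbedding ha hb,
    exists_closure_iUnion_eq_range isAF_diagonalLimit isometry_diagonalEmbedding,
    M.embedding, M.embedding_injective, M.embedding_mem_range, M.trace_embedding,
    fun i t => u i t, fun i => ⟨?_, fun t _ => (u i t).2, hu i⟩⟩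
  exact continuous_subtype_val.comp_continuousOn
    ((hu_cont i).mono (Set.Ici_subset_Ici.2 zero_le_one))

/-- Lemma 3.2: given a strictly positive invariant measure for a commuting family of
homeomorphisms of an infinite compact metric space `X`, there is a unital simple
AF-algebra `C₀` with unique tracial state `τ`, a commutative AF C*-subalgebra `C₀₀`
containing the unit, a unital embedding `h : C(X) → C₀₀` carrying `τ` to `∫ · dμ`, and,
for each `j`, a norm-continuous path of unitaries `(u_{j,t})_{t ≥ 1}` asymptotically
implementing `α_j`. -/
theorem stmt_3 {X : Type*} [MetricSpace X] [CompactSpace X] [Infinite X]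
    [MeasurableSpace X] [BorelSpace X]
    (d : ℕ) (α : Fin d → X ≃ₜ X)
    (hcomm : ∀ i j : Fin d, ∀ x : X, α i (α j x) = α j (α i x))
    (μ : Measure X) [IsProbabilityMeasure μ]
    (hpos : ∀ U : Set X, IsOpen U → U.Nonempty → 0 < μ U)
    (hinv : ∀ (j : Fin d) (E : Set X), MeasurableSet E → μ ((α j) '' E) = μ E) :
    ∃ (C₀ : UnitalCStarAlg), C₀.IsAF ∧ C₀.IsSimple ∧
      ∃ τ : C₀.carrier →ₗ[ℂ] ℂ, C₀.IsTracialState τ ∧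
        (∀ τ' : C₀.carrier →ₗ[ℂ] ℂ, C₀.IsTracialState τ' → τ' = τ) ∧
        ∃ C₀₀ : StarSubalgebra ℂ C₀.carrier,
          (∀ a ∈ C₀₀, ∀ b ∈ C₀₀, a * b = b * a) ∧
          (∃ S : ℕ → StarSubalgebra ℂ C₀.carrier,
            Monotone S ∧ (∀ n, FiniteDimensional ℂ (S n)) ∧ (∀ n, S n ≤ C₀₀) ∧
            closure (⋃ n, (S n : Set C₀.carrier)) = (C₀₀ : Set C₀.carrier)) ∧
          ∃ h : C(X, ℂ) →⋆ₐ[ℂ] C₀.carrier,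
            Function.Injective h ∧ (∀ f : C(X, ℂ), h f ∈ C₀₀) ∧
            (∀ f : C(X, ℂ), τ (h f) = ∫ x, f x ∂μ) ∧
            ∃ u : Fin d → ℝ → C₀.carrier,
              ∀ j : Fin d,
                ContinuousOn (u j) (Set.Ici (1 : ℝ)) ∧
                (∀ t : ℝ, 1 ≤ t → u j t ∈ unitary C₀.carrier) ∧
                ∀ f : C(X, ℂ),
                  Tendsto
                    (fun t : ℝ =>
                      ‖h (f.comp (α j : C(X, X))) - star (u j t) * h f * u j t‖)
                    atTop (nhds 0) := by
  have : μ.IsOpenPosMeasure := ⟨fun U hU hne => (hpos U hU hne).ne'⟩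
  exact stmt_3_general (fun j => (α j : C(X, X))) μ fun j =>
    AFEmbedding.measurePreserving_of_measure_image_eq (α j).toMeasurableEquiv (hinv j)
end

section
/- Let X be a compact metric space, let α_1, …, α_d be pairwise commuting homeomorphisms of X, and let μ be a strictly positive Borel probability measure on X that is invariant under the action of α_1, …, α_d. Then there exist: a nonempty compact metrizable totally disconnected topological space Y; pairwise commuting homeomorphisms β_1, …, β_d of Y; a Borel probability measure ν on Y that is invariant under the action of β_1, …, β_d; and a continuous surjection s : Y → X such that s ∘ β_j = α_j ∘ s for every j = 1, …, d and the pushforward measure s_*ν equals μ. -/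
/-- A bundled compact metric space equipped with its Borel σ-algebra. -/
structure CompactMetricBundle where
  carrier : Type
  [metricSpace : MetricSpace carrier]
  [compactSpace : CompactSpace carrier]
  [measurableSpace : MeasurableSpace carrier]
  [borelSpace : BorelSpace carrier]

attribute [instance] CompactMetricBundle.metricSpace CompactMetricBundle.compactSpace
  CompactMetricBundle.measurableSpace CompactMetricBundle.borelSpace

open MeasureTheory

/-!
By Hausdorff–Alexandroff, `X` is a continuous image `π : C → X` of the Cantor space `C = ℕ → Bool`,
and choosing the least point of each fibre gives a Borel section `σ` of `π`. Let `G` be the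
countable group generated by the homeomorphisms. The families `y : G → C` with
`π (y g) = g • π (y 1)` form a closed, shift-invariant subset `Y` of the Cantor cube `G → C`, and
`y ↦ π (y 1)` is an equivariant continuous map `Y → X`. Applying `σ` along orbits gives an
equivariant Borel section `t : X → Y` of it, so `ν = t_* μ` lifts `μ` and inherits its invariance.
-/

open Function Set TopologicalSpace

section MeasurableSection

variable {K X : Type*} [TopologicalSpace X] [MeasurableSpace X]

theorem exists_measurable_rightInverse_of_injective_linearOrder {L : Type*}
    [TopologicalSpace K] [CompactSpace K] [MeasurableSpace K] [BorelSpace K]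
    [T2Space X] [OpensMeasurableSpace X]
    [LinearOrder L] [TopologicalSpace L] [OrderTopology L] [SecondCountableTopology L]
    [MeasurableSpace L] [BorelSpace L]
    {e : K → L} (he : Continuous e) (he_inj : Injective e)
    {π : K → X} (hπ : Continuous π) (hπ_surj : Surjective π) :
    ∃ σ : X → K, Measurable σ ∧ RightInverse σ π := by
  have exists_min : ∀ x, ∃ c, π c = x ∧ ∀ c', π c' = x → e c ≤ e c' := fun x =>
    (isClosed_singleton.preimage hπ).isCompact.exists_isMinOn (hπ_surj x) he.continuousOn
  choose σ hσ σ_min using exists_min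
  refine ⟨σ, ?_, hσ⟩
  rw [← (he.isClosedEmbedding he_inj).measurableEmbedding.measurable_comp_iff]
  refine measurable_of_Iic fun a => ?_
  have preimage_Iic : (e ∘ σ) ⁻¹' Iic a = π '' (e ⁻¹' Iic a) := by
    ext x
    constructor
    · exact fun hx => ⟨σ x, hx, hσ x⟩
    · rintro ⟨c, hc, rfl⟩
      exact (σ_min _ c rfl).trans hc
  rw [preimage_Iic]
  exact ((isClosed_Iic.preimage he).isCompact.image hπ).isClosed.measurableSet

theorem exists_continuous_measurable_rightInverse_nat_bool [Nonempty X] [CompactSpace X]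
    [MetrizableSpace X] [OpensMeasurableSpace X] :
    ∃ (π : (ℕ → Bool) → X) (σ : X → ℕ → Bool),
      Continuous π ∧ Measurable σ ∧ RightInverse σ π := by
  let := metrizableSpaceMetric X
  obtain ⟨π, hπ, hπ_surj⟩ := exists_nat_bool_continuous_surjective_of_compact X
  let e := cantorSetHomeomorphNatToBool.symm
  obtain ⟨σ, hσ, hσπ⟩ := exists_measurable_rightInverse_of_injective_linearOrder
    (continuous_subtype_val.comp e.continuous) (Subtype.val_injective.comp e.injective) hπ hπ_surj
  exact ⟨π, σ, hπ, hσ, hσπ⟩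

end MeasurableSection

section OrbitCodings

variable {G X C : Type*} [Group G] [TopologicalSpace X]

/-- Given an action `φ` of `G` on `X` and a coding `π : C → X` of the points of `X` by symbols,
the families of symbols that code an entire orbit: `y g` is a code of the translate by `g` of the
point coded by `y 1`. This is a subshift of `G → C`, and a `G`-extension of `X`. -/
def orbitCodings (φ : G →* (X ≃ₜ X)) (π : C → X) : Set (G → C) :=
  {y | ∀ g, π (y g) = φ g (π (y 1))}

variable {φ : G →* (X ≃ₜ X)} {π : C → X}

namespace orbitCodings

theorem comp_mul_right_mem {y : G → C} (hy : y ∈ orbitCodings φ π) (h : G) :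
    (fun g => y (g * h)) ∈ orbitCodings φ π := fun g => by
  simp only [hy (g * h), one_mul, hy h, map_mul, Homeomorph.mul_apply]

/-- The point of `X` whose orbit is coded. -/
def basePoint (y : orbitCodings φ π) : X := π (y.1 1)

/-- The code of the orbit of `x` obtained by applying a section `σ` of `π` at every point. -/
def itinerary (φ : G →* (X ≃ₜ X)) {σ : X → C} (hσ : RightInverse σ π) (x : X) :
    orbitCodings φ π :=
  ⟨fun g => σ (φ g x), fun g => by rw [hσ, hσ, map_one, Homeomorph.one_apply]⟩

theorem rightInverse_itinerary {σ : X → C} (hσ : RightInverse σ π) :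
    RightInverse (itinerary φ hσ) basePoint := fun x => by
  simp only [basePoint, itinerary, hσ _, map_one, Homeomorph.one_apply]

theorem measurable_itinerary [MeasurableSpace X] [BorelSpace X] [MeasurableSpace C]
    {σ : X → C} (hσ : RightInverse σ π) (hσ_meas : Measurable σ) :
    Measurable (itinerary φ hσ) :=
  (measurable_pi_lambda _ fun g => hσ_meas.comp (φ g).measurable).subtype_mk

variable [TopologicalSpace C]

theorem isClosed [T2Space X] (hπ : Continuous π) : IsClosed (orbitCodings φ π) := by
  simp only [orbitCodings, ofPred_forall]
  exact isClosed_iInter fun g => isClosed_eq (by fun_prop) (by fun_prop)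

theorem continuous_basePoint (hπ : Continuous π) :
    Continuous (basePoint : orbitCodings φ π → X) :=
  hπ.comp ((continuous_apply 1).comp continuous_subtype_val)

theorem continuous_comp_mul_right (h : G) :
    Continuous fun y : orbitCodings φ π =>
      (⟨fun g => y.1 (g * h), comp_mul_right_mem y.2 h⟩ : orbitCodings φ π) := by
  refine Continuous.subtype_mk (continuous_pi fun g => ?_) _
  exact (continuous_apply (g * h)).comp continuous_subtype_val

/-- The action of `G` on `orbitCodings φ π` by right translation of the index. -/
def shift (φ : G →* (X ≃ₜ X)) (π : C → X) : G →* (orbitCodings φ π ≃ₜ orbitCodings φ π) where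
  toFun h :=
    { toFun y := ⟨fun g => y.1 (g * h), comp_mul_right_mem y.2 h⟩
      invFun y := ⟨fun g => y.1 (g * h⁻¹), comp_mul_right_mem y.2 h⁻¹⟩
      left_inv y := by simp only [inv_mul_cancel_right]
      right_inv y := by simp only [mul_inv_cancel_right]
      continuous_toFun := continuous_comp_mul_right h
      continuous_invFun := continuous_comp_mul_right h⁻¹ }
  map_one' := by ext y g; simp
  map_mul' h k := by ext y g; simp [mul_assoc]

theorem coe_shift_apply (h : G) (y : orbitCodings φ π) (g : G) :
    (shift φ π h y).1 g = y.1 (g * h) := rfl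

theorem basePoint_shift (h : G) (y : orbitCodings φ π) :
    basePoint (shift φ π h y) = φ h (basePoint y) := by
  rw [basePoint, coe_shift_apply, one_mul]
  exact y.2 h

theorem semiconj_itinerary {σ : X → C} (hσ : RightInverse σ π) (h : G) :
    Semiconj (itinerary φ hσ) (φ h) (shift φ π h) := fun x =>
  Subtype.ext <| funext fun g => by
    simp only [itinerary, coe_shift_apply, map_mul, Homeomorph.mul_apply]

end orbitCodings

end OrbitCodings

theorem exists_totallyDisconnected_extension {G : Type} [Group G] [Countable G]
    {X : Type*} [TopologicalSpace X] [CompactSpace X] [MetrizableSpace X]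
    [MeasurableSpace X] [BorelSpace X] (φ : G →* (X ≃ₜ X))
    (μ : Measure X) [IsProbabilityMeasure μ] :
    ∃ (Y : CompactMetricBundle) (ψ : G →* (Y.carrier ≃ₜ Y.carrier))
      (ν : Measure Y.carrier) (s : C(Y.carrier, X)),
      Nonempty Y.carrier ∧
      TotallyDisconnectedSpace Y.carrier ∧
      IsProbabilityMeasure ν ∧
      (∀ g, MeasurePreserving (φ g) μ μ → MeasurePreserving (ψ g) ν ν) ∧
      Surjective s ∧
      (∀ g y, s (ψ g y) = φ g (s y)) ∧
      Measure.map s ν = μ := by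
  have X_nonempty : Nonempty X := nonempty_of_isProbabilityMeasure μ
  obtain ⟨π, σ, hπ, hσ_meas, hσ⟩ := exists_continuous_measurable_rightInverse_nat_bool (X := X)
  have : CompactSpace (orbitCodings φ π) :=
    isCompact_iff_compactSpace.mp (orbitCodings.isClosed hπ).isCompact
  let Y : CompactMetricBundle :=
    { carrier := orbitCodings φ π
      metricSpace := metrizableSpaceMetric (orbitCodings φ π) }
  let t : X → Y.carrier := orbitCodings.itinerary φ hσ
  have ht : Measurable t := orbitCodings.measurable_itinerary hσ hσ_meas
  let s : C(Y.carrier, X) := ⟨orbitCodings.basePoint, orbitCodings.continuous_basePoint hπ⟩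
  have hst : RightInverse t s := orbitCodings.rightInverse_itinerary hσ
  refine ⟨Y, orbitCodings.shift φ π, μ.map t, s, X_nonempty.map t,
    inferInstanceAs (TotallyDisconnectedSpace (orbitCodings φ π)),
    Measure.isProbabilityMeasure_map ht.aemeasurable, fun g hg => ?_, hst.surjective,
    orbitCodings.basePoint_shift, ?_⟩
  · exact (ht.measurePreserving μ).of_semiconj hg (orbitCodings.semiconj_itinerary hσ g)
      (orbitCodings.shift φ π g).measurable
  · rw [Measure.map_map s.continuous.measurable ht, hst.comp_eq_id, Measure.map_id]

universe v in
theorem exists_countable_group_injective_hom {ι H : Type*} [Countable ι] [Group H] (a : ι → H) :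
    ∃ (G : Type v) (_ : Group G) (_ : Countable G) (φ : G →* H) (γ : ι → G),
      Injective φ ∧ ∀ i, φ (γ i) = a i := by
  let A := (FreeGroup.lift a).range
  have : Countable A := (countable_range (FreeGroup.lift a)).to_subtype
  let e : Shrink.{v} A ≃* A := Shrink.mulEquiv
  refine ⟨Shrink.{v} A, inferInstance, e.injective.countable, A.subtype.comp e.toMonoidHom,
    fun i => e.symm ⟨a i, FreeGroup.of i, FreeGroup.lift_apply_of⟩,
    A.subtype_injective.comp e.injective, fun i => ?_⟩
  simp

theorem measurePreserving_iff_measure_image {X Y : Type*} [MeasurableSpace X] [MeasurableSpace Y]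
    (e : X ≃ᵐ Y) {μ : Measure X} {ν : Measure Y} :
    MeasurePreserving e μ ν ↔ ∀ E, MeasurableSet E → ν (e '' E) = μ E := by
  constructor
  · intro he E _
    rw [← he.measure_preimage_equiv, preimage_image_eq E e.injective]
  · refine fun h => ⟨e.measurable, Measure.ext fun E hE => ?_⟩
    rw [e.map_apply, ← h _ (e.measurable hE), image_preimage_eq E e.surjective]

theorem stmt_4_general {X ι : Type*} [TopologicalSpace X] [CompactSpace X] [MetrizableSpace X]
    [MeasurableSpace X] [BorelSpace X] [Countable ι] (α : ι → X ≃ₜ X)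
    (μ : Measure X) [IsProbabilityMeasure μ] :
    ∃ (Y : CompactMetricBundle) (β : ι → Y.carrier ≃ₜ Y.carrier)
      (ν : Measure Y.carrier) (s : C(Y.carrier, X)),
      Nonempty Y.carrier ∧
      TotallyDisconnectedSpace Y.carrier ∧
      (∀ i j, Commute (α i) (α j) → Commute (β i) (β j)) ∧
      IsProbabilityMeasure ν ∧
      (∀ j, MeasurePreserving (α j) μ μ → MeasurePreserving (β j) ν ν) ∧
      Surjective s ∧
      (∀ j y, s (β j y) = α j (s y)) ∧
      Measure.map s ν = μ := by
  obtain ⟨G, _, _, φ, γ, hφ, hγ⟩ := exists_countable_group_injective_hom α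
  obtain ⟨Y, ψ, ν, s, hY, hY_disc, hν, hψν, hs, hsψ, hsν⟩ :=
    exists_totallyDisconnected_extension φ μ
  simp only [← hγ]
  exact ⟨Y, fun i => ψ (γ i), ν, s, hY, hY_disc, fun i j hij => (hij.of_map hφ).map ψ, hν,
    fun j => hψν (γ j), hs, fun j => hsψ (γ j), hsν⟩

/-- Corollary 3.3 (topological form): a commuting family of homeomorphisms of a compact
metric space with a strictly positive invariant probability measure is a factor of a
commuting family of homeomorphisms of a nonempty compact metrizable totally disconnected
space, with an invariant measure pushing forward to the given one. -/
theorem stmt_4 {X : Type*} [MetricSpace X] [CompactSpace X]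
    [MeasurableSpace X] [BorelSpace X]
    (d : ℕ) (α : Fin d → X ≃ₜ X)
    (hcomm : ∀ i j : Fin d, ∀ x : X, α i (α j x) = α j (α i x))
    (μ : Measure X) [IsProbabilityMeasure μ]
    (hpos : ∀ U : Set X, IsOpen U → U.Nonempty → 0 < μ U)
    (hinv : ∀ (j : Fin d) (E : Set X), MeasurableSet E → μ ((α j) '' E) = μ E) :
    ∃ (Y : CompactMetricBundle) (β : Fin d → Y.carrier ≃ₜ Y.carrier)
      (ν : Measure Y.carrier) (s : C(Y.carrier, X)),
      Nonempty Y.carrier ∧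
      TotallyDisconnectedSpace Y.carrier ∧
      (∀ i j : Fin d, ∀ y : Y.carrier, β i (β j y) = β j (β i y)) ∧
      IsProbabilityMeasure ν ∧
      (∀ (j : Fin d) (E : Set Y.carrier), MeasurableSet E → ν ((β j) '' E) = ν E) ∧
      Function.Surjective s ∧
      (∀ (j : Fin d) (y : Y.carrier), s (β j y) = α j (s y)) ∧
      Measure.map s ν = μ := by
  obtain ⟨Y, β, ν, s, hY, hY_disc, hβ, hν, hβν, hs, hsβ, hsν⟩ := stmt_4_general α μ
  exact ⟨Y, β, ν, s, hY, hY_disc,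
    fun i j => DFunLike.congr_fun (hβ i j (Homeomorph.ext (hcomm i j))), hν,
    fun j => (measurePreserving_iff_measure_image (β j).toMeasurableEquiv).mp
      (hβν j ((measurePreserving_iff_measure_image (α j).toMeasurableEquiv).mpr (hinv j))),
    hs, hsβ, hsν⟩
end
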